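/- arXiv:quant-ph/0511149 — 3 statements merged into one kernel-verified Lean document; each statement's English description precedes it below -/
import Mathlib

section
/- Let G be a finite group, let (σ_j)_{j∈J} be a complete family of irreducibles for G, let M ⊆ G be a conjugacy class of involutions with representative m₀, let k ≥ 1, let (ρ_i)_{i∈T} be a complete family of irreducibles for G^k acting on spaces V_i of dimensions d_i, and for each i let B_i be an orthonormal basis of V_i. Let Λ ⊆ J, P(Λ) = Σ_{j∈Λ} d_j²/|G|, and let λ be a real number with 0 ≤ λ < 1 and |χ_j(m₀)| ≤ λ·d_j for every j ∈ J \ Λ; set Δ = λ + P(Λ)·Σ_{j∈J} d_j. For m ∈ M, i ∈ T, b ∈ B_i, set H_m(i,b) = ‖Π_m^{(i)} b‖² / rank(Π_m^{(i)}), with the convention x/0 = 0. Then Σ_{i∈T} (d_i²/|G|^k) · (1/|M|) Σ_{m∈M} Σ_{b∈B_i} | H_m(i,b) − 1/d_i | ≤ 2^k · ( (1−λ)^{-k} · √Δ + 3(λ + P(Λ)) ). -/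
noncomputable section

open scoped BigOperators InnerProductSpace

def IsUnitaryRep {G V : Type*} [Group G] [NormedAddCommGroup V] [InnerProductSpace ℂ V]
    (ρ : Representation ℂ G V) : Prop :=
  ∀ (g : G) (v w : V), ⟪ρ g v, ρ g w⟫_ℂ = ⟪v, w⟫_ℂ

def IsIrreducibleRep {G V : Type*} [Group G] [AddCommGroup V] [Module ℂ V]
    (ρ : Representation ℂ G V) : Prop :=
  (∃ v : V, v ≠ 0) ∧
    ∀ W : Submodule ℂ V, (∀ (g : G) (v : V), v ∈ W → ρ g v ∈ W) → W = ⊥ ∨ W = ⊤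

def RepIso {G V₁ V₂ : Type*} [Group G] [AddCommGroup V₁] [Module ℂ V₁]
    [AddCommGroup V₂] [Module ℂ V₂]
    (ρ₁ : Representation ℂ G V₁) (ρ₂ : Representation ℂ G V₂) : Prop :=
  ∃ e : V₁ ≃ₗ[ℂ] V₂, ∀ (g : G) (v : V₁), e (ρ₁ g v) = ρ₂ g (e v)

def repChar {G V : Type*} [Group G] [AddCommGroup V] [Module ℂ V]
    (ρ : Representation ℂ G V) (g : G) : ℂ := LinearMap.trace ℂ V (ρ g)

def IsCompleteFamily {G : Type*} [Group G] {J : Type*}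
    (W : J → Type*) [∀ j, NormedAddCommGroup (W j)] [∀ j, InnerProductSpace ℂ (W j)]
    [∀ j, FiniteDimensional ℂ (W j)]
    (σ : ∀ j, Representation ℂ G (W j)) : Prop :=
  (∀ j, IsUnitaryRep (σ j)) ∧ (∀ j, IsIrreducibleRep (σ j)) ∧
    (∀ j j', j ≠ j' → ¬ RepIso (σ j) (σ j')) ∧
    (∀ (U : Type) [AddCommGroup U] [Module ℂ U] [FiniteDimensional ℂ U]
      (τ : Representation ℂ G U), IsIrreducibleRep τ → ∃ j, RepIso τ (σ j))

def isoProj {G V : Type*} [Group G] [Fintype G] [AddCommGroup V] [Module ℂ V]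
    (d : ℕ) (χ : G → ℂ) (ρ : Representation ℂ G V) : V →ₗ[ℂ] V :=
  ((d : ℂ) / (Fintype.card G : ℂ)) • ∑ g : G, starRingEnd ℂ (χ g) • (ρ g : V →ₗ[ℂ] V)

def onI {G : Type*} [One G] {k : ℕ} (g : G) (I : Finset (Fin k)) : Fin k → G :=
  fun i => if i ∈ I then g else 1

def invProj {G V : Type*} [Group G] [AddCommGroup V] [Module ℂ V] {k : ℕ}
    (ρ : Representation ℂ (Fin k → G) V) (m : G) : V →ₗ[ℂ] V :=
  ((2 : ℂ) ^ k)⁻¹ • ∑ I : Finset (Fin k), (ρ (onI m I) : V →ₗ[ℂ] V)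

def isoProjI {G V : Type*} [Group G] [Fintype G] [AddCommGroup V] [Module ℂ V] {k : ℕ}
    (ρ : Representation ℂ (Fin k → G) V) (d : ℕ) (χ : G → ℂ) (I : Finset (Fin k)) :
    V →ₗ[ℂ] V :=
  ((d : ℂ) / (Fintype.card G : ℂ)) • ∑ g : G, starRingEnd ℂ (χ g) • (ρ (onI g I) : V →ₗ[ℂ] V)

namespace S15
open Module
set_option linter.unusedSectionVars false

section basic
variable {G : Type*} [Group G]
variable {U : Type*} [AddCommGroup U] [Module ℂ U] [FiniteDimensional ℂ U]
variable {U' : Type*} [AddCommGroup U'] [Module ℂ U'] [FiniteDimensional ℂ U']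

lemma irr_finrank_pos {τ : Representation ℂ G U} (h : IsIrreducibleRep τ) :
    0 < finrank ℂ U := by
  obtain ⟨v, hv⟩ := h.1
  have : Nontrivial U := ⟨v, 0, hv⟩
  exact finrank_pos

lemma irr_mathlib {τ : Representation ℂ G U} (h : IsIrreducibleRep τ) :
    τ.IsIrreducible := by
  obtain ⟨⟨v, hv⟩, h2⟩ := h
  refine { exists_pair_ne := ⟨⊥, ⊤, ?_⟩, eq_bot_or_eq_top := ?_ }
  · intro hbt
    have : v ∈ (⊤ : Subrepresentation τ).toSubmodule := Submodule.mem_top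
    rw [← hbt] at this
    exact hv ((Submodule.mem_bot ℂ).1 this)
  · intro S
    rcases h2 S.toSubmodule (fun g v hv => S.apply_mem_toSubmodule g hv) with h | h
    · left; exact Subrepresentation.toSubmodule_injective h
    · right; exact Subrepresentation.toSubmodule_injective h

lemma schur {τ : Representation ℂ G U} (h : IsIrreducibleRep τ) (T : U →ₗ[ℂ] U)
    (hT : ∀ g, T * τ g = τ g * T) :
    T = (LinearMap.trace ℂ U T / (finrank ℂ U : ℂ)) • (1 : U →ₗ[ℂ] U) := by
  have hpos := irr_finrank_pos h
  obtain ⟨v, hv⟩ := h.1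
  have : Nontrivial U := ⟨v, 0, hv⟩
  obtain ⟨c, hc⟩ := Module.End.exists_eigenvalue T
  have h1 := h.2 (Module.End.eigenspace T c) (by
    intro g v hv
    rw [Module.End.mem_eigenspace_iff] at hv ⊢
    have := LinearMap.congr_fun (hT g) v
    simp only [Module.End.mul_apply] at this
    rw [this, hv, map_smul])
  have h2 : Module.End.eigenspace T c = ⊤ := h1.resolve_left hc
  have h3 : T = c • (1 : U →ₗ[ℂ] U) := by
    ext w
    have : w ∈ Module.End.eigenspace T c := by rw [h2]; trivial
    rw [Module.End.mem_eigenspace_iff] at this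
    simpa using this
  have h4 : LinearMap.trace ℂ U T = c * finrank ℂ U := by
    rw [h3]; simp
  rw [h4, mul_div_cancel_right₀ _ (by exact_mod_cast hpos.ne')]
  exact h3

lemma class_scalar [Fintype G] {τ : Representation ℂ G U} (h : IsIrreducibleRep τ) (φ : G → ℂ)
    (hφ : ∀ g h, φ (h * g * h⁻¹) = φ g) :
    ∑ g, φ g • (τ g : U →ₗ[ℂ] U) =
      ((∑ g, φ g * repChar τ g) / (finrank ℂ U : ℂ)) • (1 : U →ₗ[ℂ] U) := by
  have := schur h (∑ g, φ g • (τ g : U →ₗ[ℂ] U)) (by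
    intro x
    rw [Finset.sum_mul, Finset.mul_sum]
    refine Fintype.sum_equiv (MulAut.conj x⁻¹).toEquiv _ _ ?_
    intro g
    have e : (MulAut.conj x⁻¹).toEquiv g = x⁻¹ * g * x⁻¹⁻¹ := rfl
    rw [e, hφ, smul_mul_assoc, mul_smul_comm, ← map_mul, ← map_mul]
    congr 2
    group)
  rw [this]
  congr 2
  simp [repChar]

lemma char_orth_same [Fintype G] {τ : Representation ℂ G U} {τ' : Representation ℂ G U'}
    (h : IsIrreducibleRep τ) (h' : IsIrreducibleRep τ') (hi : RepIso τ' τ) :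
    ∑ g, repChar τ g * repChar τ' g⁻¹ = (Fintype.card G : ℂ) := by
  have := irr_mathlib h
  have := irr_mathlib h'
  have hne : (Nat.card G : ℂ) ≠ 0 := by simp
  let := invertibleOfNonzero hne
  have key := Representation.char_orthonormal τ τ'
  obtain ⟨e, he⟩ := hi
  have hne' : Nonempty (τ'.Equiv τ) := ⟨Representation.Equiv.mk e (fun g => by
    ext v; exact he g v)⟩
  rw [if_pos hne', inv_mul_eq_iff_eq_mul₀ hne] at key
  simpa [Representation.character, repChar, Nat.card_eq_fintype_card] using key

lemma char_orth_diff [Fintype G] {τ : Representation ℂ G U} {τ' : Representation ℂ G U'}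
    (h : IsIrreducibleRep τ) (h' : IsIrreducibleRep τ') (hi : ¬ RepIso τ' τ) :
    ∑ g, repChar τ g * repChar τ' g⁻¹ = 0 := by
  have := irr_mathlib h
  have := irr_mathlib h'
  have hne : (Nat.card G : ℂ) ≠ 0 := by simp
  let := invertibleOfNonzero hne
  have key := Representation.char_orthonormal τ τ'
  have hne' : ¬ Nonempty (τ'.Equiv τ) := by
    rintro ⟨e⟩
    refine hi ⟨e.toLinearEquiv, fun g v => ?_⟩
    exact LinearMap.congr_fun (e.toIntertwiningMap.isIntertwining' g) v
  rw [if_neg hne', inv_mul_eq_iff_eq_mul₀ hne] at key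
  simpa [Representation.character, repChar] using key

lemma repIso_symm {τ : Representation ℂ G U} {τ' : Representation ℂ G U'} (h : RepIso τ τ') :
    RepIso τ' τ := by
  obtain ⟨e, he⟩ := h
  refine ⟨e.symm, fun g v => ?_⟩
  apply e.injective
  rw [he]; simp

lemma repIso_trans {U'' : Type*} [AddCommGroup U''] [Module ℂ U'']
    {τ : Representation ℂ G U} {τ' : Representation ℂ G U'} {τ'' : Representation ℂ G U''}
    (h : RepIso τ τ') (h' : RepIso τ' τ'') : RepIso τ τ'' := by
  obtain ⟨e, he⟩ := h
  obtain ⟨e', he'⟩ := h'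
  exact ⟨e.trans e', fun g v => by simp [he, he']⟩

lemma repIso_char {τ : Representation ℂ G U} {τ' : Representation ℂ G U'} (h : RepIso τ τ')
    (g : G) : repChar τ g = repChar τ' g := by
  obtain ⟨e, he⟩ := h
  have : τ' g = e.conj (τ g) := by
    ext v; simp [LinearEquiv.conj_apply, he]
  rw [repChar, repChar, this, LinearMap.trace_conj']

lemma repIso_finrank {τ : Representation ℂ G U} {τ' : Representation ℂ G U'} (h : RepIso τ τ') :
    Module.finrank ℂ U = Module.finrank ℂ U' := by
  obtain ⟨e, he⟩ := h
  exact e.finrank_eq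

lemma repChar_one (τ : Representation ℂ G U) : repChar τ 1 = finrank ℂ U := by
  simp [repChar]

lemma repChar_conj (τ : Representation ℂ G U) (g h : G) :
    repChar τ (h * g * h⁻¹) = repChar τ g := Representation.char_conj τ g h

lemma complete_any {J : Type*}
    {W : J → Type*} [∀ j, NormedAddCommGroup (W j)] [∀ j, InnerProductSpace ℂ (W j)]
    [∀ j, FiniteDimensional ℂ (W j)]
    {σ : ∀ j, Representation ℂ G (W j)} (hfam : IsCompleteFamily W σ)
    {τ : Representation ℂ G U} (h : IsIrreducibleRep τ) : ∃ j, RepIso τ (σ j) := by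
  let e : U ≃ₗ[ℂ] (Fin (Module.finrank ℂ U) → ℂ) := (Module.finBasis ℂ U).equivFun
  let τ' : Representation ℂ G (Fin (Module.finrank ℂ U) → ℂ) :=
    { toFun := fun g => e.conj (τ g)
      map_one' := by ext; simp [LinearEquiv.conj_apply]
      map_mul' := by intro a b; ext; simp [LinearEquiv.conj_apply] }
  have hτ' : ∀ g v, τ' g (e v) = e (τ g v) := by
    intro g v
    change e.conj (τ g) (e v) = _
    simp [LinearEquiv.conj_apply]
  have hi : RepIso τ τ' := ⟨e, fun g v => (hτ' g v).symm⟩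
  have hirr : IsIrreducibleRep τ' := by
    refine ⟨?_, ?_⟩
    · obtain ⟨v, hv⟩ := h.1
      exact ⟨e v, by simpa using hv⟩
    · intro S hS
      have := h.2 (S.comap e.toLinearMap) (by
        intro g v hv
        have := hS g _ hv
        change e (τ g v) ∈ S
        rw [← hτ']; exact this)
      rcases this with h0 | h0
      · left
        rw [eq_bot_iff]
        intro x hx
        have : e.symm x ∈ S.comap e.toLinearMap := by simpa using hx
        rw [h0] at this
        simpa using this
      · right
        rw [eq_top_iff]
        intro x _
        have : e.symm x ∈ S.comap e.toLinearMap := by rw [h0]; trivial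
        simpa using this
  obtain ⟨j, hj⟩ := hfam.2.2.2 _ τ' hirr
  exact ⟨j, repIso_trans hi hj⟩

end basic
end S15

namespace S15
open Module
set_option linter.unusedSectionVars false

section unitary
variable {G : Type*} [Group G]
variable {U : Type*} [NormedAddCommGroup U] [InnerProductSpace ℂ U] [FiniteDimensional ℂ U]

lemma unit_inv {τ : Representation ℂ G U} (h : IsUnitaryRep τ) (g : G) (v w : U) :
    ⟪v, τ g⁻¹ w⟫_ℂ = ⟪τ g v, w⟫_ℂ := by
  rw [← h g v, ← Module.End.mul_apply, ← map_mul]; simp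

lemma unit_norm {τ : Representation ℂ G U} (h : IsUnitaryRep τ) (g : G) (v : U) :
    ‖τ g v‖ = ‖v‖ := by
  have := h g v v
  rw [inner_self_eq_norm_sq_to_K, inner_self_eq_norm_sq_to_K] at this
  have h2 : ‖τ g v‖ ^ 2 = ‖v‖ ^ 2 := by exact_mod_cast this
  exact (sq_eq_sq₀ (norm_nonneg _) (norm_nonneg _)).1 h2

lemma repChar_eq_sum {ι : Type*} [Fintype ι] (b : OrthonormalBasis ι ℂ U)
    (τ : Representation ℂ G U) (g : G) : repChar τ g = ∑ x, ⟪b x, τ g (b x)⟫_ℂ :=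
  LinearMap.trace_eq_sum_inner _ b

lemma repChar_inv {τ : Representation ℂ G U} (h : IsUnitaryRep τ) (g : G) :
    repChar τ g⁻¹ = starRingEnd ℂ (repChar τ g) := by
  rw [repChar_eq_sum (stdOrthonormalBasis ℂ U), repChar_eq_sum (stdOrthonormalBasis ℂ U), map_sum]
  refine Finset.sum_congr rfl fun x _ => ?_
  rw [unit_inv h, inner_conj_symm]

lemma repChar_norm_le {τ : Representation ℂ G U} (h : IsUnitaryRep τ) (g : G) :
    ‖repChar τ g‖ ≤ finrank ℂ U := by
  rw [repChar_eq_sum (stdOrthonormalBasis ℂ U)]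
  refine (norm_sum_le _ _).trans ?_
  refine (Finset.sum_le_sum (g := fun _ => (1:ℝ)) fun x _ => ?_).trans (by simp)
  refine (norm_inner_le_norm _ _).trans ?_
  rw [unit_norm h]; simp

lemma sum_norm_sq_proj {ι : Type*} [Fintype ι] (b : OrthonormalBasis ι ℂ U) (T : U →ₗ[ℂ] U)
    (hT : T.IsSymmetric) (hi : T * T = T) :
    ∑ x, ‖T (b x)‖ ^ 2 = finrank ℂ (LinearMap.range T) := by
  have h1 : LinearMap.trace ℂ U T = finrank ℂ (LinearMap.range T) :=
    (LinearMap.IsIdempotentElem.isProj_range T hi).trace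
  rw [LinearMap.trace_eq_sum_inner _ b] at h1
  have h2 : ∀ x, ⟪b x, T (b x)⟫_ℂ = ((‖T (b x)‖ ^ 2 : ℝ) : ℂ) := by
    intro x
    have : T (b x) = T (T (b x)) := by
      conv_lhs => rw [← hi]
      rfl
    rw [this, ← hT, ← this, inner_self_eq_norm_sq_to_K]
    norm_cast
  simp only [h2] at h1
  exact_mod_cast h1

lemma schur_coef [Fintype G] {τ : Representation ℂ G U} (h : IsIrreducibleRep τ)
    (hu : IsUnitaryRep τ) (v : U) :
    ∑ g, ‖⟪v, τ g v⟫_ℂ‖ ^ 2 = Fintype.card G * ‖v‖ ^ 4 / finrank ℂ U := by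
  let b := stdOrthonormalBasis ℂ U
  let F : G → (U →ₗ[ℂ] U) := fun g =>
    ((LinearMap.toSpanSingleton ℂ U (τ g v)) ∘ₗ (innerₛₗ ℂ (τ g v)))
  have hF : ∀ g w, F g w = ⟪τ g v, w⟫_ℂ • τ g v := by intro g w; rfl
  have key := schur h (∑ g, F g) (by
    intro x
    rw [Finset.sum_mul, Finset.mul_sum]
    refine Fintype.sum_equiv (Equiv.mulLeft x⁻¹) _ _ ?_
    intro g
    ext w
    simp only [Module.End.mul_apply, hF, Equiv.coe_mulLeft, map_smul]
    have e1 : τ x (τ (x⁻¹ * g) v) = τ g v := by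
      rw [← Module.End.mul_apply, ← map_mul]; simp
    rw [e1]
    congr 1
    rw [← hu x (τ (x⁻¹ * g) v) w, e1])
  have htr : LinearMap.trace ℂ U (∑ g, F g) = Fintype.card G * (‖v‖ ^ 2 : ℝ) := by
    rw [map_sum]
    have : ∀ g, LinearMap.trace ℂ U (F g) = (‖v‖ ^ 2 : ℝ) := by
      intro g
      rw [LinearMap.trace_eq_sum_inner _ b]
      simp only [hF, inner_smul_right]
      rw [OrthonormalBasis.sum_inner_mul_inner, inner_self_eq_norm_sq_to_K, unit_norm hu]
      norm_cast
    simp [this]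
  have h2 : ⟪v, (∑ g, F g) v⟫_ℂ = ((∑ g, ‖⟪v, τ g v⟫_ℂ‖ ^ 2 : ℝ) : ℂ) := by
    rw [LinearMap.sum_apply, inner_sum, Complex.ofReal_sum]
    refine Finset.sum_congr rfl fun g _ => ?_
    rw [hF, inner_smul_right, ← inner_conj_symm (τ g v) v, mul_comm, Complex.mul_conj,
      Complex.normSq_eq_norm_sq]
  rw [key, htr] at h2
  simp only [LinearMap.smul_apply, Module.End.one_apply, inner_smul_right,
    inner_self_eq_norm_sq_to_K] at h2
  have h3 : ((∑ g, ‖⟪v, τ g v⟫_ℂ‖ ^ 2 : ℝ) : ℂ) =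
    ((Fintype.card G * ‖v‖ ^ 4 / finrank ℂ U : ℝ) : ℂ) := by
    rw [← h2]; push_cast; 
    simp only [Complex.coe_algebraMap]
    ring
  exact_mod_cast h3

lemma sub_unit {τ : Representation ℂ G U} (h : IsUnitaryRep τ) (S : Subrepresentation τ) :
    IsUnitaryRep S.toRepresentation := fun g v w => h g v w

lemma decomp_aux {R : Representation ℂ G U} (h : IsUnitaryRep R) (n : ℕ) :
    ∀ A : Subrepresentation R, finrank ℂ A.toSubmodule ≤ n →
    ∃ (κ : Type) (_ : Fintype κ) (S : κ → Subrepresentation R),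
      (∀ a, IsIrreducibleRep (S a).toRepresentation) ∧
      (∀ a b, a ≠ b → (S a).toSubmodule ⟂ (S b).toSubmodule) ∧
      (⨆ a, (S a).toSubmodule) = A.toSubmodule := by
  induction n with
  | zero =>
    intro A hA
    refine ⟨Empty, inferInstance, Empty.elim, fun a => a.elim, fun a => a.elim, ?_⟩
    rw [iSup_of_empty]
    exact (Submodule.finrank_eq_zero.1 (Nat.le_zero.1 hA)).symm
  | succ n ih =>
    intro A hA
    by_cases hirr : IsIrreducibleRep A.toRepresentation
    · refine ⟨Unit, inferInstance, fun _ => A, fun _ => hirr, fun a b hab => ?_, by simp⟩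
      exact absurd (Subsingleton.elim a b) hab
    by_cases hbot : A.toSubmodule = ⊥
    · exact ih A (by rw [hbot]; simp)
    have hne : ∃ v : A.toSubmodule, v ≠ 0 := by
      obtain ⟨v, hv, hv0⟩ := Submodule.exists_mem_ne_zero_of_ne_bot hbot
      exact ⟨⟨v, hv⟩, by simpa using hv0⟩
    unfold IsIrreducibleRep at hirr
    push Not at hirr
    obtain ⟨B0, hB0, hB1, hB2⟩ := hirr hne
    let B : Subrepresentation R := ⟨B0.map A.toSubmodule.subtype, by
      rintro g v ⟨w, hw, rfl⟩
      exact ⟨_, hB0 g w hw, rfl⟩⟩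
    let C : Subrepresentation R := ⟨A.toSubmodule ⊓ B.toSubmoduleᗮ, by
      rintro g v ⟨hv1, hv2⟩
      refine ⟨A.apply_mem_toSubmodule g hv1, ?_⟩
      intro u hu
      have := hv2 (R g⁻¹ u) (B.apply_mem_toSubmodule g⁻¹ hu)
      rw [← h g, ← Module.End.mul_apply, ← map_mul] at this
      simpa using this⟩
    have hBA : B.toSubmodule ≤ A.toSubmodule := Submodule.map_subtype_le _ _
    have hBne : B.toSubmodule ≠ ⊥ := by
      intro h0
      apply hB1
      exact Submodule.map_injective_of_injective A.toSubmodule.subtype_injective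
        (h0.trans (Submodule.map_bot _).symm)
    have hBlt : B.toSubmodule < A.toSubmodule := by
      refine lt_of_le_of_ne hBA fun h0 => hB2 ?_
      rw [eq_top_iff]
      intro x _
      have : (x : U) ∈ B.toSubmodule := by rw [h0]; exact x.2
      obtain ⟨w, hw, hwx⟩ := this
      rwa [← Subtype.ext hwx]
    have hsup : B.toSubmodule ⊔ C.toSubmodule = A.toSubmodule := by
      have := Submodule.sup_orthogonal_inf_of_hasOrthogonalProjection hBA
      rw [← this, inf_comm]
    have hCA : C.toSubmodule ≤ A.toSubmodule := inf_le_left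
    have hClt : C.toSubmodule < A.toSubmodule := by
      refine lt_of_le_of_ne hCA fun h0 => hBne ?_
      have h1 : B.toSubmodule ≤ B.toSubmoduleᗮ := hBA.trans (h0 ▸ inf_le_right)
      rw [eq_bot_iff]
      intro x hx
      have := h1 hx x hx
      simpa using this
    obtain ⟨κ₁, f₁, S₁, i₁, o₁, s₁⟩ := ih B (by
      have := Submodule.finrank_lt_finrank_of_lt hBlt; omega)
    obtain ⟨κ₂, f₂, S₂, i₂, o₂, s₂⟩ := ih C (by
      have := Submodule.finrank_lt_finrank_of_lt hClt; omega)
    have hBC : B.toSubmodule ⟂ C.toSubmodule := by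
      rw [Submodule.isOrtho_iff_le]
      refine le_trans (Submodule.le_orthogonal_orthogonal _) (Submodule.orthogonal_le inf_le_right)
    refine ⟨κ₁ ⊕ κ₂, inferInstance, Sum.elim S₁ S₂, ?_, ?_, ?_⟩
    · rintro (a | a)
      · exact i₁ a
      · exact i₂ a
    · rintro (a | a) (b | b) hab
      · exact o₁ a b (fun e => hab (by rw [e]))
      · exact hBC.mono (s₁ ▸ le_iSup (fun a => (S₁ a).toSubmodule) a)
          (s₂ ▸ le_iSup (fun a => (S₂ a).toSubmodule) b)
      · exact (hBC.mono (s₁ ▸ le_iSup (fun a => (S₁ a).toSubmodule) b)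
          (s₂ ▸ le_iSup (fun a => (S₂ a).toSubmodule) a)).symm
      · exact o₂ a b (fun e => hab (by rw [e]))
    · rw [iSup_sum, ← hsup, ← s₁, ← s₂]
      rfl

lemma decomp {R : Representation ℂ G U} (h : IsUnitaryRep R) 
    {J : Type*}
    {W : J → Type*} [∀ j, NormedAddCommGroup (W j)] [∀ j, InnerProductSpace ℂ (W j)]
    [∀ j, FiniteDimensional ℂ (W j)]
    {σ : ∀ j, Representation ℂ G (W j)} (hfam : IsCompleteFamily W σ) :
    ∃ (κ : Type) (_ : Fintype κ) (S : κ → Subrepresentation R) (t : κ → J),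
      (∀ a, IsIrreducibleRep (S a).toRepresentation) ∧
      (∀ a, RepIso (S a).toRepresentation (σ (t a))) ∧
      (∀ g, repChar R g = ∑ a, repChar (σ (t a)) g) ∧
      (∀ g v, ⟪v, R g v⟫_ℂ = ∑ a, ⟪(S a).toSubmodule.orthogonalProjectionOnto v,
        (S a).toRepresentation g ((S a).toSubmodule.orthogonalProjectionOnto v)⟫_ℂ) := by
  classical
  obtain ⟨κ, hκ, S, hi, ho, hs⟩ := decomp_aux h _ ⊤ le_rfl
  have hs : (⨆ a, (S a).toSubmodule) = ⊤ := hs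
  have hof : OrthogonalFamily ℂ (fun a => (S a).toSubmodule)
      fun a => ((S a).toSubmodule).subtypeₗᵢ := OrthogonalFamily.of_pairwise ho
  choose t ht using fun a => complete_any hfam (hi a)
  refine ⟨κ, hκ, S, t, hi, ht, ?_, ?_⟩
  · intro g
    have hint : DirectSum.IsInternal fun a => (S a).toSubmodule := by
      rw [hof.isInternal_iff, hs]; simp
    rw [repChar, LinearMap.trace_eq_sum_trace_restrict hint
      (fun a v hv => (S a).apply_mem_toSubmodule g hv)]
    refine Finset.sum_congr rfl fun a _ => ?_
    rw [← repIso_char (ht a)]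
    rfl
  · intro g v
    have hv := hof.sum_projection_of_mem_iSup v (by rw [hs]; trivial)
    conv_lhs => rw [← hv]
    rw [map_sum, sum_inner]
    refine Finset.sum_congr rfl fun a _ => ?_
    rw [inner_sum, Finset.sum_eq_single a]
    · rfl
    · intro b _ hb
      exact (ho a b (Ne.symm hb)).inner_eq (Submodule.starProjection_apply_mem _ _)
        ((S b).apply_mem_toSubmodule g (Submodule.starProjection_apply_mem _ _))
    · simp

end unitary
end S15

namespace S15
open Module
set_option linter.unusedSectionVars false

section fam
variable {G : Type*} [Group G] [Fintype G]
variable {U : Type*} [NormedAddCommGroup U] [InnerProductSpace ℂ U] [FiniteDimensional ℂ U]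
variable {J : Type*} [Fintype J]
    {W : J → Type*} [∀ j, NormedAddCommGroup (W j)] [∀ j, InnerProductSpace ℂ (W j)]
    [∀ j, FiniteDimensional ℂ (W j)]
    {σ : ∀ j, Representation ℂ G (W j)}

open Classical in
lemma fam_orth (hfam : IsCompleteFamily W σ) (i j : J) :
    ∑ g, starRingEnd ℂ (repChar (σ j) g) * repChar (σ i) g =
      if i = j then (Fintype.card G : ℂ) else 0 := by
  have e : ∀ g, starRingEnd ℂ (repChar (σ j) g) * repChar (σ i) g =
      repChar (σ i) g * repChar (σ j) g⁻¹ := by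
    intro g; rw [repChar_inv (hfam.1 j), mul_comm]
  simp only [e]
  split_ifs with h
  · subst h
    exact char_orth_same (hfam.2.1 i) (hfam.2.1 i) ⟨LinearEquiv.refl ℂ _, fun _ _ => rfl⟩
  · exact char_orth_diff (hfam.2.1 i) (hfam.2.1 j) (hfam.2.2.1 j i (Ne.symm h))

lemma mult (hfam : IsCompleteFamily W σ) {κ : Type*} [Fintype κ] (t : κ → J) (f : G → ℂ)
    (hf : ∀ g, f g = ∑ a, repChar (σ (t a)) g) (w : J → ℂ) :
    ∑ j, w j * ∑ g, starRingEnd ℂ (repChar (σ j) g) * f g =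
      (Fintype.card G : ℂ) * ∑ a, w (t a) := by
  classical
  have h1 : ∀ j, ∑ g, starRingEnd ℂ (repChar (σ j) g) * f g =
      ∑ a, if t a = j then (Fintype.card G : ℂ) else 0 := by
    intro j
    simp only [hf, Finset.mul_sum]
    rw [Finset.sum_comm]
    exact Finset.sum_congr rfl fun a _ => fam_orth hfam (t a) j
  simp only [h1, Finset.mul_sum]
  rw [Finset.sum_comm]
  refine Finset.sum_congr rfl fun a _ => ?_
  simp [mul_comm]

lemma fam_finrank_pos (hfam : IsCompleteFamily W σ) (j : J) : 0 < finrank ℂ (W j) :=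
  irr_finrank_pos (hfam.2.1 j)

/-- regular representation -/
def regRep (G : Type*) [Group G] [Fintype G] : Representation ℂ G (EuclideanSpace ℂ G) where
  toFun g := 
    { toFun := fun f => WithLp.toLp 2 fun x => f (g⁻¹ * x)
      map_add' := by intro a b; ext; simp
      map_smul' := by intro a b; ext; simp }
  map_one' := by ext; simp
  map_mul' := by intro a b; ext; simp [mul_assoc]

lemma regRep_apply (g : G) (f : EuclideanSpace ℂ G) (x : G) : regRep G g f x = f (g⁻¹ * x) := rfl

lemma regRep_unitary : IsUnitaryRep (regRep G) := by
  intro g v w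
  simp only [PiLp.inner_apply, regRep_apply]
  exact Fintype.sum_equiv (Equiv.mulLeft g⁻¹) _ _ (fun x => rfl)

open Classical in
lemma regRep_char (g : G) : repChar (regRep G) g = if g = 1 then (Fintype.card G : ℂ) else 0 := by
  rw [repChar_eq_sum (EuclideanSpace.basisFun G ℂ)]
  simp only [EuclideanSpace.basisFun_apply, EuclideanSpace.inner_single_left, regRep_apply,
    PiLp.single_apply]
  split_ifs with h
  · subst h; simp
  · simp [h]

open Classical in
lemma plancherel (hfam : IsCompleteFamily W σ) (h : G) :
    ∑ j, (finrank ℂ (W j) : ℂ) * repChar (σ j) h =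
      if h = 1 then (Fintype.card G : ℂ) else 0 := by
  obtain ⟨κ, hκ, S, t, -, -, hc, -⟩ := decomp (regRep_unitary (G := G)) hfam
  have hcard : (Fintype.card G : ℂ) ≠ 0 := by simp
  have h1 : ∀ j, (finrank ℂ (W j) : ℂ) = ∑ a, if t a = j then (1 : ℂ) else 0 := by
    intro j
    have := mult hfam t _ hc (fun j' => if j' = j then 1 else 0)
    simp only [ite_mul, one_mul, zero_mul, Finset.sum_ite_eq', Finset.mem_univ, if_true,
      regRep_char, mul_ite, mul_zero, repChar_one, map_natCast] at this
    rw [mul_comm] at this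
    exact mul_left_cancel₀ hcard this
  rw [← regRep_char h, hc h]
  simp only [h1, Finset.sum_mul]
  rw [Finset.sum_comm]
  simp

lemma vec_class {R : Representation ℂ G U} 
    {κ : Type*} [Fintype κ] {S : κ → Subrepresentation R} {t : κ → J}
    (hi : ∀ a, IsIrreducibleRep (S a).toRepresentation)
    (ht : ∀ a, RepIso (S a).toRepresentation (σ (t a)))
    (hd : ∀ g v, ⟪v, R g v⟫_ℂ = ∑ a, ⟪(S a).toSubmodule.orthogonalProjectionOnto v,
        (S a).toRepresentation g ((S a).toSubmodule.orthogonalProjectionOnto v)⟫_ℂ)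
    (φ : G → ℂ) (hφ : ∀ g h, φ (h * g * h⁻¹) = φ g) (v : U) :
    ∑ g, φ g * ⟪v, R g v⟫_ℂ = ∑ a, (∑ g, φ g * repChar (σ (t a)) g) / (finrank ℂ (W (t a)) : ℂ) *
      ((‖(S a).toSubmodule.orthogonalProjectionOnto v‖ ^ 2 : ℝ) : ℂ) := by
  simp only [hd, Finset.mul_sum]
  rw [Finset.sum_comm]
  refine Finset.sum_congr rfl fun a _ => ?_
  have := class_scalar (hi a) φ hφ
  simp only [repIso_char (ht a), repIso_finrank (ht a)] at this
  set p := (S a).toSubmodule.orthogonalProjectionOnto v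
  have h2 := congrArg (fun T : (S a).toSubmodule →ₗ[ℂ] (S a).toSubmodule => ⟪p, T p⟫_ℂ) this
  simp only [LinearMap.sum_apply, LinearMap.smul_apply, inner_sum, inner_smul_right,
    Module.End.one_apply, inner_self_eq_norm_sq_to_K] at h2
  rw [h2]
  push_cast
  rfl

lemma decomp_norm {R : Representation ℂ G U} 
    {κ : Type*} [Fintype κ] {S : κ → Subrepresentation R}
    (hd : ∀ g v, ⟪v, R g v⟫_ℂ = ∑ a, ⟪(S a).toSubmodule.orthogonalProjectionOnto v,
        (S a).toRepresentation g ((S a).toSubmodule.orthogonalProjectionOnto v)⟫_ℂ) (v : U) :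
    ‖v‖ ^ 2 = ∑ a, ‖(S a).toSubmodule.orthogonalProjectionOnto v‖ ^ 2 := by
  have := hd 1 v
  simp only [map_one, Module.End.one_apply, inner_self_eq_norm_sq_to_K] at this
  exact_mod_cast this

lemma tensor_rep {τ : Representation ℂ G U} (hu : IsUnitaryRep τ) (v : U) :
    ∃ (ι : Type) (_ : Fintype ι) (π : Representation ℂ G (EuclideanSpace ℂ ι))
      (u : EuclideanSpace ℂ ι), IsUnitaryRep π ∧
      ∀ g, ⟪u, π g u⟫_ℂ = ((‖⟪v, τ g v⟫_ℂ‖ ^ 2 : ℝ) : ℂ) := by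
  classical
  let b := stdOrthonormalBasis ℂ U
  let ι := Fin (finrank ℂ U)
  let D : G → Matrix ι ι ℂ := fun g => LinearMap.toMatrixOrthonormal b (τ g)
  have hDe : ∀ g s t, D g s t = ⟪b s, τ g (b t)⟫_ℂ := by
    intro g s t
    exact LinearMap.toMatrixOrthonormal_apply_apply b (τ g) s t
  have hD1 : D 1 = 1 := by simp [D]
  have hDm : ∀ g h, D (g * h) = D g * D h := by
    intro g h; simp only [D]; rw [map_mul, map_mul]
  have hDs : ∀ g, star (D g) = D g⁻¹ := by
    intro g
    ext s t
    rw [Matrix.star_apply, hDe, hDe, unit_inv hu, ← inner_conj_symm]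
    simp
  let E : G → Matrix ι ι ℂ := fun g => (D g).map (starRingEnd ℂ)
  have hE1 : E 1 = 1 := by simp [E, hD1]
  have hEm : ∀ g h, E (g * h) = E g * E h := by
    intro g h; simp [E, hDm, Matrix.map_mul]
  have hEs : ∀ g, star (E g) = E g⁻¹ := by
    intro g
    ext s t
    have := congrFun (congrFun (hDs g) s) t
    rw [Matrix.star_apply] at this ⊢
    simp only [E, Matrix.map_apply, ← this]
    rfl
  let K : G → Matrix (ι × ι) (ι × ι) ℂ := fun g => Matrix.kroneckerMap (· * ·) (D g) (E g)
  have hK1 : K 1 = 1 := by simp [K, hD1, hE1]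
  have hKm : ∀ g h, K (g * h) = K g * K h := by
    intro g h; simp only [K, hDm, hEm]; exact Matrix.mul_kronecker_mul _ _ _ _
  have hKs : ∀ g, star (K g) = K g⁻¹ := by
    intro g
    simp only [K, ← hDs, ← hEs]
    exact Matrix.conjTranspose_kronecker _ _
  let π : Representation ℂ G (EuclideanSpace ℂ (ι × ι)) :=
    { toFun := fun g => (Matrix.toEuclideanCLM (𝕜 := ℂ) (K g)).toLinearMap
      map_one' := by rw [hK1, map_one]; rfl
      map_mul' := by intro g h; rw [hKm, map_mul]; rfl }
  have hπ : ∀ g x, π g x = Matrix.toEuclideanCLM (𝕜 := ℂ) (K g) x := fun _ _ => rfl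
  let u : EuclideanSpace ℂ (ι × ι) :=
    WithLp.toLp 2 fun p => b.repr v p.1 * starRingEnd ℂ (b.repr v p.2)
  refine ⟨ι × ι, inferInstance, π, u, ?_, ?_⟩
  · intro g x y
    rw [hπ, hπ, ← ContinuousLinearMap.adjoint_inner_right, ← ContinuousLinearMap.star_eq_adjoint,
      ← map_star, ← ContinuousLinearMap.mul_apply, ← map_mul, hKs, ← hKm]
    simp [hK1]
  · intro g
    have hA : ⟪v, τ g v⟫_ℂ = ∑ s, ∑ t, starRingEnd ℂ (b.repr v s) * (D g s t * b.repr v t) := by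
      conv_lhs => rw [← b.sum_repr v]
      rw [map_sum, sum_inner]
      simp only [inner_smul_left, inner_sum, map_smul, inner_smul_right, Finset.mul_sum, hDe]
      refine Finset.sum_congr rfl fun s _ => Finset.sum_congr rfl fun t _ => ?_
      ring
    have hB : ⟪u, π g u⟫_ℂ = ⟪v, τ g v⟫_ℂ * starRingEnd ℂ ⟪v, τ g v⟫_ℂ := by
      have h0 : ⟪u, π g u⟫_ℂ = ∑ p : ι × ι, starRingEnd ℂ (u p) * ∑ q : ι × ι, K g p q * u q := by
        rw [PiLp.inner_apply]
        refine Finset.sum_congr rfl fun p _ => ?_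
        rw [hπ, mul_comm]
        rfl
      rw [h0, hA]
      simp only [map_sum, Fintype.sum_prod_type]
      rw [Finset.sum_mul_sum]
      refine Finset.sum_congr rfl fun s _ => Finset.sum_congr rfl fun t _ => ?_
      rw [Finset.sum_mul_sum, Finset.mul_sum]
      refine Finset.sum_congr rfl fun s' _ => ?_
      rw [Finset.mul_sum]
      refine Finset.sum_congr rfl fun t' _ => ?_
      have hKe : K g (s, t) (s', t') = D g s s' * starRingEnd ℂ (D g t t') := rfl
      have hue : ∀ x y, u (x, y) = b.repr v x * starRingEnd ℂ (b.repr v y) := fun _ _ => rfl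
      rw [hKe, hue, hue]
      simp only [map_mul, Complex.conj_conj]
      ring
    rw [hB, Complex.mul_conj, Complex.normSq_eq_norm_sq]

end fam
end S15

namespace S15
open Module
set_option linter.unusedSectionVars false

section key
variable {G : Type*} [Group G] [Fintype G]
variable {U : Type*} [NormedAddCommGroup U] [InnerProductSpace ℂ U] [FiniteDimensional ℂ U]
variable {J : Type*} [Fintype J]
    {W : J → Type*} [∀ j, NormedAddCommGroup (W j)] [∀ j, InnerProductSpace ℂ (W j)]
    [∀ j, FiniteDimensional ℂ (W j)]
    {σ : ∀ j, Representation ℂ G (W j)}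

open Classical in
lemma indM_class {M : Finset G} {m₀ : G} (hM : ∀ m : G, m ∈ M ↔ IsConj m₀ m) (g h : G) :
    (if h * g * h⁻¹ ∈ M then (1:ℂ) else 0) = if g ∈ M then 1 else 0 := by
  have : h * g * h⁻¹ ∈ M ↔ g ∈ M := by
    rw [hM, hM]
    have hc : IsConj g (h * g * h⁻¹) := isConj_iff.2 ⟨h, rfl⟩
    exact ⟨fun x => x.trans hc.symm, fun x => x.trans hc⟩
  simp only [this]

lemma char_M {M : Finset G} {m₀ : G} (hM : ∀ m : G, m ∈ M ↔ IsConj m₀ m)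
    (τ : Representation ℂ G U) {m : G} (hm : m ∈ M) : repChar τ m = repChar τ m₀ := by
  obtain ⟨c, rfl⟩ := isConj_iff.1 ((hM m).1 hm)
  exact repChar_conj τ m₀ c

lemma irr_bound (hfam : IsCompleteFamily W σ) {M : Finset G} {m₀ : G}
    (hM : ∀ m : G, m ∈ M ↔ IsConj m₀ m)
    (Λ : Finset J) {lam : ℝ} (hlam0 : 0 ≤ lam)
    (hΛ : ∀ j ∉ Λ, ‖repChar (σ j) m₀‖ ≤ lam * (finrank ℂ (W j) : ℝ))
    {τ : Representation ℂ G U} (hi : IsIrreducibleRep τ) (hu : IsUnitaryRep τ) (v : U) :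
    ∑ m ∈ M, ‖⟪v, τ m v⟫_ℂ‖ ^ 2 ≤ M.card * (‖v‖ ^ 4 *
      (lam + (∑ j ∈ Λ, (finrank ℂ (W j) : ℝ) ^ 2) / finrank ℂ U)) := by
  classical
  obtain ⟨ι, hι, π, u, hπ, hπu⟩ := tensor_rep hu v
  obtain ⟨κ, hκ, S, t, hSi, hSt, hc, hd⟩ := decomp hπ hfam
  have hGpos : (0:ℝ) < Fintype.card G := by exact_mod_cast Fintype.card_pos
  set q : κ → ℝ := fun a => ‖(S a).toSubmodule.orthogonalProjectionOnto u‖ ^ 2 with hq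
  have hq0 : ∀ a, 0 ≤ q a := fun a => by positivity
  have hqsum : ∑ a, q a = ‖v‖ ^ 4 := by
    rw [← decomp_norm hd u]
    have := hπu 1
    simp only [map_one, Module.End.one_apply, inner_self_eq_norm_sq_to_K] at this
    have h2 : ‖u‖ ^ 2 = (‖v‖ ^ 2) ^ 2 := by
      simp only [norm_pow, Complex.norm_real, norm_norm, RCLike.norm_ofReal, abs_norm] at this
      apply Complex.ofReal_injective
      push_cast at this ⊢
      exact this
    rw [h2]; ring
  have hdpos : ∀ j, (0:ℝ) < finrank ℂ (W j) := fun j => by exact_mod_cast fam_finrank_pos hfam j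
  -- the class average
  have h1 : ((∑ m ∈ M, ‖⟪v, τ m v⟫_ℂ‖ ^ 2 : ℝ) : ℂ) =
      ∑ a, ((M.card : ℂ) * repChar (σ (t a)) m₀) / (finrank ℂ (W (t a)) : ℂ) * (q a : ℂ) := by
    have := vec_class hSi hSt hd (fun g => if g ∈ M then 1 else 0) (indM_class hM) u
    simp only [ite_mul, one_mul, zero_mul, Finset.sum_ite_mem, Finset.univ_inter, hπu] at this
    rw [Complex.ofReal_sum, this]
    refine Finset.sum_congr rfl fun a _ => ?_
    rw [Finset.sum_congr rfl fun m hm => char_M hM (σ (t a)) hm]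
    simp [hq]
  have h2 : ∑ m ∈ M, ‖⟪v, τ m v⟫_ℂ‖ ^ 2 ≤ 
      ∑ a, (M.card : ℝ) * ((lam + if t a ∈ Λ then 1 else 0) * q a) := by
    have h3 : ∑ m ∈ M, ‖⟪v, τ m v⟫_ℂ‖ ^ 2 = ‖((∑ m ∈ M, ‖⟪v, τ m v⟫_ℂ‖ ^ 2 : ℝ) : ℂ)‖ := by
      rw [Complex.norm_real, Real.norm_of_nonneg (Finset.sum_nonneg fun _ _ => sq_nonneg _)]
    rw [h3, h1]
    refine (norm_sum_le _ _).trans (Finset.sum_le_sum fun a _ => ?_)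
    rw [norm_mul, norm_div, norm_mul, Complex.norm_real, Real.norm_of_nonneg (hq0 a),
      Complex.norm_natCast, Complex.norm_natCast, mul_div_assoc, mul_assoc]
    refine mul_le_mul_of_nonneg_left (mul_le_mul_of_nonneg_right ?_ (hq0 a)) (Nat.cast_nonneg _)
    rw [div_le_iff₀ (hdpos _)]
    split_ifs with hta
    · refine (repChar_norm_le (hfam.1 _) _).trans ?_
      have := hdpos (t a)
      nlinarith
    · rw [add_zero]; exact hΛ _ hta
  -- the isotypic parts
  have h4 : ∀ j, ∑ a, (if t a = j then q a else 0) ≤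
      (finrank ℂ (W j) : ℝ) ^ 2 * ‖v‖ ^ 4 / finrank ℂ U := by
    intro j
    have := vec_class hSi hSt hd (fun g => starRingEnd ℂ (repChar (σ j) g))
      (fun g h => by rw [repChar_conj]) u
    simp only [fam_orth hfam, hπu] at this
    have h5 : ∑ a, (if t a = j then (Fintype.card G : ℂ) else 0) / (finrank ℂ (W (t a)) : ℂ)
        * (q a : ℂ) = ((Fintype.card G / finrank ℂ (W j) * 
          ∑ a, (if t a = j then q a else 0) : ℝ) : ℂ) := by
      push_cast
      rw [Finset.mul_sum]
      refine Finset.sum_congr rfl fun a _ => ?_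
      split_ifs with h
      · rw [h]
      · simp
    rw [h5] at this
    have h6 : Fintype.card G / finrank ℂ (W j) * ∑ a, (if t a = j then q a else 0) ≤
        ∑ g, finrank ℂ (W j) * ‖⟪v, τ g v⟫_ℂ‖ ^ 2 := by
      refine (le_abs_self _).trans ?_
      rw [← Real.norm_eq_abs, ← Complex.norm_real, ← this]
      refine (norm_sum_le _ _).trans (Finset.sum_le_sum fun g _ => ?_)
      rw [norm_mul, Complex.norm_real, RCLike.norm_conj, Real.norm_of_nonneg (by positivity)]
      exact mul_le_mul_of_nonneg_right (repChar_norm_le (hfam.1 _) _) (by positivity)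
    rw [← Finset.mul_sum, schur_coef hi hu, div_mul_eq_mul_div, div_le_iff₀ (hdpos j)] at h6
    refine le_of_mul_le_mul_left (h6.trans (le_of_eq ?_)) hGpos
    ring
  refine h2.trans ?_
  rw [← Finset.mul_sum]
  refine mul_le_mul_of_nonneg_left ?_ (by positivity)
  simp only [add_mul, Finset.sum_add_distrib, ite_mul, one_mul, zero_mul]
  rw [← Finset.mul_sum, hqsum, mul_add, mul_comm lam]
  refine add_le_add le_rfl ?_
  have h7 : ∑ a, (if t a ∈ Λ then q a else 0) = ∑ j ∈ Λ, ∑ a, (if t a = j then q a else 0) := by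
    rw [Finset.sum_comm]
    refine Finset.sum_congr rfl fun a _ => ?_
    simp
  rw [h7]
  refine (Finset.sum_le_sum fun j _ => h4 j).trans (le_of_eq ?_)
  rw [Finset.sum_div, Finset.mul_sum]
  refine Finset.sum_congr rfl fun j _ => ?_
  ring

lemma sum_proj_sq {ι : Type*} [Fintype ι] (b : OrthonormalBasis ι ℂ U) (S : Submodule ℂ U) :
    ∑ x, ‖S.orthogonalProjectionOnto (b x)‖ ^ 2 = finrank ℂ S := by
  have := sum_norm_sq_proj b (S.starProjection : U →ₗ[ℂ] U)
    (Submodule.starProjection_isSymmetric S) (by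
      ext x; exact DFunLike.congr_fun (Submodule.isIdempotentElem_starProjection S) x)
  have h2 : LinearMap.range (S.starProjection : U →ₗ[ℂ] U) = S := Submodule.range_starProjection S
  rw [h2] at this
  exact this

lemma rep_bound (hfam : IsCompleteFamily W σ) {M : Finset G} {m₀ : G}
    (hM : ∀ m : G, m ∈ M ↔ IsConj m₀ m)
    (Λ : Finset J) {lam : ℝ} (hlam0 : 0 ≤ lam)
    (hΛ : ∀ j ∉ Λ, ‖repChar (σ j) m₀‖ ≤ lam * (finrank ℂ (W j) : ℝ))
    {R : Representation ℂ G U} (hu : IsUnitaryRep R)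
    {κ : Type*} [Fintype κ] {S : κ → Subrepresentation R}
    (hi : ∀ a, IsIrreducibleRep (S a).toRepresentation)
    (hd : ∀ g v, ⟪v, R g v⟫_ℂ = ∑ a, ⟪(S a).toSubmodule.orthogonalProjectionOnto v,
        (S a).toRepresentation g ((S a).toSubmodule.orthogonalProjectionOnto v)⟫_ℂ)
    {ι : Type*} [Fintype ι] (b : OrthonormalBasis ι ℂ U) :
    ∑ m ∈ M, ∑ x, ‖⟪b x, R m (b x)⟫_ℂ‖ ^ 2 ≤ M.card * (lam * finrank ℂ U +
      (∑ j ∈ Λ, (finrank ℂ (W j) : ℝ) ^ 2) * Fintype.card κ) := by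
  set Lc := ∑ j ∈ Λ, (finrank ℂ (W j) : ℝ) ^ 2 with hLc
  set p : κ → ι → ℝ := fun a x => ‖(S a).toSubmodule.orthogonalProjectionOnto (b x)‖ ^ 2 with hp
  have hp1 : ∀ x, ∑ a, p a x = 1 := by
    intro x; rw [← decomp_norm hd]; simp
  have hx : ∀ x, ∑ m ∈ M, ‖⟪b x, R m (b x)⟫_ℂ‖ ^ 2 ≤ M.card * ∑ a, p a x *
      (lam + Lc / finrank ℂ (S a).toSubmodule) := by
    intro x
    have h1 : ∀ m, ‖⟪b x, R m (b x)⟫_ℂ‖ ^ 2 ≤ 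
        ∑ a, ‖⟪(S a).toSubmodule.orthogonalProjectionOnto (b x),
        (S a).toRepresentation m ((S a).toSubmodule.orthogonalProjectionOnto (b x))⟫_ℂ‖ ^ 2
         / p a x := by
      intro m
      rw [hd]
      have h2 := Finset.sum_sq_le_sum_mul_sum_of_sq_eq_mul Finset.univ
        (r := fun a => ‖⟪(S a).toSubmodule.orthogonalProjectionOnto (b x),
          (S a).toRepresentation m ((S a).toSubmodule.orthogonalProjectionOnto (b x))⟫_ℂ‖)
        (f := fun a => p a x)
        (g := fun a => ‖⟪(S a).toSubmodule.orthogonalProjectionOnto (b x),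
          (S a).toRepresentation m ((S a).toSubmodule.orthogonalProjectionOnto (b x))⟫_ℂ‖ ^ 2
            / p a x)
        (fun a _ => by positivity) (fun a _ => by positivity) (by
          intro a _
          by_cases h0 : p a x = 0
          · have : (S a).toSubmodule.orthogonalProjectionOnto (b x) = 0 := by
              have h0' : ‖(S a).toSubmodule.orthogonalProjectionOnto (b x)‖ ^ 2 = 0 := h0
              exact norm_eq_zero.1 ((pow_eq_zero_iff two_ne_zero).1 h0')
            rw [this]; simp
          · field_simp)
      rw [hp1, one_mul] at h2
      exact (pow_le_pow_left₀ (norm_nonneg _) (norm_sum_le _ _) 2).trans h2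
    refine (Finset.sum_le_sum fun m _ => h1 m).trans ?_
    rw [Finset.sum_comm, Finset.mul_sum]
    refine Finset.sum_le_sum fun a _ => ?_
    rw [← Finset.sum_div]
    have h3 := irr_bound hfam hM Λ hlam0 hΛ (hi a) (sub_unit hu (S a))
      ((S a).toSubmodule.orthogonalProjectionOnto (b x))
    by_cases h0 : p a x = 0
    · simp [h0]
    have hpp : 0 < p a x := lt_of_le_of_ne (by positivity) (Ne.symm h0)
    rw [div_le_iff₀ hpp]
    refine h3.trans (le_of_eq ?_)
    simp only [hp]
    ring
  rw [Finset.sum_comm]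
  refine (Finset.sum_le_sum fun x _ => hx x).trans (le_of_eq ?_)
  rw [← Finset.mul_sum]
  congr 1
  simp only [mul_add, Finset.sum_add_distrib]
  congr 1
  · simp only [← Finset.sum_mul, hp1]
    simp [finrank_eq_card_basis b.toBasis, mul_comm]
  · rw [Finset.sum_comm]
    simp only [← Finset.sum_mul, hp, sum_proj_sq]
    have : ∀ a, (finrank ℂ (S a).toSubmodule : ℝ) * (Lc / finrank ℂ (S a).toSubmodule) = Lc := by
      intro a
      have := irr_finrank_pos (hi a)
      field_simp
    simp [this, mul_comm]

end key
end S15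

namespace S15
open Module
set_option linter.unusedSectionVars false

section prod
variable {G : Type*} [Group G] [Fintype G] {k : ℕ}
variable {U : Type*} [NormedAddCommGroup U] [InnerProductSpace ℂ U] [FiniteDimensional ℂ U]

/-- diagonal embedding on coordinates in `I` -/
def onHom (G : Type*) [Group G] {k : ℕ} (I : Finset (Fin k)) : G →* (Fin k → G) where
  toFun g := onI g I
  map_one' := by ext x; simp [onI]
  map_mul' a b := by ext x; by_cases h : x ∈ I <;> simp [onI, h]

/-- restriction along the diagonal embedding -/
def restr (ρ : Representation ℂ (Fin k → G) U) (I : Finset (Fin k)) : Representation ℂ G U :=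
  MonoidHom.comp ρ (onHom G I)

lemma restr_apply (ρ : Representation ℂ (Fin k → G) U) (I : Finset (Fin k)) (g : G) :
    restr ρ I g = ρ (onI g I) := rfl

lemma restr_unitary {ρ : Representation ℂ (Fin k → G) U} (h : IsUnitaryRep ρ)
    (I : Finset (Fin k)) : IsUnitaryRep (restr ρ I) := fun _ v w => h _ v w

lemma onI_eq_one {I : Finset (Fin k)} (hI : I.Nonempty) (g : G) : onI g I = 1 ↔ g = 1 := by
  constructor
  · intro h
    obtain ⟨l, hl⟩ := hI
    have := congrFun h l
    simpa [onI, hl] using this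
  · rintro rfl; ext x; simp [onI]

lemma onI_empty (g : G) : (onI g (∅ : Finset (Fin k))) = 1 := by ext x; simp [onI]

lemma char_onI_conj (ρ : Representation ℂ (Fin k → G) U) (I : Finset (Fin k)) (m c : G) :
    repChar ρ (onI (c * m * c⁻¹) I) = repChar ρ (onI m I) :=
  repChar_conj (restr ρ I) m c

/-- the scalar by which the class average at coordinate `l` acts -/
def om (ρ : Representation ℂ (Fin k → G) U) (m₀ : G) (l : Fin k) : ℂ :=
  repChar ρ (onI m₀ {l}) / (finrank ℂ U : ℂ)

lemma avg_scalar {ρ : Representation ℂ (Fin k → G) U} (hi : IsIrreducibleRep ρ)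
    {M : Finset G} {m₀ : G} (hM : ∀ m : G, m ∈ M ↔ IsConj m₀ m) (l : Fin k) :
    ∑ m ∈ M, (ρ (onI m {l}) : U →ₗ[ℂ] U) = ((M.card : ℂ) * om ρ m₀ l) • (1 : U →ₗ[ℂ] U) := by
  have hmem : ∀ m c, m ∈ M → c * m * c⁻¹ ∈ M := by
    intro m c hm
    rw [hM] at hm ⊢
    exact hm.trans (isConj_iff.2 ⟨c, rfl⟩)
  have := schur hi (∑ m ∈ M, (ρ (onI m {l}) : U →ₗ[ℂ] U)) (by
    intro x
    rw [Finset.sum_mul, Finset.mul_sum]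
    refine Finset.sum_bij' (fun m _ => (x l)⁻¹ * m * (x l)) (fun m _ => (x l) * m * (x l)⁻¹)
      ?_ ?_ ?_ ?_ ?_
    · intro m hm
      simpa using hmem m (x l)⁻¹ hm
    · intro m hm
      exact hmem m (x l) hm
    · intro m _; group
    · intro m _; group
    · intro m _
      rw [← map_mul, ← map_mul]
      congr 1
      ext y
      by_cases hy : y = l
      · subst hy; simp [onI, mul_assoc]
      · simp [onI, hy])
  rw [this]
  congr 1
  rw [map_sum, om, mul_div_assoc']
  congr 1
  rw [← nsmul_eq_mul]
  refine Finset.sum_eq_card_nsmul fun m hm => ?_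
  obtain ⟨c, rfl⟩ := isConj_iff.1 ((hM m).1 hm)
  exact char_onI_conj ρ {l} m₀ c

lemma char_insert {ρ : Representation ℂ (Fin k → G) U} (hi : IsIrreducibleRep ρ)
    {M : Finset G} {m₀ : G} (hM : ∀ m : G, m ∈ M ↔ IsConj m₀ m) {m : G} (hm : m ∈ M)
    {l : Fin k} {I : Finset (Fin k)} (hl : l ∉ I) :
    repChar ρ (onI m (insert l I)) = om ρ m₀ l * repChar ρ (onI m I) := by
  have hc : (M.card : ℂ) ≠ 0 := by
    have := Finset.card_ne_zero_of_mem hm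
    exact_mod_cast this
  have h1 : ∑ m' ∈ M, LinearMap.trace ℂ U (ρ (onI m I) * ρ (onI m' {l})) =
      (M.card : ℂ) * repChar ρ (onI m (insert l I)) := by
    rw [← nsmul_eq_mul]
    refine Finset.sum_eq_card_nsmul fun m' hm' => ?_
    obtain ⟨c, rfl⟩ := isConj_iff.1 (((hM m).1 hm).symm.trans ((hM m').1 hm'))
    rw [← repChar_conj ρ (onI m (insert l I)) (onI c {l}), ← map_mul, repChar]
    congr 2
    ext y
    by_cases hy : y = l
    · subst hy; simp [onI, hl]
    · simp [onI, hy]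
  rw [← map_sum, ← Finset.mul_sum, avg_scalar hi hM l] at h1
  apply mul_left_cancel₀ hc
  rw [← h1]
  simp [repChar, mul_assoc]

lemma char_prod {ρ : Representation ℂ (Fin k → G) U} (hi : IsIrreducibleRep ρ)
    {M : Finset G} {m₀ : G} (hM : ∀ m : G, m ∈ M ↔ IsConj m₀ m) {m : G} (hm : m ∈ M)
    (I : Finset (Fin k)) :
    repChar ρ (onI m I) = (finrank ℂ U : ℂ) * ∏ l ∈ I, om ρ m₀ l := by
  induction I using Finset.induction_on with
  | empty => simp [onI_empty, repChar_one]
  | insert l I hl ih => rw [char_insert hi hM hm hl, ih, Finset.prod_insert hl]; ring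

lemma onI_mul_self {m : G} (hm : m * m = 1) (I I' : Finset (Fin k)) :
    onI m I * onI m I' = onI m (symmDiff I I') := by
  ext y
  by_cases h : y ∈ I <;> by_cases h' : y ∈ I' <;> simp [onI, h, h', Finset.mem_symmDiff, hm]

lemma onI_inv {m : G} (hm : m * m = 1) (I : Finset (Fin k)) : (onI m I)⁻¹ = onI m I := by
  rw [inv_eq_iff_mul_eq_one, onI_mul_self hm, symmDiff_self]
  exact onI_empty m

lemma invProj_symm {ρ : Representation ℂ (Fin k → G) U} (hu : IsUnitaryRep ρ) {m : G}
    (hm : m * m = 1) : (invProj ρ m).IsSymmetric := by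
  intro v w
  simp only [invProj, LinearMap.smul_apply, LinearMap.sum_apply, inner_smul_left, inner_smul_right,
    sum_inner, inner_sum]
  congr 1
  · rw [map_inv₀, map_pow, map_ofNat]
  · refine Finset.sum_congr rfl fun I _ => ?_
    rw [← unit_inv hu, onI_inv hm]

lemma invProj_idem (ρ : Representation ℂ (Fin k → G) U) {m : G}
    (hm : m * m = 1) : invProj ρ m * invProj ρ m = invProj ρ m := by
  have h1 : ∀ I : Finset (Fin k), ∑ I', (ρ (onI m I) : U →ₗ[ℂ] U) * ρ (onI m I') =
      ∑ I', ρ (onI m I') := by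
    intro I
    refine Fintype.sum_equiv ⟨fun I' => symmDiff I I', fun I' => symmDiff I I', fun I' => by simp,
      fun I' => by simp⟩ _ _ fun I' => ?_
    rw [← map_mul, onI_mul_self hm]; rfl
  simp only [invProj]
  rw [smul_mul_smul_comm, Finset.sum_mul_sum]
  simp only [h1]
  rw [Finset.sum_const, Finset.card_univ, Fintype.card_finset, Fintype.card_fin,
    ← Nat.cast_smul_eq_nsmul ℂ, smul_smul]
  congr 1
  push_cast
  field_simp

lemma norm_invProj {ρ : Representation ℂ (Fin k → G) U} (hu : IsUnitaryRep ρ) {m : G}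
    (hm : m * m = 1) (v : U) :
    ((‖invProj ρ m v‖ ^ 2 : ℝ) : ℂ) = ((2:ℂ) ^ k)⁻¹ * ∑ I, ⟪v, ρ (onI m I) v⟫_ℂ := by
  have h1 : ⟪v, invProj ρ m v⟫_ℂ = ⟪invProj ρ m v, invProj ρ m v⟫_ℂ := by
    conv_lhs => rw [← invProj_idem ρ hm, Module.End.mul_apply]
    exact (invProj_symm hu hm _ _).symm
  rw [inner_self_eq_norm_sq_to_K] at h1
  push_cast
  refine h1.symm.trans ?_
  simp only [invProj, LinearMap.smul_apply, LinearMap.sum_apply, inner_smul_right, inner_sum]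

lemma rank_invProj {ρ : Representation ℂ (Fin k → G) U} (hi : IsIrreducibleRep ρ)
    (hu : IsUnitaryRep ρ)
    {M : Finset G} {m₀ : G} (hM : ∀ m : G, m ∈ M ↔ IsConj m₀ m) {m : G} (hm : m ∈ M)
    (hm1 : m * m = 1) :
    (finrank ℂ (LinearMap.range (invProj ρ m)) : ℂ) =
      ((2:ℂ) ^ k)⁻¹ * ((finrank ℂ U : ℂ) * ∑ I : Finset (Fin k), ∏ l ∈ I, om ρ m₀ l) := by
  have h1 := sum_norm_sq_proj (stdOrthonormalBasis ℂ U) (invProj ρ m) (invProj_symm hu hm1)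
    (invProj_idem ρ hm1)
  have h2 := congrArg (fun x : ℝ => (x : ℂ)) h1
  simp only [Complex.ofReal_sum, norm_invProj hu hm1, Complex.ofReal_natCast] at h2
  have h3 : (finrank ℂ U : ℂ) * ∑ I : Finset (Fin k), ∏ l ∈ I, om ρ m₀ l =
      ∑ x, ∑ I, ⟪stdOrthonormalBasis ℂ U x, ρ (onI m I) (stdOrthonormalBasis ℂ U x)⟫_ℂ := by
    rw [Finset.sum_comm, Finset.mul_sum]
    refine Finset.sum_congr rfl fun I _ => ?_
    rw [← char_prod hi hM hm, repChar_eq_sum (stdOrthonormalBasis ℂ U)]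
  rw [h3, ← h2, Finset.mul_sum]

lemma rank_lower {ρ : Representation ℂ (Fin k → G) U} (hi : IsIrreducibleRep ρ)
    (hu : IsUnitaryRep ρ)
    {M : Finset G} {m₀ : G} (hM : ∀ m : G, m ∈ M ↔ IsConj m₀ m) {m : G} (hm : m ∈ M)
    (hm1 : m * m = 1) {lam : ℝ} (hlam1 : lam < 1)
    (hgood : ∀ l, ‖om ρ m₀ l‖ ≤ lam) :
    ((2:ℝ) ^ k)⁻¹ * (finrank ℂ U * (1 - lam) ^ k) ≤
      finrank ℂ (LinearMap.range (invProj ρ m)) := by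
  have h := congrArg norm (rank_invProj hi hu hM hm hm1)
  have e : ∑ I : Finset (Fin k), ∏ l ∈ I, om ρ m₀ l = ∏ l, (1 + om ρ m₀ l) := by
    rw [Finset.prod_one_add, Finset.powerset_univ]
  rw [e, norm_mul, norm_mul, Complex.norm_natCast, Complex.norm_natCast, norm_inv, norm_pow,
    norm_prod] at h
  rw [h]
  simp only [Complex.norm_ofNat]
  refine mul_le_mul_of_nonneg_left (mul_le_mul_of_nonneg_left ?_ (Nat.cast_nonneg _))
    (by positivity)
  have : (1 - lam) ^ k = ∏ l : Fin k, (1 - lam) := by simp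
  rw [this]
  refine Finset.prod_le_prod (fun _ _ => by linarith) fun l _ => ?_
  have h1 := norm_sub_le (1 + om ρ m₀ l) (om ρ m₀ l)
  rw [add_sub_cancel_right, norm_one] at h1
  linarith [hgood l]

end prod
end S15

namespace S15
open Module
set_option linter.unusedSectionVars false

section good
variable {G : Type*} [Group G] [Fintype G] {k : ℕ}
variable {U : Type*} [NormedAddCommGroup U] [InnerProductSpace ℂ U] [FiniteDimensional ℂ U]

lemma var_le {ι : Type*} [Fintype ι] (X : ι → ℂ) (c : ℂ)
    (h : ∑ x, X x = (Fintype.card ι : ℂ) * c) : ∑ x, ‖X x - c‖ ^ 2 ≤ ∑ x, ‖X x‖ ^ 2 := by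
  have h1 : ∀ x, ‖X x - c‖ ^ 2 = ‖X x‖ ^ 2 - 2 * inner ℝ (X x) c + ‖c‖ ^ 2 :=
    fun x => norm_sub_sq_real _ _
  have h2 : ∑ x, inner ℝ (X x) c = Fintype.card ι * ‖c‖ ^ 2 := by
    have e : (Fintype.card ι : ℂ) * c = (Fintype.card ι : ℝ) • c := by simp
    rw [← sum_inner, h, e, real_inner_smul_left, real_inner_self_eq_norm_sq]
  simp only [h1, Finset.sum_add_distrib, Finset.sum_sub_distrib, ← Finset.mul_sum, h2]
  simp only [Finset.sum_const, Finset.card_univ, nsmul_eq_mul]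
  have : 0 ≤ (Fintype.card ι : ℝ) * ‖c‖ ^ 2 := by positivity
  linarith

lemma sum_le_sqrt {α : Type*} (s : Finset α) (f : α → ℝ) :
    ∑ a ∈ s, f a ≤ √(s.card * ∑ a ∈ s, f a ^ 2) := by
  apply Real.le_sqrt_of_sq_le
  exact sq_sum_le_card_mul_sum_sq

/-- averaged squared diagonal coefficients -/
def qq {ι : Type*} [Fintype ι] (b : OrthonormalBasis ι ℂ U) (ρ : Representation ℂ (Fin k → G) U)
    (M : Finset G) (I : Finset (Fin k)) : ℝ :=
  (∑ m ∈ M, ∑ x, ‖⟪b x, ρ (onI m I) (b x)⟫_ℂ‖ ^ 2) / (M.card * finrank ℂ U)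

/-- the inner term -/
def tm {ι : Type*} [Fintype ι] (b : OrthonormalBasis ι ℂ U) (ρ : Representation ℂ (Fin k → G) U)
    (M : Finset G) : ℝ :=
  (1 / (M.card : ℝ)) * ∑ m ∈ M, ∑ x : ι,
          |‖invProj ρ m (b x)‖ ^ 2
              / (finrank ℂ (LinearMap.range (invProj ρ m)) : ℝ)
            - 1 / (finrank ℂ U : ℝ)|

lemma tm_le_two {ι : Type*} [Fintype ι] (b : OrthonormalBasis ι ℂ U)
    {ρ : Representation ℂ (Fin k → G) U} (hu : IsUnitaryRep ρ)
    {M : Finset G} (hinv : ∀ m ∈ M, m * m = 1 ∧ m ≠ 1) : tm b ρ M ≤ 2 := by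
  have h1 : ∀ m ∈ M, ∑ x : ι, |‖invProj ρ m (b x)‖ ^ 2
              / (finrank ℂ (LinearMap.range (invProj ρ m)) : ℝ)
            - 1 / (finrank ℂ U : ℝ)| ≤ 2 := by
    intro m hm
    have h2 : ∀ x ∈ (Finset.univ : Finset ι), |‖invProj ρ m (b x)‖ ^ 2
              / (finrank ℂ (LinearMap.range (invProj ρ m)) : ℝ)
            - 1 / (finrank ℂ U : ℝ)| ≤ ‖invProj ρ m (b x)‖ ^ 2
              / (finrank ℂ (LinearMap.range (invProj ρ m)) : ℝ) + 1 / (finrank ℂ U : ℝ) := by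
      intro x _
      refine (abs_sub _ _).trans (le_of_eq ?_)
      rw [abs_of_nonneg (by positivity), abs_of_nonneg (by positivity)]
    refine (Finset.sum_le_sum h2).trans ?_
    rw [Finset.sum_add_distrib, ← Finset.sum_div, sum_norm_sq_proj b _
      (invProj_symm hu (hinv m hm).1) (invProj_idem ρ (hinv m hm).1)]
    have h3 : ∑ x : ι, 1 / (finrank ℂ U : ℝ) = (finrank ℂ U : ℝ) / finrank ℂ U := by
      rw [Finset.sum_const, Finset.card_univ, ← finrank_eq_card_basis b.toBasis, nsmul_eq_mul]
      ring
    rw [h3]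
    linarith [div_self_le_one (finrank ℂ U : ℝ),
      div_self_le_one (finrank ℂ (LinearMap.range (invProj ρ m)) : ℝ)]
  have h4 := Finset.sum_le_sum h1
  rw [Finset.sum_const, nsmul_eq_mul] at h4
  rw [tm]
  refine (mul_le_mul_of_nonneg_left h4 (by positivity)).trans ?_
  rw [← mul_assoc, one_div_mul_eq_div]
  linarith [div_self_le_one (M.card : ℝ)]

lemma tm_good {ι : Type*} [Fintype ι] (b : OrthonormalBasis ι ℂ U)
    {ρ : Representation ℂ (Fin k → G) U} (hi : IsIrreducibleRep ρ) (hu : IsUnitaryRep ρ)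
    {M : Finset G} {m₀ : G} (hm₀ : m₀ ∈ M) (hM : ∀ m : G, m ∈ M ↔ IsConj m₀ m)
    (hinv : ∀ m ∈ M, m * m = 1 ∧ m ≠ 1) {lam : ℝ} (hlam1 : lam < 1)
    (hgood : ∀ l, ‖om ρ m₀ l‖ ≤ lam) :
    tm b ρ M ≤ ((1 - lam) ^ k)⁻¹ * ∑ I ∈ Finset.univ.erase ∅, √(qq b ρ M I) := by
  have hd : (0:ℝ) < finrank ℂ U := by exact_mod_cast irr_finrank_pos hi
  have hMc : (0:ℝ) < M.card := by exact_mod_cast Finset.card_pos.2 ⟨m₀, hm₀⟩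
  have hl : 0 < (1 - lam) ^ k := pow_pos (by linarith) k
  have hcard : Fintype.card ι = finrank ℂ U := (finrank_eq_card_basis b.toBasis).symm
  set d : ℝ := ((finrank ℂ U : ℕ) : ℝ) with hdd
  set c : Finset (Fin k) → ℂ := fun I => ∏ l ∈ I, om ρ m₀ l with hc
  set X : G → Finset (Fin k) → ι → ℂ := fun m I x => ⟪b x, ρ (onI m I) (b x)⟫_ℂ with hX
  have hpt : ∀ m ∈ M, ∀ x, |‖invProj ρ m (b x)‖ ^ 2
              / (finrank ℂ (LinearMap.range (invProj ρ m)) : ℝ) - 1 / d| ≤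
      ((1 - lam) ^ k)⁻¹ * (1 / d * ∑ I ∈ Finset.univ.erase ∅, ‖X m I x - c I‖) := by
    intro m hm x
    have hr := rank_lower hi hu hM hm (hinv m hm).1 hlam1 hgood
    have hrc := rank_invProj hi hu hM hm (hinv m hm).1
    have hnc := norm_invProj hu (hinv m hm).1 (b x)
    set r : ℝ := ((finrank ℂ (LinearMap.range (invProj ρ m)) : ℕ) : ℝ) with hrr
    have hr0 : 0 < r := lt_of_lt_of_le (by positivity) hr
    have h1 : ‖invProj ρ m (b x)‖ ^ 2 / r - 1 / d = (‖invProj ρ m (b x)‖ ^ 2 - r / d) / r := by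
      field_simp
    have h2 : ((‖invProj ρ m (b x)‖ ^ 2 - r / d : ℝ) : ℂ) =
        ((2:ℂ) ^ k)⁻¹ * ∑ I ∈ Finset.univ.erase ∅, (X m I x - c I) := by
      have h3 : ((r / d : ℝ) : ℂ) = ((2:ℂ) ^ k)⁻¹ * ∑ I, c I := by
        have hd' : (finrank ℂ U : ℂ) ≠ 0 := by
          have := irr_finrank_pos hi
          exact_mod_cast this.ne'
        rw [Complex.ofReal_div, hrr, hdd, Complex.ofReal_natCast, Complex.ofReal_natCast, hrc]
        field_simp
        rfl
      rw [Complex.ofReal_sub, hnc, h3, ← mul_sub, ← Finset.sum_sub_distrib,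
        Finset.sum_erase]
      simp [onI_empty, hc, hX]
    have h4 : |‖invProj ρ m (b x)‖ ^ 2 - r / d| ≤
        ((2:ℝ) ^ k)⁻¹ * ∑ I ∈ Finset.univ.erase ∅, ‖X m I x - c I‖ := by
      rw [← Real.norm_eq_abs, ← Complex.norm_real, h2, norm_mul, norm_inv, norm_pow,
        Complex.norm_ofNat]
      exact mul_le_mul_of_nonneg_left (norm_sum_le _ _) (by positivity)
    rw [h1, abs_div, abs_of_pos hr0, div_le_iff₀ hr0]
    refine h4.trans ?_
    set Y := ∑ I ∈ Finset.univ.erase ∅, ‖X m I x - c I‖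
    have hY : 0 ≤ Y := Finset.sum_nonneg fun _ _ => norm_nonneg _
    calc ((2:ℝ) ^ k)⁻¹ * Y = ((1 - lam) ^ k)⁻¹ * (1 / d * Y) * (((2:ℝ) ^ k)⁻¹ * (d * (1 - lam) ^ k)) := by
          field_simp
      _ ≤ _ := mul_le_mul_of_nonneg_left hr (by positivity)
  have hI : ∀ I : Finset (Fin k), ∑ m ∈ M, ∑ x, ‖X m I x - c I‖ ≤ M.card * d * √(qq b ρ M I) := by
    intro I
    have h1 := sum_le_sqrt (M ×ˢ (Finset.univ : Finset ι)) (fun p => ‖X p.1 I p.2 - c I‖)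
    rw [Finset.sum_product, Finset.sum_product, Finset.card_product, Finset.card_univ, hcard] at h1
    refine h1.trans ?_
    have h2 : ∑ m ∈ M, ∑ x, ‖X m I x - c I‖ ^ 2 ≤ ∑ m ∈ M, ∑ x, ‖X m I x‖ ^ 2 := by
      refine Finset.sum_le_sum fun m hm => var_le _ _ ?_
      rw [hcard, ← char_prod hi hM hm, repChar_eq_sum b]
    apply Real.sqrt_le_iff.2 ⟨by positivity, ?_⟩
    rw [mul_pow, Real.sq_sqrt (by rw [qq]; positivity), qq]
    push_cast
    rw [← hdd]
    calc (M.card : ℝ) * d * ∑ m ∈ M, ∑ x, ‖X m I x - c I‖ ^ 2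
        ≤ M.card * d * ∑ m ∈ M, ∑ x, ‖X m I x‖ ^ 2 := mul_le_mul_of_nonneg_left h2 (by positivity)
      _ = _ := by field_simp; rfl
  rw [tm]
  have h5 : ∑ m ∈ M, ∑ x : ι, |‖invProj ρ m (b x)‖ ^ 2
              / (finrank ℂ (LinearMap.range (invProj ρ m)) : ℝ) - 1 / d| ≤
      ((1 - lam) ^ k)⁻¹ * (1 / d * ∑ I ∈ Finset.univ.erase ∅, (M.card * d * √(qq b ρ M I))) := by
    refine (Finset.sum_le_sum fun m hm => Finset.sum_le_sum fun x _ => hpt m hm x).trans ?_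
    simp only [← Finset.mul_sum]
    refine mul_le_mul_of_nonneg_left (mul_le_mul_of_nonneg_left ?_ (by positivity)) (by positivity)
    have : ∀ m ∈ M, ∑ x, ∑ I ∈ Finset.univ.erase ∅, ‖X m I x - c I‖ =
        ∑ I ∈ Finset.univ.erase ∅, ∑ x, ‖X m I x - c I‖ := fun m _ => Finset.sum_comm
    rw [Finset.sum_congr rfl this, Finset.sum_comm, Finset.mul_sum]
    exact Finset.sum_le_sum fun I _ => hI I
  refine (mul_le_mul_of_nonneg_left h5 (by positivity)).trans (le_of_eq ?_)
  rw [← Finset.mul_sum]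
  field_simp

end good
end S15

namespace S15
open Module
set_option linter.unusedSectionVars false

section fin
variable {G : Type*} [Group G] [Fintype G] {k : ℕ}
variable {U : Type*} [NormedAddCommGroup U] [InnerProductSpace ℂ U] [FiniteDimensional ℂ U]
variable {J : Type*} [Fintype J]
    {W : J → Type*} [∀ j, NormedAddCommGroup (W j)] [∀ j, InnerProductSpace ℂ (W j)]
    [∀ j, FiniteDimensional ℂ (W j)]
    {σ : ∀ j, Representation ℂ G (W j)}
variable {T : Type*} [Fintype T]
    {V : T → Type*} [∀ i, NormedAddCommGroup (V i)] [∀ i, InnerProductSpace ℂ (V i)]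
    [∀ i, FiniteDimensional ℂ (V i)]
    {ρ : ∀ i, Representation ℂ (Fin k → G) (V i)}

lemma counting (hfam : IsCompleteFamily W σ) (hfam' : IsCompleteFamily V ρ)
    {I : Finset (Fin k)} (hI : I.Nonempty) {κ : T → Type*} [∀ i, Fintype (κ i)]
    (t : ∀ i, κ i → J)
    (hc : ∀ i g, repChar (restr (ρ i) I) g = ∑ a, repChar (σ (t i a)) g) (w : J → ℝ) :
    ∑ i, (finrank ℂ (V i) : ℝ) * ∑ a, w (t i a) =
      (Fintype.card G : ℝ) ^ k / Fintype.card G * ∑ j, w j * finrank ℂ (W j) := by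
  classical
  have hG : (Fintype.card G : ℝ) ≠ 0 := by simp
  rw [div_mul_eq_mul_div, eq_div_iff hG, mul_comm]
  have h1 : ∀ i, (Fintype.card G : ℂ) * ∑ a, (w (t i a) : ℂ) = 
      ∑ j, (w j : ℂ) * ∑ g, starRingEnd ℂ (repChar (σ j) g) * repChar (restr (ρ i) I) g :=
    fun i => (mult hfam (t i) _ (hc i) (fun j => (w j : ℂ))).symm
  have h2 : (Fintype.card G : ℂ) * ∑ i, (finrank ℂ (V i) : ℂ) * ∑ a, (w (t i a) : ℂ) =
      (Fintype.card G : ℂ) ^ k * ∑ j, (w j : ℂ) * (finrank ℂ (W j) : ℂ) := by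
    calc _ = ∑ i, (finrank ℂ (V i) : ℂ) * ((Fintype.card G : ℂ) * ∑ a, (w (t i a) : ℂ)) := by
          rw [Finset.mul_sum]; exact Finset.sum_congr rfl fun i _ => by ring
      _ = ∑ j, (w j : ℂ) * ∑ g, starRingEnd ℂ (repChar (σ j) g) *
            ∑ i, (finrank ℂ (V i) : ℂ) * repChar (ρ i) (onI g I) := by
          simp only [h1, Finset.mul_sum]
          rw [Finset.sum_comm]
          refine Finset.sum_congr rfl fun j _ => ?_
          rw [Finset.sum_comm]
          refine Finset.sum_congr rfl fun g _ => Finset.sum_congr rfl fun i _ => ?_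
          have : repChar (restr (ρ i) I) g = repChar (ρ i) (onI g I) := rfl
          rw [this]; ring
      _ = _ := by
          simp only [plancherel hfam', onI_eq_one hI, mul_ite, mul_zero, Finset.sum_ite_eq',
            Finset.mem_univ, if_true, repChar_one, map_natCast]
          rw [Finset.mul_sum]
          refine Finset.sum_congr rfl fun j _ => ?_
          simp
          ring
  exact_mod_cast h2

lemma bad_types {τ : Representation ℂ (Fin k → G) U} (hi : IsIrreducibleRep τ)
    {M : Finset G} {m₀ : G} (hm₀ : m₀ ∈ M) (hM : ∀ m : G, m ∈ M ↔ IsConj m₀ m)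
    (hfam : IsCompleteFamily W σ) 
    (Λ : Finset J) {lam : ℝ} 
    (hΛ : ∀ j ∉ Λ, ‖repChar (σ j) m₀‖ ≤ lam * (finrank ℂ (W j) : ℝ))
    {l : Fin k} {κ : Type*} {S : κ → Subrepresentation (restr τ {l})} {t : κ → J}
    (hSi : ∀ a, IsIrreducibleRep (S a).toRepresentation)
    (hSt : ∀ a, RepIso (S a).toRepresentation (σ (t a)))
    (hbad : ¬ ‖om τ m₀ l‖ ≤ lam) (a : κ) : t a ∈ Λ := by
  classical
  by_contra hta
  apply hbad
  have hd : (0:ℝ) < finrank ℂ (W (t a)) := by exact_mod_cast fam_finrank_pos hfam _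
  have hMc : (M.card : ℂ) ≠ 0 := by
    have := Finset.card_ne_zero_of_mem hm₀
    exact_mod_cast this
  obtain ⟨v, hv⟩ := (hSi a).1
  have h1 := class_scalar (hSi a) (fun g => if g ∈ M then 1 else 0) (indM_class hM)
  simp only [repIso_char (hSt a), repIso_finrank (hSt a), ite_smul, one_smul, zero_smul, ite_mul,
    one_mul, zero_mul, Finset.sum_ite_mem, Finset.univ_inter] at h1
  rw [Finset.sum_congr rfl fun m hm => char_M hM (σ (t a)) hm] at h1
  have h2 := congrArg (fun T : (S a).toSubmodule →ₗ[ℂ] (S a).toSubmodule => ((T v : _) : U)) h1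
  have h3 := LinearMap.congr_fun (avg_scalar hi hM l) (v : U)
  simp only [LinearMap.sum_apply, LinearMap.smul_apply, Module.End.one_apply,
    AddSubmonoidClass.coe_finset_sum, Submodule.coe_smul] at h2 h3
  have h4 : ∑ m ∈ M, (((S a).toRepresentation m v : (S a).toSubmodule) : U) =
      ∑ m ∈ M, τ (onI m {l}) (v : U) := rfl
  rw [h4, h3] at h2
  have hv' : (v : U) ≠ 0 := fun h => hv (Subtype.ext h)
  have h5 := smul_left_injective ℂ hv' h2
  rw [Finset.sum_const, nsmul_eq_mul, mul_div_assoc] at h5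
  have h6 := mul_left_cancel₀ hMc h5
  rw [h6, norm_div, Complex.norm_natCast, div_le_iff₀ hd]
  exact hΛ _ hta

lemma final_bound (hfam : IsCompleteFamily W σ) (hfam' : IsCompleteFamily V ρ)
    {M : Finset G} {m₀ : G} (hm₀ : m₀ ∈ M) (hM : ∀ m : G, m ∈ M ↔ IsConj m₀ m)
    (hinv : ∀ m ∈ M, m * m = 1 ∧ m ≠ 1)
    {ι : T → Type*} [∀ i, Fintype (ι i)] (B : ∀ i, OrthonormalBasis (ι i) ℂ (V i))
    (Λ : Finset J) {lam : ℝ} (hlam0 : 0 ≤ lam) (hlam1 : lam < 1)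
    (hΛ : ∀ j ∉ Λ, ‖repChar (σ j) m₀‖ ≤ lam * (finrank ℂ (W j) : ℝ)) :
    ∑ i, (finrank ℂ (V i) : ℝ) ^ 2 / (Fintype.card G : ℝ) ^ k * tm (B i) (ρ i) M ≤
      2 ^ k * (((1 - lam) ^ k)⁻¹ *
            Real.sqrt (lam +
              (∑ j ∈ Λ, (finrank ℂ (W j) : ℝ) ^ 2 / (Fintype.card G : ℝ)) *
                ∑ j, (finrank ℂ (W j) : ℝ))
          + 3 * (lam + ∑ j ∈ Λ, (finrank ℂ (W j) : ℝ) ^ 2 / (Fintype.card G : ℝ))) := by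
  classical
  choose κ hκ S t hSi hSt hc hdec using fun (i : T) (I : Finset (Fin k)) =>
    decomp (restr_unitary (hfam'.1 i) I) hfam
  have hG : (0:ℝ) < Fintype.card G := by exact_mod_cast Fintype.card_pos
  have hMc : (0:ℝ) < M.card := by exact_mod_cast Finset.card_pos.2 ⟨m₀, hm₀⟩
  have hd : ∀ i, (0:ℝ) < finrank ℂ (V i) := fun i => by exact_mod_cast fam_finrank_pos hfam' i
  set n : ℝ := (Fintype.card G : ℝ) with hn
  set w : T → ℝ := fun i => (finrank ℂ (V i) : ℝ) ^ 2 / n ^ k with hw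
  have hw0 : ∀ i, 0 ≤ w i := fun i => by positivity
  set P : ℝ := ∑ j ∈ Λ, (finrank ℂ (W j) : ℝ) ^ 2 / n with hP
  have hP0 : 0 ≤ P := Finset.sum_nonneg fun _ _ => by positivity
  set D : ℝ := ∑ j, (finrank ℂ (W j) : ℝ) with hD
  have hw1 : ∑ i, w i = 1 := by
    have := plancherel hfam' 1
    simp only [repChar_one, if_true, Fintype.card_pi, Finset.prod_const, Finset.card_univ,
      Fintype.card_fin] at this
    have h2 : ∑ i, (finrank ℂ (V i) : ℝ) * (finrank ℂ (V i) : ℝ) = n ^ k := by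
      rw [hn]; exact_mod_cast this
    simp only [hw, ← Finset.sum_div, pow_two, h2]
    exact div_self (by positivity)
  -- mean of q
  have hq : ∀ I : Finset (Fin k), I.Nonempty → ∑ i, w i * qq (B i) (ρ i) M I ≤ lam + P * D := by
    intro I hI
    have h1 : ∀ i, w i * qq (B i) (ρ i) M I ≤ lam * w i + (P * n / n ^ k) *
        (finrank ℂ (V i) * ∑ a : κ i I, (1:ℝ)) := by
      intro i
      have h2 := rep_bound hfam hM Λ hlam0 hΛ (restr_unitary (hfam'.1 i) I) (hSi i I) (hdec i I)
        (B i)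
      have h3 : qq (B i) (ρ i) M I ≤ (M.card * (lam * finrank ℂ (V i) +
          (∑ j ∈ Λ, (finrank ℂ (W j) : ℝ) ^ 2) * Fintype.card (κ i I))) /
            (M.card * finrank ℂ (V i)) :=
        div_le_div_of_nonneg_right h2 (by positivity)
      have h4 : ∑ j ∈ Λ, (finrank ℂ (W j) : ℝ) ^ 2 = P * n := by
        rw [hP, ← Finset.sum_div]; field_simp
      rw [h4] at h3
      refine (mul_le_mul_of_nonneg_left h3 (hw0 i)).trans (le_of_eq ?_)
      have := hd i
      simp only [hw, Finset.sum_const, Finset.card_univ, nsmul_eq_mul, mul_one]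
      field_simp
    refine (Finset.sum_le_sum fun i _ => h1 i).trans (le_of_eq ?_)
    rw [Finset.sum_add_distrib, ← Finset.mul_sum, hw1, ← Finset.mul_sum]
    have h5 := counting hfam hfam' hI (fun i => t i I) (fun i => hc i I) (fun _ => 1)
    simp only [one_mul] at h5
    rw [h5, ← hD, ← hn]
    field_simp
  -- mean of the root
  have hsq : ∀ I : Finset (Fin k), I.Nonempty →
      ∑ i, w i * √(qq (B i) (ρ i) M I) ≤ √(lam + P * D) := by
    intro I hI
    apply Real.le_sqrt_of_sq_le
    refine le_trans ?_ (hq I hI)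
    have h2 := Finset.sum_sq_le_sum_mul_sum_of_sq_le_mul Finset.univ
        (r := fun i => w i * √(qq (B i) (ρ i) M I)) (f := w)
        (g := fun i => w i * qq (B i) (ρ i) M I) (fun i _ => hw0 i)
        (fun i _ => mul_nonneg (hw0 i) (by rw [qq]; positivity)) (by
          intro i _
          rw [mul_pow, Real.sq_sqrt (by rw [qq]; positivity)]
          exact le_of_eq (by ring))
    rwa [hw1, one_mul] at h2
  -- bad probability
  have hbad : ∀ l : Fin k, ∑ i, w i * (if ‖om (ρ i) m₀ l‖ ≤ lam then 0 else 1) ≤ P := by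
    intro l
    have h5 := counting hfam hfam' (Finset.singleton_nonempty l) (fun i => t i {l})
      (fun i => hc i {l}) (fun j => if j ∈ Λ then (finrank ℂ (W j) : ℝ) else 0)
    have h6 : ∀ i, w i * (if ‖om (ρ i) m₀ l‖ ≤ lam then 0 else 1) ≤
        1 / n ^ k * (finrank ℂ (V i) *
          ∑ a : κ i {l}, if t i {l} a ∈ Λ then (finrank ℂ (W (t i {l} a)) : ℝ) else 0) := by
      intro i
      split_ifs with hb
      · rw [mul_zero]
        refine mul_nonneg (by positivity) (mul_nonneg (by positivity) 
          (Finset.sum_nonneg fun a _ => ?_))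
        split_ifs <;> positivity
      · have h7 : ∀ a : κ i {l}, t i {l} a ∈ Λ :=
          bad_types (hfam'.2.1 i) hm₀ hM hfam Λ hΛ (hSi i {l}) (hSt i {l}) hb
        have h8 := hc i {l} 1
        simp only [repChar_one] at h8
        have h9 : (finrank ℂ (V i) : ℝ) = ∑ a, (finrank ℂ (W (t i {l} a)) : ℝ) := by
          exact_mod_cast h8
        simp only [h7, if_true]
        rw [← h9]
        simp only [hw]
        exact le_of_eq (by ring)
    refine (Finset.sum_le_sum fun i _ => h6 i).trans (le_of_eq ?_)
    rw [← Finset.mul_sum, h5]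
    simp only [ite_mul, zero_mul, Finset.sum_ite_mem, Finset.univ_inter]
    rw [hP, ← Finset.sum_div]
    simp only [pow_two]
    rw [← hn]
    field_simp
  -- pointwise
  have hpt : ∀ i, tm (B i) (ρ i) M ≤
      ((1 - lam) ^ k)⁻¹ * ∑ I ∈ Finset.univ.erase ∅, √(qq (B i) (ρ i) M I) +
      2 * ∑ l : Fin k, (if ‖om (ρ i) m₀ l‖ ≤ lam then (0:ℝ) else 1) := by
    intro i
    have hl : 0 < (1 - lam) ^ k := pow_pos (by linarith) k
    have hn0 : ∀ l ∈ (Finset.univ : Finset (Fin k)),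
        (0:ℝ) ≤ (if ‖om (ρ i) m₀ l‖ ≤ lam then (0:ℝ) else 1) := by
      intro l _; split_ifs <;> norm_num
    by_cases hg : ∀ l, ‖om (ρ i) m₀ l‖ ≤ lam
    · have := tm_good (B i) (hfam'.2.1 i) (hfam'.1 i) hm₀ hM hinv hlam1 hg
      linarith [Finset.sum_nonneg hn0]
    · push Not at hg
      obtain ⟨l, hl'⟩ := hg
      have h1 := tm_le_two (B i) (hfam'.1 i) hinv
      have h2 := Finset.single_le_sum hn0 (Finset.mem_univ l)
      rw [if_neg (not_le.2 hl')] at h2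
      have h3 : 0 ≤ ((1 - lam) ^ k)⁻¹ * ∑ I ∈ Finset.univ.erase ∅, √(qq (B i) (ρ i) M I) := by
        positivity
      linarith
  have hl : 0 < (1 - lam) ^ k := pow_pos (by linarith) k
  have htot : ∑ i, w i * tm (B i) (ρ i) M ≤
      ((1 - lam) ^ k)⁻¹ * ∑ I ∈ (Finset.univ : Finset (Finset (Fin k))).erase ∅, √(lam + P * D) +
        2 * ∑ l : Fin k, P := by
    refine (Finset.sum_le_sum fun i _ => mul_le_mul_of_nonneg_left (hpt i) (hw0 i)).trans ?_
    simp only [mul_add, Finset.sum_add_distrib]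
    refine add_le_add ?_ ?_
    · have e : ∑ i, w i * (((1 - lam) ^ k)⁻¹ * ∑ I ∈ Finset.univ.erase ∅, √(qq (B i) (ρ i) M I)) =
          ((1 - lam) ^ k)⁻¹ * ∑ I ∈ Finset.univ.erase ∅, ∑ i, w i * √(qq (B i) (ρ i) M I) := by
        rw [Finset.sum_comm, Finset.mul_sum]
        refine Finset.sum_congr rfl fun i _ => ?_
        rw [← Finset.mul_sum]; ring
      rw [e]
      refine mul_le_mul_of_nonneg_left (Finset.sum_le_sum fun I hI => hsq I ?_) (by positivity)
      exact Finset.nonempty_iff_ne_empty.2 (Finset.ne_of_mem_erase hI)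
    · have e : ∑ i, w i * (2 * ∑ l : Fin k, (if ‖om (ρ i) m₀ l‖ ≤ lam then (0:ℝ) else 1)) =
          2 * ∑ l, ∑ i, w i * (if ‖om (ρ i) m₀ l‖ ≤ lam then (0:ℝ) else 1) := by
        rw [Finset.sum_comm, Finset.mul_sum]
        refine Finset.sum_congr rfl fun i _ => ?_
        rw [← Finset.mul_sum]; ring
      rw [e]
      exact mul_le_mul_of_nonneg_left (Finset.sum_le_sum fun l _ => hbad l) (by norm_num)
  refine htot.trans ?_
  have hc1 : (((Finset.univ : Finset (Finset (Fin k))).erase ∅).card : ℝ) ≤ 2 ^ k := by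
    have := Finset.card_erase_le (s := (Finset.univ : Finset (Finset (Fin k)))) (a := ∅)
    rw [Finset.card_univ, Fintype.card_finset, Fintype.card_fin] at this
    exact_mod_cast this
  have hk2 : (k:ℝ) ≤ 2 ^ k := by exact_mod_cast Nat.lt_two_pow_self.le
  rw [Finset.sum_const, Finset.sum_const, nsmul_eq_mul, nsmul_eq_mul, Finset.card_univ,
    Fintype.card_fin]
  have hs : 0 ≤ ((1 - lam) ^ k)⁻¹ * √(lam + P * D) := by positivity
  have h2k : (0:ℝ) < 2 ^ k := by positivity
  have e1 := mul_le_mul_of_nonneg_right hc1 hs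
  have e2 := mul_le_mul_of_nonneg_right hk2 hP0
  have e3 : 0 ≤ (2:ℝ) ^ k * P := by positivity
  have e4 : 0 ≤ (2:ℝ) ^ k * lam := by positivity
  linarith

end fin
end S15

/-- (Lemma 10 of the paper.) With `Δ = λ + P(Λ) Σ_j d_j` and
`H_m(i,b) = ‖Π_m^{(i)} b‖² / rank(Π_m^{(i)})` (convention `x/0 = 0`), the Plancherel- and
`m`-average of the ℓ¹-distance `Σ_b |H_m(i,b) − 1/d_i|` is at most
`2^k ((1−λ)^{-k} √Δ + 3(λ + P(Λ)))`. -/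
theorem stmt15 {G : Type*} [Group G] [Fintype G]
    {J : Type*} [Fintype J]
    (W : J → Type*) [∀ j, NormedAddCommGroup (W j)] [∀ j, InnerProductSpace ℂ (W j)]
    [∀ j, FiniteDimensional ℂ (W j)]
    (σ : ∀ j, Representation ℂ G (W j)) (hfam : IsCompleteFamily W σ)
    (M : Finset G) (m₀ : G) (hm₀M : m₀ ∈ M)
    (hM : ∀ m : G, m ∈ M ↔ IsConj m₀ m)
    (hinv : ∀ m ∈ M, m * m = 1 ∧ m ≠ 1)
    {k : ℕ} (hk : 1 ≤ k)
    {T : Type*} [Fintype T]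
    (Vi : T → Type*) [∀ i, NormedAddCommGroup (Vi i)] [∀ i, InnerProductSpace ℂ (Vi i)]
    [∀ i, FiniteDimensional ℂ (Vi i)]
    (ρi : ∀ i, Representation ℂ (Fin k → G) (Vi i)) (hfam' : IsCompleteFamily Vi ρi)
    (ι : T → Type*) [∀ i, Fintype (ι i)] (B : ∀ i, OrthonormalBasis (ι i) ℂ (Vi i))
    (Λ : Finset J) (lam : ℝ) (hlam0 : 0 ≤ lam) (hlam1 : lam < 1)
    (hΛ : ∀ j ∉ Λ, ‖repChar (σ j) m₀‖ ≤ lam * (Module.finrank ℂ (W j) : ℝ)) :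
    ∑ i, (Module.finrank ℂ (Vi i) : ℝ) ^ 2 / (Fintype.card G : ℝ) ^ k *
        ((1 / (M.card : ℝ)) * ∑ m ∈ M, ∑ x : ι i,
          |‖invProj (ρi i) m (B i x)‖ ^ 2
              / (Module.finrank ℂ (LinearMap.range (invProj (ρi i) m)) : ℝ)
            - 1 / (Module.finrank ℂ (Vi i) : ℝ)|)
      ≤ 2 ^ k * (((1 - lam) ^ k)⁻¹ *
            Real.sqrt (lam +
              (∑ j ∈ Λ, (Module.finrank ℂ (W j) : ℝ) ^ 2 / (Fintype.card G : ℝ)) *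
                ∑ j, (Module.finrank ℂ (W j) : ℝ))
          + 3 * (lam + ∑ j ∈ Λ, (Module.finrank ℂ (W j) : ℝ) ^ 2 / (Fintype.card G : ℝ))) := by
  exact S15.final_bound hfam hfam' hm₀M hM hinv B Λ hlam0 hlam1 hΛ
end
end

section
/- There exist real constants C > 0 and c > 0 and a natural number N such that for every n ≥ N the following holds. Let G = Sym(n) be the symmetric group on n letters, let K = (G × G) ⋊ Z₂ with the nontrivial element of Z₂ acting by the swap automorphism, and let M be the conjugacy class in K of the element ((1,1),1), so M = {((α,α⁻¹),1) : α ∈ G}, a conjugacy class of involutions. Let k be a natural number with 1 ≤ k ≤ C·n·log₂(n), let (ρ_i)_{i∈T} be any complete family of irreducibles for K^k, with ρ_i acting on V_i of dimension d_i, and for each i let B_i be any orthonormal basis of V_i. For m ∈ M put Π_m^{(i)} = 2^{-k} Σ_{I ⊆ {1,…,k}} ρ_i(m^I), define H_m(i) = 2^k · d_i · rank(Π_m^{(i)}) / |K|^k (a probability distribution on T for each m), define H_m(i,b) = ‖Π_m^{(i)} b‖² / rank(Π_m^{(i)}) for b ∈ B_i (with the convention x/0 = 0), and let D_m(i) = Σ_{b∈B_i}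 | H_m(i,b) − 1/d_i |. Then (1/|M|) Σ_{m∈M} Σ_{i∈T with D_m(i) > n^{−c·n}} H_m(i) ≤ n^{−c·n}. -/
noncomputable section

open scoped BigOperators InnerProductSpace

noncomputable section

open scoped BigOperators InnerProductSpace

/-- The swap automorphism of `G × G`. -/
def swapAut (G : Type*) [Group G] : MulAut (G × G) := (MulEquiv.prodComm : (G × G) ≃* (G × G))

lemma swapAut_sq (G : Type*) [Group G] : swapAut G * swapAut G = 1 := by
  ext p <;> simp [swapAut, MulAut.mul_apply]

/-- The homomorphism `Z₂ → Aut(G × G)` sending the nontrivial element to the swap. -/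
def swapHom (G : Type*) [Group G] : Multiplicative (ZMod 2) →* MulAut (G × G) where
  toFun t := swapAut G ^ (t.toAdd.val)
  map_one' := by
    show swapAut G ^ ((0 : ZMod 2)).val = 1
    simp
  map_mul' a b := by
    have h2 : ∀ x : ZMod 2, x = 0 ∨ x = 1 := by decide
    have key : ∀ x y : ZMod 2,
        swapAut G ^ (x + y).val = swapAut G ^ x.val * swapAut G ^ y.val := by
      intro x y
      have v00 : ((0 : ZMod 2) + 0).val = 0 := by decide
      have v01 : ((0 : ZMod 2) + 1).val = 1 := by decide
      have v10 : ((1 : ZMod 2) + 0).val = 1 := by decide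
      have v11 : ((1 : ZMod 2) + 1).val = 0 := by decide
      have v0 : (0 : ZMod 2).val = 0 := by decide
      have v1 : (1 : ZMod 2).val = 1 := by decide
      rcases h2 x with hx | hx <;> rcases h2 y with hy | hy <;> subst hx <;> subst hy <;>
        simp [v00, v01, v10, v11, v0, v1, swapAut_sq G]
    exact key a.toAdd b.toAdd

/-- `K = (G × G) ⋊ Z₂`, with `Z₂` acting by the swap automorphism. -/
abbrev wreathZ2 (G : Type*) [Group G] : Type _ :=
  SemidirectProduct (G × G) (Multiplicative (ZMod 2)) (swapHom G)

instance (G : Type*) [Group G] [Fintype G] : Fintype (wreathZ2 G) :=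
  Fintype.ofEquiv ((G × G) × Multiplicative (ZMod 2))
    { toFun := fun p => ⟨p.1, p.2⟩
      invFun := fun x => (x.left, x.right)
      left_inv := fun _ => rfl
      right_inv := fun _ => rfl }


open Classical in
/-- The conjugacy class `M = {((α,α⁻¹),1) : α ∈ G}` of `((1,1),1)` in `K = (G × G) ⋊ Z₂`. -/
def classM (G : Type*) [Group G] [Fintype G] : Finset (wreathZ2 G) :=
  Finset.univ.image (fun α : G => (⟨(α, α⁻¹), Multiplicative.ofAdd 1⟩ : wreathZ2 G))


/-- averaging an operator -/
def avgOp {G V W : Type*} [Group G] [Fintype G] [AddCommGroup V] [Module ℂ V]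
    [AddCommGroup W] [Module ℂ W]
    (ρ : Representation ℂ G V) (σ : Representation ℂ G W) (X : W →ₗ[ℂ] V) : W →ₗ[ℂ] V :=
  ∑ g : G, (ρ g) ∘ₗ X ∘ₗ (σ g⁻¹)

lemma avgOp_comm {G V W : Type*} [Group G] [Fintype G] [AddCommGroup V] [Module ℂ V]
    [AddCommGroup W] [Module ℂ W]
    (ρ : Representation ℂ G V) (σ : Representation ℂ G W) (X : W →ₗ[ℂ] V) (h : G) (w : W) :
    ρ h (avgOp ρ σ X w) = avgOp ρ σ X (σ h w) := by
  simp only [avgOp, LinearMap.sum_apply, LinearMap.comp_apply, map_sum]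
  refine Fintype.sum_equiv (Equiv.mulLeft h) _ _ (fun g => ?_)
  simp only [Equiv.coe_mulLeft, mul_inv_rev, map_mul, Module.End.mul_apply]
  rw [← Module.End.mul_apply (σ h⁻¹), ← map_mul]
  simp

lemma schur_scalar {G V : Type*} [Group G] [AddCommGroup V] [Module ℂ V]
    [FiniteDimensional ℂ V] (ρ : Representation ℂ G V) (hρ : IsIrreducibleRep ρ)
    (X : V →ₗ[ℂ] V) (hX : ∀ h v, ρ h (X v) = X (ρ h v)) : ∃ t : ℂ, ∀ v, X v = t • v := by
  obtain ⟨⟨v0, hv0⟩, hirr⟩ := hρ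
  have : Nontrivial V := ⟨v0, 0, hv0⟩
  obtain ⟨t, ht⟩ := Module.End.exists_eigenvalue (K := ℂ) X
  refine ⟨t, ?_⟩
  rcases hirr (Module.End.eigenspace X t) (fun g v hv => by
    rw [Module.End.mem_eigenspace_iff] at hv ⊢
    rw [← hX, hv, map_smul]) with h | h
  · exact absurd h ht
  · intro v
    have : v ∈ Module.End.eigenspace X t := by rw [h]; trivial
    exact Module.End.mem_eigenspace_iff.mp this

lemma schur_zero {G V W : Type*} [Group G] [AddCommGroup V] [Module ℂ V]
    [AddCommGroup W] [Module ℂ W]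
    (ρ : Representation ℂ G V) (hρ : IsIrreducibleRep ρ)
    (σ : Representation ℂ G W) (hσ : IsIrreducibleRep σ) (hn : ¬ RepIso σ ρ)
    (X : W →ₗ[ℂ] V) (hX : ∀ h v, ρ h (X v) = X (σ h v)) : X = 0 := by
  by_contra hne
  apply hn
  have hk : LinearMap.ker X = ⊥ := by
    rcases hσ.2 (LinearMap.ker X) (fun g v hv => by
      rw [LinearMap.mem_ker] at hv ⊢
      rw [← hX, hv, map_zero]) with h | h
    · exact h
    · exact absurd (LinearMap.ker_eq_top.mp h) hne
  have hr : LinearMap.range X = ⊤ := by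
    rcases hρ.2 (LinearMap.range X) (fun g v hv => by
      obtain ⟨w, rfl⟩ := hv
      exact ⟨σ g w, (hX g w).symm⟩) with h | h
    · exact absurd (LinearMap.range_eq_bot.mp h) hne
    · exact h
  exact ⟨LinearEquiv.ofBijective X ⟨LinearMap.ker_eq_bot.mp hk, LinearMap.range_eq_top.mp hr⟩,
    fun g v => (hX g v).symm⟩

lemma trace_avgOp {G V : Type*} [Group G] [Fintype G] [AddCommGroup V] [Module ℂ V]
    (ρ : Representation ℂ G V) (X : V →ₗ[ℂ] V) :
    LinearMap.trace ℂ V (avgOp ρ ρ X) = (Fintype.card G : ℂ) * LinearMap.trace ℂ V X := by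
  simp only [avgOp, map_sum]
  rw [Finset.sum_congr rfl (g := fun _ => LinearMap.trace ℂ V X)]
  · simp
  · intro g _
    change LinearMap.trace ℂ V (ρ g * (X * ρ g⁻¹)) = _
    rw [LinearMap.trace_mul_comm, mul_assoc, ← map_mul]
    simp

lemma avgOp_scalar {G V : Type*} [Group G] [Fintype G] [AddCommGroup V] [Module ℂ V]
    [FiniteDimensional ℂ V] (ρ : Representation ℂ G V) (hρ : IsIrreducibleRep ρ)
    (X : V →ₗ[ℂ] V) (v : V) : avgOp ρ ρ X v =
      ((Fintype.card G : ℂ) / (Module.finrank ℂ V : ℂ) * LinearMap.trace ℂ V X) • v := by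
  obtain ⟨t, ht⟩ := schur_scalar ρ hρ (avgOp ρ ρ X) (avgOp_comm ρ ρ X)
  have h1 : avgOp ρ ρ X = t • LinearMap.id := by ext w; simp [ht w]
  have h2 := trace_avgOp ρ X
  rw [h1, map_smul, LinearMap.trace_id] at h2
  obtain ⟨⟨v0, hv0⟩, -⟩ := hρ
  have : Nontrivial V := ⟨v0, 0, hv0⟩
  have hd : (Module.finrank ℂ V : ℂ) ≠ 0 := by
    exact_mod_cast (Module.finrank_pos (R := ℂ) (M := V)).ne'
  rw [ht v]
  congr 1
  rw [smul_eq_mul] at h2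
  field_simp
  exact h2

lemma unitary_inv {G V : Type*} [Group G] [NormedAddCommGroup V] [InnerProductSpace ℂ V]
    {ρ : Representation ℂ G V} (h : IsUnitaryRep ρ) (g : G) (v w : V) :
    ⟪v, ρ g⁻¹ w⟫_ℂ = ⟪ρ g v, w⟫_ℂ := by
  rw [← h g v, ← Module.End.mul_apply, ← map_mul]; simp

lemma unitary_norm {G V : Type*} [Group G] [NormedAddCommGroup V] [InnerProductSpace ℂ V]
    {ρ : Representation ℂ G V} (h : IsUnitaryRep ρ) (g : G) (v : V) :
    ‖ρ g v‖ = ‖v‖ := by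
  have := h g v v
  rw [inner_self_eq_norm_sq_to_K, inner_self_eq_norm_sq_to_K] at this
  have h2 : ‖ρ g v‖ ^ 2 = ‖v‖ ^ 2 := by exact_mod_cast this
  exact (pow_left_inj₀ (norm_nonneg _) (norm_nonneg _) two_ne_zero).mp h2

lemma inner_avgOp {G V W : Type*} [Group G] [Fintype G] [NormedAddCommGroup V]
    [InnerProductSpace ℂ V] [NormedAddCommGroup W] [InnerProductSpace ℂ W]
    (ρ : Representation ℂ G V) (σ : Representation ℂ G W)
    (hσ : IsUnitaryRep σ) (a b : V) (c e : W) :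
    ⟪a, avgOp ρ σ ((innerₛₗ ℂ c).smulRight b) e⟫_ℂ =
      ∑ g : G, ⟪a, ρ g b⟫_ℂ * ⟪σ g c, e⟫_ℂ := by
  simp only [avgOp, LinearMap.sum_apply, LinearMap.comp_apply, inner_sum]
  refine Finset.sum_congr rfl (fun g _ => ?_)
  simp [unitary_inv hσ, inner_smul_right, mul_comm]

lemma schur_same {G V : Type*} [Group G] [Fintype G] [NormedAddCommGroup V]
    [InnerProductSpace ℂ V] [FiniteDimensional ℂ V]
    (ρ : Representation ℂ G V) (hu : IsUnitaryRep ρ) (hi : IsIrreducibleRep ρ)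
    (a b c e : V) :
    ∑ g : G, ⟪a, ρ g b⟫_ℂ * ⟪ρ g c, e⟫_ℂ =
      (Fintype.card G : ℂ) / (Module.finrank ℂ V : ℂ) * (⟪c, b⟫_ℂ * ⟪a, e⟫_ℂ) := by
  rw [← inner_avgOp ρ ρ hu, avgOp_scalar ρ hi, inner_smul_right, LinearMap.trace_smulRight]
  simp [mul_assoc]

lemma schur_diff {G V W : Type*} [Group G] [Fintype G] [NormedAddCommGroup V]
    [InnerProductSpace ℂ V] [NormedAddCommGroup W] [InnerProductSpace ℂ W]
    (ρ : Representation ℂ G V) (σ : Representation ℂ G W)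
    (hρ : IsIrreducibleRep ρ) (hσ : IsIrreducibleRep σ)
    (hu : IsUnitaryRep σ) (hn : ¬ RepIso σ ρ) (a b : V) (c e : W) :
    ∑ g : G, ⟪a, ρ g b⟫_ℂ * ⟪σ g c, e⟫_ℂ = 0 := by
  rw [← inner_avgOp ρ σ hu, schur_zero ρ hρ σ hσ hn _ (avgOp_comm ρ σ _)]
  simp

/-- sum of squared diagonal coefficients -/
def coefA {G V : Type*} [Group G] [Fintype G] [NormedAddCommGroup V]
    [InnerProductSpace ℂ V] (ρ : Representation ℂ G V) (v : V) : ℝ :=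
  ∑ g : G, ‖⟪v, ρ g v⟫_ℂ‖ ^ 2

def coefQ {G V : Type*} [Group G] [Fintype G] [NormedAddCommGroup V]
    [InnerProductSpace ℂ V] (ρ : Representation ℂ G V) (v : V) : ℝ :=
  ∑ y : G, ‖∑ x : G, ρ (x * y * x⁻¹) v‖ ^ 2

lemma coefA_irr {G V : Type*} [Group G] [Fintype G] [NormedAddCommGroup V]
    [InnerProductSpace ℂ V] [FiniteDimensional ℂ V]
    (ρ : Representation ℂ G V) (hu : IsUnitaryRep ρ) (hi : IsIrreducibleRep ρ) (v : V) :
    coefA ρ v = (Fintype.card G : ℝ) / (Module.finrank ℂ V : ℝ) * ‖v‖ ^ 4 := by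
  have h := schur_same ρ hu hi v v v v
  have h2 : ∀ g : G, ⟪v, ρ g v⟫_ℂ * ⟪ρ g v, v⟫_ℂ = ((‖⟪v, ρ g v⟫_ℂ‖ ^ 2 : ℝ) : ℂ) := by
    intro g
    rw [← inner_conj_symm (ρ g v) v, RCLike.mul_conj]
    push_cast; rfl
  simp_rw [h2] at h
  rw [inner_self_eq_norm_sq_to_K] at h
  unfold coefA
  apply Complex.ofReal_injective
  push_cast at h ⊢
  rw [h]
  simp only [Complex.coe_algebraMap]
  ring

lemma char_sq {G V : Type*} [Group G] [Fintype G] [NormedAddCommGroup V]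
    [InnerProductSpace ℂ V] [FiniteDimensional ℂ V]
    (ρ : Representation ℂ G V) (hu : IsUnitaryRep ρ) (hi : IsIrreducibleRep ρ) :
    ∑ y : G, ‖LinearMap.trace ℂ V (ρ y)‖ ^ 2 = (Fintype.card G : ℝ) := by
  have e := stdOrthonormalBasis ℂ V
  obtain ⟨⟨v0, hv0⟩, -⟩ := id hi
  have : Nontrivial V := ⟨v0, 0, hv0⟩
  have hd : (Module.finrank ℂ V : ℂ) ≠ 0 := by
    exact_mod_cast (Module.finrank_pos (R := ℂ) (M := V)).ne'
  apply Complex.ofReal_injective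
  push_cast
  have h1 : ∀ y : G, ((‖LinearMap.trace ℂ V (ρ y)‖ : ℂ)) ^ 2 =
      ∑ i, ∑ j, ⟪e i, ρ y (e i)⟫_ℂ * ⟪ρ y (e j), e j⟫_ℂ := by
    intro y
    rw [LinearMap.trace_eq_sum_inner _ e]
    have := RCLike.mul_conj (∑ i, ⟪e i, ρ y (e i)⟫_ℂ)
    rw [map_sum] at this
    simp_rw [inner_conj_symm] at this
    rw [Finset.sum_mul_sum] at this
    exact this.symm
  simp_rw [h1]
  rw [Finset.sum_comm]
  have h2 : ∀ i, ∑ y : G, ∑ j, ⟪e i, ρ y (e i)⟫_ℂ * ⟪ρ y (e j), e j⟫_ℂ =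
      (Fintype.card G : ℂ) / (Module.finrank ℂ V : ℂ) := by
    intro i
    rw [Finset.sum_comm]
    simp_rw [schur_same ρ hu hi]
    rw [← Finset.mul_sum, Finset.sum_eq_single i]
    · simp [e.orthonormal.1]
    · intro j _ hj
      rw [e.orthonormal.2 hj]; simp
    · simp
  simp_rw [h2]
  simp
  field_simp

lemma coefQ_irr {G V : Type*} [Group G] [Fintype G] [NormedAddCommGroup V]
    [InnerProductSpace ℂ V] [FiniteDimensional ℂ V]
    (ρ : Representation ℂ G V) (hu : IsUnitaryRep ρ) (hi : IsIrreducibleRep ρ) (v : V) :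
    coefQ ρ v = (Fintype.card G : ℝ) ^ 3 / (Module.finrank ℂ V : ℝ) ^ 2 * ‖v‖ ^ 2 := by
  unfold coefQ
  have h1 : ∀ y : G, ∑ x : G, ρ (x * y * x⁻¹) v =
      ((Fintype.card G : ℂ) / (Module.finrank ℂ V : ℂ) * LinearMap.trace ℂ V (ρ y)) • v := by
    intro y
    rw [← avgOp_scalar ρ hi]
    simp [avgOp]
  simp_rw [h1, norm_smul, norm_mul, mul_pow]
  rw [← Finset.sum_mul, ← Finset.mul_sum, char_sq ρ hu hi]
  simp only [norm_div, Complex.norm_natCast]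
  ring

/-- restriction to an invariant submodule -/
def subRep {G V : Type*} [Group G] [AddCommGroup V] [Module ℂ V]
    (ρ : Representation ℂ G V) (W : Submodule ℂ V)
    (hW : ∀ (g : G) (v : V), v ∈ W → ρ g v ∈ W) : Representation ℂ G W where
  toFun g := (ρ g).restrict (hW g)
  map_one' := by ext v; simp
  map_mul' a b := by ext v; simp

lemma subRep_coe {G V : Type*} [Group G] [AddCommGroup V] [Module ℂ V]
    (ρ : Representation ℂ G V) (W : Submodule ℂ V)
    (hW : ∀ (g : G) (v : V), v ∈ W → ρ g v ∈ W) (g : G) (w : W) :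
    ((subRep ρ W hW g w : W) : V) = ρ g (w : V) := rfl

lemma subRep_coefA {G V : Type*} [Group G] [Fintype G] [NormedAddCommGroup V]
    [InnerProductSpace ℂ V]
    (ρ : Representation ℂ G V) (W : Submodule ℂ V)
    (hW : ∀ (g : G) (v : V), v ∈ W → ρ g v ∈ W) (w : W) :
    coefA (subRep ρ W hW) w = coefA ρ (w : V) := by
  simp only [coefA, Submodule.coe_inner, subRep_coe]

lemma subRep_coefQ {G V : Type*} [Group G] [Fintype G] [NormedAddCommGroup V]
    [InnerProductSpace ℂ V]
    (ρ : Representation ℂ G V) (W : Submodule ℂ V)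
    (hW : ∀ (g : G) (v : V), v ∈ W → ρ g v ∈ W) (w : W) :
    coefQ (subRep ρ W hW) w = coefQ ρ (w : V) := by
  unfold coefQ
  refine Finset.sum_congr rfl fun y _ => ?_
  have : ((∑ x : G, subRep ρ W hW (x * y * x⁻¹) w : W) : V) = ∑ x : G, ρ (x * y * x⁻¹) (w : V) := by
    rw [Submodule.coe_sum]; rfl
  rw [← this]; rfl

lemma holder_aux {N A1 A2 s1 s2 q1 q2 : ℝ} (hN : 0 ≤ N) (h1 : 0 < s1) (h2 : 0 < s2)
    (hA1 : N * A1 ^ 2 ≤ s1 ^ 3 * q1)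
    (hA2 : N * A2 ^ 2 ≤ s2 ^ 3 * q2) :
    N * ((s1 + s2) * (A1 / s1 + A2 / s2)) ^ 2 ≤ (s1 + s2) ^ 3 * (q1 + q2) := by
  have e1 : N * (A1 ^ 2 / s1 ^ 3) ≤ q1 := by
    rw [← mul_div_assoc, div_le_iff₀ (by positivity)]; linarith
  have e2 : N * (A2 ^ 2 / s2 ^ 3) ≤ q2 := by
    rw [← mul_div_assoc, div_le_iff₀ (by positivity)]; linarith
  have key : (A1 / s1 + A2 / s2) ^ 2 ≤ (s1 + s2) * (A1 ^ 2 / s1 ^ 3 + A2 ^ 2 / s2 ^ 3) := by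
    obtain ⟨u, hu⟩ : ∃ u, u = A1 / s1 := ⟨_, rfl⟩
    obtain ⟨w, hw⟩ : ∃ w, w = A2 / s2 := ⟨_, rfl⟩
    have f1 : A1 ^ 2 / s1 ^ 3 = u ^ 2 / s1 := by rw [hu]; field_simp
    have f2 : A2 ^ 2 / s2 ^ 3 = w ^ 2 / s2 := by rw [hw]; field_simp
    rw [f1, f2, ← hu, ← hw]
    have : (s1 + s2) * (u ^ 2 / s1 + w ^ 2 / s2) - (u + w) ^ 2 = (s2 * u - s1 * w) ^ 2 / (s1 * s2) := by
      field_simp; ring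
    have h3 : 0 ≤ (s2 * u - s1 * w) ^ 2 / (s1 * s2) := by positivity
    linarith
  have hs : 0 < s1 + s2 := by linarith
  calc N * ((s1 + s2) * (A1 / s1 + A2 / s2)) ^ 2
      = (s1 + s2) ^ 2 * N * (A1 / s1 + A2 / s2) ^ 2 := by ring
    _ ≤ (s1 + s2) ^ 2 * N * ((s1 + s2) * (A1 ^ 2 / s1 ^ 3 + A2 ^ 2 / s2 ^ 3)) := by gcongr
    _ = (s1 + s2) ^ 3 * (N * (A1 ^ 2 / s1 ^ 3) + N * (A2 ^ 2 / s2 ^ 3)) := by ring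
    _ ≤ _ := by gcongr

theorem coef_ineq {G : Type*} [Group G] [Fintype G] (n : ℕ) :
    ∀ (V : Type) [NormedAddCommGroup V] [InnerProductSpace ℂ V] [FiniteDimensional ℂ V]
    (ρ : Representation ℂ G V), IsUnitaryRep ρ → Module.finrank ℂ V = n → ∀ v : V,
    (Fintype.card G : ℝ) * coefA ρ v ^ 2 ≤ (‖v‖ ^ 2) ^ 3 * coefQ ρ v := by
  induction n using Nat.strong_induction_on with
  | _ n ih =>
  intro V _ _ _ ρ hu hn v
  by_cases hv : v = 0
  · subst hv; simp [coefA]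
  by_cases hi : IsIrreducibleRep ρ
  · rw [coefA_irr ρ hu hi, coefQ_irr ρ hu hi]
    apply le_of_eq; ring
  have : ∃ W : Submodule ℂ V, (∀ (g : G) (v : V), v ∈ W → ρ g v ∈ W) ∧ W ≠ ⊥ ∧ W ≠ ⊤ := by
    by_contra hcon
    push Not at hcon
    apply hi
    refine ⟨⟨v, hv⟩, fun W hW => ?_⟩
    by_cases hb : W = ⊥
    · exact Or.inl hb
    · exact Or.inr (hcon W hW hb)
  obtain ⟨W, hW, hb, ht⟩ := this
  have hW' : ∀ (g : G) (v : V), v ∈ Wᗮ → ρ g v ∈ Wᗮ := by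
    intro g v hv
    rw [Submodule.mem_orthogonal] at hv ⊢
    intro u hu'
    have := unitary_inv hu g⁻¹ u v
    rw [inv_inv] at this
    rw [this]
    exact hv _ (hW _ _ hu')
  have key : ∀ U : Submodule ℂ V, (hU : ∀ (g : G) (v : V), v ∈ U → ρ g v ∈ U) → U ≠ ⊤ →
      ∀ u ∈ U, (Fintype.card G : ℝ) * coefA ρ u ^ 2 ≤ (‖u‖ ^ 2) ^ 3 * coefQ ρ u := by
    intro U hU hUt u huU
    have := ih (Module.finrank ℂ U) (hn ▸ Submodule.finrank_lt hUt) U (subRep ρ U hU)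
      (fun g a b => hu g a b) rfl ⟨u, huU⟩
    rw [subRep_coefA, subRep_coefQ] at this
    exact this
  have hWt : Wᗮ ≠ ⊤ := by
    intro h
    exact hb ((Submodule.orthogonal_eq_top_iff W).mp h)
  obtain ⟨v1, hv1, v2, hv2, rfl⟩ := Submodule.exists_add_mem_mem_orthogonal (K := W) v
  have k1 := key W hW ht v1 hv1
  have k2 := key Wᗮ hW' hWt v2 hv2
  by_cases hz1 : v1 = 0
  · subst hz1; simpa using k2
  by_cases hz2 : v2 = 0
  · subst hz2; simpa using k1
  have s1 : 0 < ‖v1‖ ^ 2 := by have := norm_pos_iff.mpr hz1; positivity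
  have s2 : 0 < ‖v2‖ ^ 2 := by have := norm_pos_iff.mpr hz2; positivity
  have pyth : ∀ a ∈ W, ∀ b ∈ Wᗮ, ‖a + b‖ ^ 2 = ‖a‖ ^ 2 + ‖b‖ ^ 2 := by
    intro a ha b hb
    have := norm_add_sq_eq_norm_sq_add_norm_sq_of_inner_eq_zero a b (𝕜 := ℂ)
      (Submodule.inner_right_of_mem_orthogonal ha hb)
    simpa [sq] using this
  have hnv := pyth v1 hv1 v2 hv2
  have hQ : coefQ ρ (v1 + v2) = coefQ ρ v1 + coefQ ρ v2 := by
    unfold coefQ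
    rw [← Finset.sum_add_distrib]
    refine Finset.sum_congr rfl (fun y _ => ?_)
    simp only [map_add, Finset.sum_add_distrib]
    exact pyth _ (Submodule.sum_mem _ fun x _ => hW _ _ hv1) _
      (Submodule.sum_mem _ fun x _ => hW' _ _ hv2)
  have hA : coefA ρ (v1 + v2) ≤ (‖v1‖ ^ 2 + ‖v2‖ ^ 2) *
      (coefA ρ v1 / ‖v1‖ ^ 2 + coefA ρ v2 / ‖v2‖ ^ 2) := by
    unfold coefA
    rw [Finset.sum_div, Finset.sum_div, ← Finset.sum_add_distrib, Finset.mul_sum]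
    refine Finset.sum_le_sum (fun g _ => ?_)
    have e1 : ⟪v1 + v2, ρ g (v1 + v2)⟫_ℂ = ⟪v1, ρ g v1⟫_ℂ + ⟪v2, ρ g v2⟫_ℂ := by
      rw [map_add, inner_add_left, inner_add_right, inner_add_right,
        Submodule.inner_right_of_mem_orthogonal hv1 (hW' g _ hv2),
        Submodule.inner_left_of_mem_orthogonal (hW g _ hv1) hv2]
      simp
    rw [e1]
    have e2 := norm_add_le ⟪v1, ρ g v1⟫_ℂ ⟪v2, ρ g v2⟫_ℂ
    generalize ‖⟪v1, ρ g v1⟫_ℂ‖ = a at *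
    generalize ‖⟪v2, ρ g v2⟫_ℂ‖ = b at *
    generalize ‖v1‖ ^ 2 = s at *
    generalize ‖v2‖ ^ 2 = t at *
    have e3 : ‖⟪v1, ρ g v1⟫_ℂ + ⟪v2, ρ g v2⟫_ℂ‖ ^ 2 ≤ (a + b) ^ 2 := by gcongr
    have e4 : (s + t) * (a ^ 2 / s + b ^ 2 / t) - (a + b) ^ 2 = (t * a - s * b) ^ 2 / (s * t) := by
      field_simp; ring
    have h3 : 0 ≤ (t * a - s * b) ^ 2 / (s * t) := by positivity
    linarith
  have hA0 : 0 ≤ coefA ρ (v1 + v2) := by unfold coefA; positivity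
  rw [hnv, hQ]
  refine le_trans ?_ (holder_aux (Nat.cast_nonneg _) s1 s2 k1 k2)
  gcongr

lemma cs_family {V S : Type*} [Fintype S] [NormedAddCommGroup V] [InnerProductSpace ℂ V]
    (b : V) (hb : ‖b‖ = 1) (v : S → V) :
    (∑ s, ‖⟪b, v s⟫_ℂ‖ ^ 2) ^ 2 ≤ ∑ s, ∑ t, ‖⟪v s, v t⟫_ℂ‖ ^ 2 := by
  set X := ∑ s, ‖⟪b, v s⟫_ℂ‖ ^ 2 with hX
  have hX0 : 0 ≤ X := by positivity
  set w := ∑ s, ⟪v s, b⟫_ℂ • v s with hw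
  have h1 : ⟪b, w⟫_ℂ = (X : ℂ) := by
    rw [hw, inner_sum, hX]
    push_cast
    refine Finset.sum_congr rfl (fun s _ => ?_)
    rw [inner_smul_right, mul_comm, ← inner_conj_symm (v s) b, RCLike.mul_conj]
    rfl
  have h2 : X ≤ ‖w‖ := by
    have := norm_inner_le_norm (𝕜 := ℂ) b w
    rw [h1, hb, one_mul, Complex.norm_real] at this
    exact le_trans (le_abs_self _) this
  have h3 : ‖w‖ ^ 2 ≤ ∑ p : S × S, (‖⟪b, v p.1⟫_ℂ‖ * ‖⟪b, v p.2⟫_ℂ‖) * ‖⟪v p.1, v p.2⟫_ℂ‖ := by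
    have : ((‖w‖ ^ 2 : ℝ) : ℂ) = ⟪w, w⟫_ℂ := by
      rw [inner_self_eq_norm_sq_to_K]; push_cast; rfl
    have h4 : ‖w‖ ^ 2 = ‖⟪w, w⟫_ℂ‖ := by
      rw [← this, Complex.norm_real, Real.norm_of_nonneg (by positivity)]
    rw [h4]
    nth_rewrite 1 [hw]
    rw [hw, sum_inner]
    simp_rw [inner_sum]
    rw [← Fintype.sum_prod_type']
    refine (norm_sum_le _ _).trans (Finset.sum_le_sum fun p _ => ?_)
    rw [inner_smul_left, inner_smul_right, norm_mul, norm_mul, RCLike.norm_conj,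
      norm_inner_symm b, norm_inner_symm b]
    rw [mul_assoc]
  have h5 := Finset.sum_mul_sq_le_sq_mul_sq Finset.univ
    (fun p : S × S => ‖⟪b, v p.1⟫_ℂ‖ * ‖⟪b, v p.2⟫_ℂ‖) (fun p : S × S => ‖⟪v p.1, v p.2⟫_ℂ‖)
  have h6 : ∑ p : S × S, (‖⟪b, v p.1⟫_ℂ‖ * ‖⟪b, v p.2⟫_ℂ‖) ^ 2 = X ^ 2 := by
    rw [sq X, hX, Finset.sum_mul_sum, ← Fintype.sum_prod_type']
    simp_rw [mul_pow]
  have h7 : ∑ p : S × S, ‖⟪v p.1, v p.2⟫_ℂ‖ ^ 2 = ∑ s, ∑ t, ‖⟪v s, v t⟫_ℂ‖ ^ 2 := by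
    rw [← Fintype.sum_prod_type']
  simp only [h6, h7] at h5
  set Y := ∑ s, ∑ t, ‖⟪v s, v t⟫_ℂ‖ ^ 2
  have h8 : X ^ 2 ≤ ‖w‖ ^ 2 := by gcongr
  have h9 : (X ^ 2) ^ 2 ≤ X ^ 2 * Y := by
    refine le_trans ?_ h5
    have := h8.trans h3
    gcongr
  by_cases hx : X = 0
  · rw [hx]
    have : 0 ≤ Y := Finset.sum_nonneg fun s _ => Finset.sum_nonneg fun t _ => by positivity
    simpa using this
  · have : 0 < X ^ 2 := by positivity
    nlinarith

lemma cs_rep {G V S : Type*} [Group G] [Fintype S] [NormedAddCommGroup V] [InnerProductSpace ℂ V]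
    (ρ : Representation ℂ G V) (hu : IsUnitaryRep ρ) (b : V) (hb : ‖b‖ = 1) (c : S → G) :
    (∑ s, ‖⟪b, ρ (c s) b⟫_ℂ‖ ^ 2) ^ 2 ≤
      ∑ s, ∑ t, ‖⟪b, ρ ((c s)⁻¹ * c t) b⟫_ℂ‖ ^ 2 := by
  refine (cs_family b hb (fun s => ρ (c s) b)).trans (le_of_eq ?_)
  refine Finset.sum_congr rfl fun s _ => Finset.sum_congr rfl fun t _ => ?_
  rw [map_mul, Module.End.mul_apply, unitary_inv hu]

lemma jens {J : Type*} [Fintype J] (w X : J → ℝ) (hw : ∀ j, 0 ≤ w j) (h1 : ∑ j, w j ≤ 1) :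
    (∑ j, w j * X j) ^ 2 ≤ ∑ j, w j * X j ^ 2 := by
  have := Finset.sum_sq_le_sum_mul_sum_of_sq_le_mul Finset.univ (r := fun j => w j * X j)
    (f := w) (g := fun j => w j * X j ^ 2) (fun j _ => hw j)
    (fun j _ => mul_nonneg (hw j) (sq_nonneg _)) (fun j _ => le_of_eq (by ring))
  refine this.trans ?_
  have h0 : 0 ≤ ∑ j, w j * X j ^ 2 := Finset.sum_nonneg fun j _ => mul_nonneg (hw j) (sq_nonneg _)
  nlinarith

lemma count_conv {L S : Type*} [Group L] [Fintype L] [DecidableEq L] [Fintype S] (c : S → L)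
    (F : L → ℝ) (hF : ∀ l, 0 ≤ F l) :
    ∑ s, ∑ t, F ((c s)⁻¹ * c t) ≤
      (∑ s, ∑ t, if c s = c t then (1 : ℝ) else 0) * ∑ l, F l := by
  set ν : L → ℝ := fun h => ∑ s, if c s = h then (1 : ℝ) else 0 with hν
  have e1 : ∑ s, ∑ t, F ((c s)⁻¹ * c t) = ∑ l, (∑ h, ν h * ν (h * l)) * F l := by
    have a1 : ∀ s t, F ((c s)⁻¹ * c t) =
        ∑ l, ∑ h, ((if c s = h then (1:ℝ) else 0) * (if c t = h * l then (1:ℝ) else 0)) * F l := by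
      intro s t
      rw [Finset.sum_eq_single ((c s)⁻¹ * c t)]
      · rw [Finset.sum_eq_single (c s)]
        · simp
        · intro h _ hh; simp [hh.symm]
        · simp
      · intro l _ hl
        apply Finset.sum_eq_zero
        intro h _
        split_ifs with h1 h2
        · exfalso; apply hl; rw [h1, h2]; group
        all_goals simp
      · simp
    simp_rw [a1]
    simp only [hν, Finset.sum_mul_sum]
    simp only [Finset.sum_mul]
    have : ∀ f : S → S → L → L → ℝ, ∑ s, ∑ t, ∑ l, ∑ h, f s t l h = ∑ l, ∑ h, ∑ s, ∑ t, f s t l h := by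
      intro f
      calc _ = ∑ s, ∑ l, ∑ t, ∑ h, f s t l h := by
            refine Finset.sum_congr rfl fun s _ => Finset.sum_comm
        _ = ∑ l, ∑ s, ∑ h, ∑ t, f s t l h := by
            rw [Finset.sum_comm]
            refine Finset.sum_congr rfl fun s _ => Finset.sum_congr rfl fun l _ => Finset.sum_comm
        _ = _ := by
            refine Finset.sum_congr rfl fun s _ => Finset.sum_comm
    exact this _
  have e2 : ∑ s, ∑ t, (if c s = c t then (1 : ℝ) else 0) = ∑ h, ν h ^ 2 := by
    have a1 : ∀ s t, (if c s = c t then (1 : ℝ) else 0) =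
        ∑ h, (if c s = h then (1:ℝ) else 0) * (if c t = h then (1:ℝ) else 0) := by
      intro s t
      rw [Finset.sum_eq_single (c t)]
      · simp
      · intro h _ hh; simp [hh.symm]
      · simp
    simp_rw [a1]
    simp only [hν, sq, Finset.sum_mul_sum]
    rw [Finset.sum_comm]
    calc _ = ∑ t, ∑ h, ∑ s, (if c s = h then (1:ℝ) else 0) * (if c t = h then (1:ℝ) else 0) := by
          refine Finset.sum_congr rfl fun s _ => Finset.sum_comm
      _ = _ := by
          rw [Finset.sum_comm]
          refine Finset.sum_congr rfl fun s _ => Finset.sum_comm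
  rw [e1, e2, Finset.mul_sum]
  refine Finset.sum_le_sum fun l _ => mul_le_mul_of_nonneg_right ?_ (hF l)
  have e3 : ∑ h, ν (h * l) ^ 2 = ∑ h, ν h ^ 2 :=
    Fintype.sum_equiv (Equiv.mulRight l) _ _ (fun h => rfl)
  have e4 : ∑ h, ν h * ν (h * l) ≤ ∑ h, (ν h ^ 2 + ν (h * l) ^ 2) / 2 :=
    Finset.sum_le_sum fun h _ => by nlinarith [sq_nonneg (ν h - ν (h * l))]
  rw [← Finset.sum_div, Finset.sum_add_distrib, e3] at e4
  linarith

/-- number of commuting pairs as a real -/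
def commN (G : Type*) [Group G] [Fintype G] [DecidableEq G] : ℝ :=
  ∑ x : G, ∑ y : G, if x * y = y * x then (1 : ℝ) else 0

lemma commN_eq (G : Type*) [Group G] [Fintype G] [DecidableEq G] :
    commN G = (Nat.card (ConjClasses G) : ℝ) * (Fintype.card G : ℝ) := by
  have h := card_comm_eq_card_conjClasses_mul_card G
  rw [Nat.card_eq_fintype_card (α := G)] at h
  rw [← Nat.cast_mul, ← h]
  unfold commN
  rw [← Fintype.sum_prod_type' (f := fun x y : G => if x * y = y * x then (1 : ℝ) else 0)]
  rw [Finset.sum_boole]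
  congr 1
  have : Nat.card {p : G × G // Commute p.1 p.2} = Nat.card {p : G × G // p.1 * p.2 = p.2 * p.1} := rfl
  rw [this, Nat.card_eq_fintype_card]
  exact (Fintype.card_subtype _).symm

lemma commN_prod (G : Type*) [Group G] [Fintype G] [DecidableEq G] :
    commN (G × G) = commN G ^ 2 := by
  unfold commN
  rw [sq, Finset.sum_mul_sum, Fintype.sum_prod_type]
  refine Finset.sum_congr rfl fun p1 _ => Finset.sum_congr rfl fun p2 _ => ?_
  rw [Finset.sum_mul_sum, Fintype.sum_prod_type]
  refine Finset.sum_congr rfl fun q1 _ => Finset.sum_congr rfl fun q2 _ => ?_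
  by_cases h1 : p1 * q1 = q1 * p1 <;> by_cases h2 : p2 * q2 = q2 * p2 <;>
    simp [Prod.ext_iff, h1, h2]

lemma count_conj (L : Type*) [Group L] [Fintype L] [DecidableEq L] :
    ∑ y : L, ∑ x : L, ∑ x' : L, (if x * y * x⁻¹ = x' * y * x'⁻¹ then (1 : ℝ) else 0) =
      (Fintype.card L : ℝ) * commN L := by
  have h : ∀ y x : L, ∑ x' : L, (if x * y * x⁻¹ = x' * y * x'⁻¹ then (1 : ℝ) else 0) =
      ∑ z : L, if y * z = z * y then (1:ℝ) else 0 := by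
    intro y x
    refine (Fintype.sum_equiv (Equiv.mulLeft x) _ _ (fun z => ?_)).symm
    have : (y * z = z * y) ↔ (x * y * x⁻¹ = x * z * y * (x * z)⁻¹) := by
      constructor
      · intro h
        have : x * z * y * (x * z)⁻¹ = x * (z * y) * z⁻¹ * x⁻¹ := by group
        rw [this, ← h]; group
      · intro h
        have h2 : x⁻¹ * (x * y * x⁻¹) * x * z = x⁻¹ * (x * z * y * (x * z)⁻¹) * x * z := by rw [h]
        calc y * z = x⁻¹ * (x * y * x⁻¹) * x * z := by group
          _ = _ := h2
          _ = z * y := by group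
    exact if_congr this rfl rfl
  simp_rw [h]
  unfold commN
  simp [Finset.mul_sum]

lemma count_c (G : Type*) [Group G] [Fintype G] [DecidableEq G] :
    ∑ s : G × G, ∑ t : G × G, (if ((s.1 * s.2⁻¹, s.1⁻¹ * s.2) : G × G) =
      (t.1 * t.2⁻¹, t.1⁻¹ * t.2) then (1 : ℝ) else 0) = (Fintype.card G : ℝ) * commN G := by
  -- t = (a z, b z)
  have h : ∀ a b : G, ∑ t : G × G, (if ((a * b⁻¹, a⁻¹ * b) : G × G) =
      (t.1 * t.2⁻¹, t.1⁻¹ * t.2) then (1 : ℝ) else 0) =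
      ∑ z : G, if (a⁻¹ * b) * z = z * (a⁻¹ * b) then (1:ℝ) else 0 := by
    intro a b
    rw [Fintype.sum_prod_type]
    refine (Fintype.sum_equiv (Equiv.mulLeft a) _ _ (fun z => ?_)).symm
    rw [Finset.sum_eq_single (b * z)]
    · have : ((a⁻¹ * b) * z = z * (a⁻¹ * b)) ↔
        (((a * b⁻¹, a⁻¹ * b) : G × G) = (a * z * (b * z)⁻¹, (a * z)⁻¹ * (b * z))) := by
        rw [Prod.ext_iff]
        constructor
        · intro h
          refine ⟨by simp, ?_⟩
          have : (a * z)⁻¹ * (b * z) = z⁻¹ * (a⁻¹ * b * z) := by group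
          simp only [this, h]; group
        · rintro ⟨-, h⟩
          simp only at h
          calc (a⁻¹ * b) * z = z * ((a * z)⁻¹ * (b * z)) := by group
            _ = _ := by rw [← h]
      exact if_congr this rfl rfl
    · intro u _ hu
      rw [if_neg]
      intro h
      apply hu
      have h1 := (Prod.ext_iff.mp h).1
      simp only [Equiv.coe_mulLeft] at h1
      have h2 : b⁻¹ = z * u⁻¹ := by
        have : a * b⁻¹ = a * (z * u⁻¹) := by rw [h1]; group
        exact mul_left_cancel this
      rw [← inv_inv b, h2]; group
    · simp
  rw [Fintype.sum_prod_type]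
  simp_rw [h]
  have h2 : ∀ a : G, ∑ b : G, (∑ z : G, if (a⁻¹ * b) * z = z * (a⁻¹ * b) then (1:ℝ) else 0) =
      commN G := by
    intro a
    exact Fintype.sum_equiv (Equiv.mulLeft a⁻¹) _ _ (fun b => rfl)
  simp_rw [h2]
  simp

/-- normalized matrix coefficients -/
def matCoef {H : Type*} [Group H] [Fintype H] {T : Type*} {Vi : T → Type}
    [∀ i, NormedAddCommGroup (Vi i)] [∀ i, InnerProductSpace ℂ (Vi i)]
    (ρi : ∀ i, Representation ℂ H (Vi i)) {ι : T → Type} [∀ i, Fintype (ι i)]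
    (B : ∀ i, OrthonormalBasis (ι i) ℂ (Vi i)) (p : Σ i, ι i × ι i) : EuclideanSpace ℂ H :=
  WithLp.toLp 2 fun g =>
    ((Real.sqrt ((Module.finrank ℂ (Vi p.1) : ℝ) / (Fintype.card H : ℝ)) : ℝ) : ℂ) *
      ⟪B p.1 p.2.1, ρi p.1 g (B p.1 p.2.2)⟫_ℂ

lemma matCoef_orthonormal {H : Type*} [Group H] [Fintype H] {T : Type*} {Vi : T → Type}
    [∀ i, NormedAddCommGroup (Vi i)] [∀ i, InnerProductSpace ℂ (Vi i)]
    [∀ i, FiniteDimensional ℂ (Vi i)]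
    (ρi : ∀ i, Representation ℂ H (Vi i)) {ι : T → Type} [∀ i, Fintype (ι i)]
    (B : ∀ i, OrthonormalBasis (ι i) ℂ (Vi i))
    (hu : ∀ i, IsUnitaryRep (ρi i)) (hi : ∀ i, IsIrreducibleRep (ρi i))
    (hn : ∀ i j, i ≠ j → ¬ RepIso (ρi i) (ρi j)) :
    Orthonormal ℂ (matCoef ρi B) := by
  classical
  have key : ∀ p q, ⟪matCoef ρi B p, matCoef ρi B q⟫_ℂ =
      ((Real.sqrt ((Module.finrank ℂ (Vi p.1) : ℝ) / (Fintype.card H : ℝ)) : ℝ) : ℂ) *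
      ((Real.sqrt ((Module.finrank ℂ (Vi q.1) : ℝ) / (Fintype.card H : ℝ)) : ℝ) : ℂ) *
      ∑ g : H, ⟪B q.1 q.2.1, ρi q.1 g (B q.1 q.2.2)⟫_ℂ *
        ⟪ρi p.1 g (B p.1 p.2.2), B p.1 p.2.1⟫_ℂ := by
    intro p q
    rw [PiLp.inner_apply, Finset.mul_sum]
    refine Finset.sum_congr rfl fun g _ => ?_
    simp only [matCoef, RCLike.inner_apply, map_mul, inner_conj_symm, Complex.conj_ofReal]
    ring
  rw [orthonormal_iff_ite]
  rintro ⟨i, a, b⟩ ⟨j, c, e⟩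
  rw [key]
  by_cases hij : i = j
  · subst hij
    have hd : 0 < Module.finrank ℂ (Vi i) := by
      obtain ⟨⟨v0, hv0⟩, -⟩ := hi i
      have : Nontrivial (Vi i) := ⟨v0, 0, hv0⟩
      exact Module.finrank_pos
    have hd' : (Module.finrank ℂ (Vi i) : ℂ) ≠ 0 := by exact_mod_cast hd.ne'
    have hH' : (Fintype.card H : ℂ) ≠ 0 := by exact_mod_cast Fintype.card_ne_zero
    rw [schur_same _ (hu i) (hi i)]
    simp only
    rw [← Complex.ofReal_mul, Real.mul_self_sqrt (by positivity)]
    rw [orthonormal_iff_ite.mp (B i).orthonormal, orthonormal_iff_ite.mp (B i).orthonormal]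
    by_cases h1 : a = c <;> by_cases h2 : b = e
    · subst h1; subst h2; simp; field_simp
    · subst h1; simp [h2]
    · subst h2; simp [h1, Ne.symm h1]
    · simp [h1, h2]
  · rw [schur_diff _ _ (hi j) (hi i) (hu i) (hn i j hij)]
    rw [if_neg]
    · simp
    · intro h; apply hij; exact congrArg Sigma.fst h

/-- Plancherel weight -/
def plW {H : Type*} [Fintype H] {T : Type*} (Vi : T → Type)
    [∀ i, NormedAddCommGroup (Vi i)] [∀ i, InnerProductSpace ℂ (Vi i)] (i : T) : ℝ :=
  (Module.finrank ℂ (Vi i) : ℝ) / (Fintype.card H : ℝ)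

lemma plW_nonneg {H : Type*} [Fintype H] {T : Type*} (Vi : T → Type)
    [∀ i, NormedAddCommGroup (Vi i)] [∀ i, InnerProductSpace ℂ (Vi i)] (i : T) :
    0 ≤ plW (H := H) Vi i := by unfold plW; positivity

lemma bessel {H : Type*} [Group H] [Fintype H] {T : Type*} [Fintype T] {Vi : T → Type}
    [∀ i, NormedAddCommGroup (Vi i)] [∀ i, InnerProductSpace ℂ (Vi i)]
    [∀ i, FiniteDimensional ℂ (Vi i)]
    (ρi : ∀ i, Representation ℂ H (Vi i)) {ι : T → Type} [∀ i, Fintype (ι i)]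
    (B : ∀ i, OrthonormalBasis (ι i) ℂ (Vi i))
    (hu : ∀ i, IsUnitaryRep (ρi i)) (hi : ∀ i, IsIrreducibleRep (ρi i))
    (hn : ∀ i j, i ≠ j → ¬ RepIso (ρi i) (ρi j)) (u : H → ℝ) :
    ∑ j : (Σ i, ι i), plW (H := H) Vi j.1 * ‖∑ g : H, (u g : ℂ) • ρi j.1 g (B j.1 j.2)‖ ^ 2 ≤
      ∑ g, u g ^ 2 := by
  have h := (matCoef_orthonormal ρi B hu hi hn).sum_inner_products_le
    (s := Finset.univ) (x := WithLp.toLp 2 (fun g => (u g : ℂ)))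
  have hr : ‖(WithLp.toLp 2 (fun g => (u g : ℂ)) : EuclideanSpace ℂ H)‖ ^ 2 = ∑ g, u g ^ 2 := by
    rw [EuclideanSpace.norm_sq_eq]
    simp
  rw [hr] at h
  refine le_trans (le_of_eq ?_) h
  rw [Fintype.sum_sigma, Fintype.sum_sigma]
  refine Finset.sum_congr rfl fun i _ => ?_
  rw [Fintype.sum_prod_type, Finset.sum_comm]
  refine Finset.sum_congr rfl fun b _ => ?_
  rw [← (B i).sum_sq_norm_inner_right, Finset.mul_sum]
  refine Finset.sum_congr rfl fun a _ => ?_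
  rw [norm_inner_symm (matCoef ρi B ⟨i, (a, b)⟩)]
  have : ⟪(WithLp.toLp 2 (fun g => (u g : ℂ)) : EuclideanSpace ℂ H), matCoef ρi B ⟨i, a, b⟩⟫_ℂ =
      ((Real.sqrt ((Module.finrank ℂ (Vi i) : ℝ) / (Fintype.card H : ℝ)) : ℝ) : ℂ) *
        ⟪B i a, ∑ g : H, (u g : ℂ) • ρi i g (B i b)⟫_ℂ := by
    rw [PiLp.inner_apply, inner_sum, Finset.mul_sum]
    refine Finset.sum_congr rfl fun g _ => ?_
    simp only [matCoef, RCLike.inner_apply, inner_smul_right, Complex.conj_ofReal]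
    ring
  rw [this, norm_mul, mul_pow, Complex.norm_real, Real.norm_of_nonneg (Real.sqrt_nonneg _),
    Real.sq_sqrt (by positivity)]
  rfl

lemma bessel_family {H S : Type*} [Group H] [Fintype H] [DecidableEq H] [Fintype S]
    {T : Type*} [Fintype T] {Vi : T → Type}
    [∀ i, NormedAddCommGroup (Vi i)] [∀ i, InnerProductSpace ℂ (Vi i)]
    [∀ i, FiniteDimensional ℂ (Vi i)]
    (ρi : ∀ i, Representation ℂ H (Vi i)) {ι : T → Type} [∀ i, Fintype (ι i)]
    (B : ∀ i, OrthonormalBasis (ι i) ℂ (Vi i))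
    (hu : ∀ i, IsUnitaryRep (ρi i)) (hi : ∀ i, IsIrreducibleRep (ρi i))
    (hn : ∀ i j, i ≠ j → ¬ RepIso (ρi i) (ρi j)) (c : S → H) :
    ∑ j : (Σ i, ι i), plW (H := H) Vi j.1 * ‖∑ s, ρi j.1 (c s) (B j.1 j.2)‖ ^ 2 ≤
      ∑ s, ∑ t, if c s = c t then (1 : ℝ) else 0 := by
  have h := bessel ρi B hu hi hn (fun g => ∑ s, if c s = g then (1 : ℝ) else 0)
  have e2 : ∑ s, ∑ t, (if c s = c t then (1 : ℝ) else 0) =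
      ∑ g, (∑ s, if c s = g then (1 : ℝ) else 0) ^ 2 := by
    have a1 : ∀ s t, (if c s = c t then (1 : ℝ) else 0) =
        ∑ h, (if c s = h then (1:ℝ) else 0) * (if c t = h then (1:ℝ) else 0) := by
      intro s t
      rw [Finset.sum_eq_single (c t)]
      · simp
      · intro h _ hh; simp [hh.symm]
      · simp
    simp_rw [a1]
    simp only [sq, Finset.sum_mul_sum]
    rw [Finset.sum_comm]
    calc _ = ∑ t, ∑ h, ∑ s, (if c s = h then (1:ℝ) else 0) * (if c t = h then (1:ℝ) else 0) := by
          refine Finset.sum_congr rfl fun s _ => Finset.sum_comm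
      _ = _ := by
          rw [Finset.sum_comm]
          refine Finset.sum_congr rfl fun s _ => Finset.sum_comm
  rw [e2]
  refine le_trans (le_of_eq ?_) h
  refine Finset.sum_congr rfl fun j _ => ?_
  congr 3
  have : ∀ g : H, ((∑ s, if c s = g then (1 : ℝ) else 0 : ℝ) : ℂ) • ρi j.1 g (B j.1 j.2) =
      ∑ s, if c s = g then ρi j.1 g (B j.1 j.2) else 0 := by
    intro g
    push_cast
    rw [Finset.sum_smul]
    refine Finset.sum_congr rfl fun s _ => ?_
    split_ifs <;> simp
  simp_rw [this]
  rw [Finset.sum_comm]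
  simp

lemma plW_sum {H : Type*} [Group H] [Fintype H] 
    {T : Type*} [Fintype T] {Vi : T → Type}
    [∀ i, NormedAddCommGroup (Vi i)] [∀ i, InnerProductSpace ℂ (Vi i)]
    [∀ i, FiniteDimensional ℂ (Vi i)]
    (ρi : ∀ i, Representation ℂ H (Vi i)) {ι : T → Type} [∀ i, Fintype (ι i)]
    (B : ∀ i, OrthonormalBasis (ι i) ℂ (Vi i))
    (hu : ∀ i, IsUnitaryRep (ρi i)) (hi : ∀ i, IsIrreducibleRep (ρi i))
    (hn : ∀ i j, i ≠ j → ¬ RepIso (ρi i) (ρi j)) :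
    ∑ j : (Σ i, ι i), plW (H := H) Vi j.1 ≤ 1 := by
  classical
  have := bessel_family ρi B hu hi hn (fun _ : Unit => (1 : H))
  simpa [(B _).orthonormal.1] using this

lemma coef_comp {H L : Type*} [Group H] [Group L] [Fintype L] {V : Type}
    [NormedAddCommGroup V] [InnerProductSpace ℂ V] [FiniteDimensional ℂ V]
    (ρ : Representation ℂ H V) (hu : IsUnitaryRep ρ) (θ : L →* H) (b : V) (hb : ‖b‖ = 1) :
    (Fintype.card L : ℝ) * (∑ l : L, ‖⟪b, ρ (θ l) b⟫_ℂ‖ ^ 2) ^ 2 ≤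
      ∑ y : L, ‖∑ x : L, ρ (θ (x * y * x⁻¹)) b‖ ^ 2 := by
  have := coef_ineq (G := L) _ V (MonoidHom.comp ρ θ) (fun g v w => hu (θ g) v w) rfl b
  rw [hb, one_pow, one_pow, one_mul] at this
  exact this

lemma bessel_conj {H L : Type*} [Group H] [Fintype H] [Group L] [Fintype L] [DecidableEq L]
    {T : Type*} [Fintype T] {Vi : T → Type}
    [∀ i, NormedAddCommGroup (Vi i)] [∀ i, InnerProductSpace ℂ (Vi i)]
    [∀ i, FiniteDimensional ℂ (Vi i)]
    (ρi : ∀ i, Representation ℂ H (Vi i)) {ι : T → Type} [∀ i, Fintype (ι i)]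
    (B : ∀ i, OrthonormalBasis (ι i) ℂ (Vi i))
    (hu : ∀ i, IsUnitaryRep (ρi i)) (hi : ∀ i, IsIrreducibleRep (ρi i))
    (hn : ∀ i j, i ≠ j → ¬ RepIso (ρi i) (ρi j)) (θ : L →* H) (hθ : Function.Injective θ) (y : L) :
    ∑ j : (Σ i, ι i), plW (H := H) Vi j.1 *
          ‖∑ x : L, ρi j.1 (θ (x * y * x⁻¹)) (B j.1 j.2)‖ ^ 2 ≤
      ∑ x : L, ∑ x' : L, (if x * y * x⁻¹ = x' * y * x'⁻¹ then (1 : ℝ) else 0) := by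
  haveI : DecidableEq H := Classical.decEq H
  have h := bessel_family ρi B hu hi hn (fun x : L => θ (x * y * x⁻¹))
  simp only [hθ.eq_iff] at h
  exact h

lemma sum_aux {J Y : Type*} [Fintype J] [Fintype Y] (w X : J → ℝ) (Q : J → Y → ℝ) (E : Y → ℝ)
    (hw : ∀ j, 0 ≤ w j) (hs : ∑ j, w j ≤ 1) (N M : ℝ) (hN : 0 < N)
    (h1 : ∀ j, N * X j ^ 2 ≤ ∑ y, Q j y) (h2 : ∀ y, ∑ j, w j * Q j y ≤ E y)
    (h3 : ∑ y, E y = N * M) : (∑ j, w j * X j) ^ 2 ≤ M := by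
  refine (jens w X hw hs).trans ?_
  refine le_of_mul_le_mul_left ?_ hN
  calc N * ∑ j, w j * X j ^ 2 = ∑ j, w j * (N * X j ^ 2) := by
        rw [Finset.mul_sum]
        refine Finset.sum_congr rfl fun j _ => by ring
    _ ≤ ∑ j, w j * ∑ y, Q j y :=
        Finset.sum_le_sum fun j _ => mul_le_mul_of_nonneg_left (h1 j) (hw j)
    _ = ∑ y, ∑ j, w j * Q j y := by
        rw [Finset.sum_comm]
        refine Finset.sum_congr rfl fun j _ => by rw [Finset.mul_sum]
    _ ≤ ∑ y, E y := Finset.sum_le_sum fun y _ => h2 y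
    _ = _ := h3

lemma sum_coefA {H L : Type*} [Group H] [Fintype H] [Group L] [Fintype L] [DecidableEq L]
    {T : Type*} [Fintype T] {Vi : T → Type}
    [∀ i, NormedAddCommGroup (Vi i)] [∀ i, InnerProductSpace ℂ (Vi i)]
    [∀ i, FiniteDimensional ℂ (Vi i)]
    (ρi : ∀ i, Representation ℂ H (Vi i)) {ι : T → Type} [∀ i, Fintype (ι i)]
    (B : ∀ i, OrthonormalBasis (ι i) ℂ (Vi i))
    (hu : ∀ i, IsUnitaryRep (ρi i)) (hi : ∀ i, IsIrreducibleRep (ρi i))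
    (hn : ∀ i j, i ≠ j → ¬ RepIso (ρi i) (ρi j)) (θ : L →* H) (hθ : Function.Injective θ) :
    (∑ j : (Σ i, ι i), plW (H := H) Vi j.1 *
      ∑ l : L, ‖⟪B j.1 j.2, ρi j.1 (θ l) (B j.1 j.2)⟫_ℂ‖ ^ 2) ^ 2 ≤ commN L := by
  have hL : (0 : ℝ) < Fintype.card L := by exact_mod_cast Fintype.card_pos
  exact sum_aux (fun j : (Σ i, ι i) => plW (H := H) Vi j.1)
    (fun j : (Σ i, ι i) => ∑ l : L, ‖⟪B j.1 j.2, ρi j.1 (θ l) (B j.1 j.2)⟫_ℂ‖ ^ 2)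
    (fun (j : (Σ i, ι i)) (y : L) => ‖∑ x : L, ρi j.1 (θ (x * y * x⁻¹)) (B j.1 j.2)‖ ^ 2)
    (fun y : L => ∑ x : L, ∑ x' : L, (if x * y * x⁻¹ = x' * y * x'⁻¹ then (1 : ℝ) else 0))
    (fun j => plW_nonneg (H := H) Vi j.1) (plW_sum ρi B hu hi hn) (Fintype.card L : ℝ) (commN L) hL
    (fun j => coef_comp (ρi j.1) (hu j.1) θ (B j.1 j.2) ((B j.1).orthonormal.1 j.2))
    (fun y => bessel_conj ρi B hu hi hn θ hθ y) (count_conj L)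

/-- the elements of `M` -/
def mEl {G : Type*} [Group G] (α : G) : wreathZ2 G := ⟨(α, α⁻¹), Multiplicative.ofAdd 1⟩

lemma swapHom_one {G : Type*} [Group G] (a b : G) :
    swapHom G (Multiplicative.ofAdd 1) (a, b) = (b, a) := by
  have v1 : (1 : ZMod 2).val = 1 := by decide
  have : swapHom G (Multiplicative.ofAdd 1) = swapAut G := by
    show swapAut G ^ ((1 : ZMod 2).val) = swapAut G
    rw [v1, pow_one]
  rw [this]; rfl

lemma mEl_sq {G : Type*} [Group G] (α : G) : mEl α * mEl α = 1 := by
  have v2 : (1 : ZMod 2) + 1 = 0 := by decide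
  apply SemidirectProduct.ext
  · simp only [mEl, SemidirectProduct.mul_left, SemidirectProduct.one_left,
      SemidirectProduct.left_inl, swapHom_one]
    ext <;> simp
  · simp only [mEl, SemidirectProduct.mul_right, SemidirectProduct.one_right]
    rw [← ofAdd_add, v2]; rfl

lemma mEl_inv_mul {G : Type*} [Group G] (α β : G) :
    (mEl α)⁻¹ * mEl β = SemidirectProduct.inl (α * β⁻¹, α⁻¹ * β) := by
  have v2 : (1 : ZMod 2) + 1 = 0 := by decide
  rw [inv_eq_of_mul_eq_one_left (mEl_sq α)]
  apply SemidirectProduct.ext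
  · simp only [mEl, SemidirectProduct.mul_left, SemidirectProduct.one_left,
      SemidirectProduct.left_inl, swapHom_one]
    ext <;> simp
  · simp only [mEl, SemidirectProduct.mul_right, SemidirectProduct.right_inl]
    rw [← ofAdd_add, v2]; rfl

lemma mEl_inj {G : Type*} [Group G] : Function.Injective (mEl (G := G)) := by
  intro a b h
  have := congrArg (fun x : wreathZ2 G => x.left.1) h
  exact this

lemma main_I {H G : Type*} [Group H] [Fintype H] [Group G] [Fintype G] [DecidableEq G]
    {T : Type*} [Fintype T] {Vi : T → Type}
    [∀ i, NormedAddCommGroup (Vi i)] [∀ i, InnerProductSpace ℂ (Vi i)]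
    [∀ i, FiniteDimensional ℂ (Vi i)]
    (ρi : ∀ i, Representation ℂ H (Vi i)) {ι : T → Type} [∀ i, Fintype (ι i)]
    (B : ∀ i, OrthonormalBasis (ι i) ℂ (Vi i))
    (hu : ∀ i, IsUnitaryRep (ρi i)) (hi : ∀ i, IsIrreducibleRep (ρi i))
    (hn : ∀ i j, i ≠ j → ¬ RepIso (ρi i) (ρi j))
    (θ : wreathZ2 G →* H) (hθ : Function.Injective θ) :
    (∑ j : (Σ i, ι i), plW (H := H) Vi j.1 *
      ∑ α : G, ‖⟪B j.1 j.2, ρi j.1 (θ (mEl α)) (B j.1 j.2)⟫_ℂ‖ ^ 2) ^ 4 ≤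
      (Fintype.card G : ℝ) * commN G ^ 2 := by
  have hcN : 0 ≤ commN G := by
    unfold commN
    exact Finset.sum_nonneg fun _ _ => Finset.sum_nonneg fun _ _ => by split_ifs <;> norm_num
  set X : (Σ i, ι i) → ℝ := fun j =>
    ∑ α : G, ‖⟪B j.1 j.2, ρi j.1 (θ (mEl α)) (B j.1 j.2)⟫_ℂ‖ ^ 2 with hX
  have hw := fun j : (Σ i, ι i) => plW_nonneg (H := H) Vi j.1
  have hs := plW_sum ρi B hu hi hn
  set F : (Σ i, ι i) → (G × G) → ℝ := fun j l =>
    ‖⟪B j.1 j.2, ρi j.1 ((θ.comp SemidirectProduct.inl) l) (B j.1 j.2)⟫_ℂ‖ ^ 2 with hF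
  have h1 : ∀ j, X j ^ 4 ≤ ((Fintype.card G : ℝ) * commN G) * ∑ l, F j l := by
    intro j
    have hb : ‖B j.1 j.2‖ = 1 := (B j.1).orthonormal.1 j.2
    have a1 := cs_rep (ρi j.1) (hu j.1) (B j.1 j.2) hb (fun α : G => θ (mEl α))
    have a1' : X j ^ 2 ≤ ∑ s : G × G, ‖⟪B j.1 j.2,
        ρi j.1 ((θ.comp SemidirectProduct.inl) (s.1 * s.2⁻¹, s.1⁻¹ * s.2)) (B j.1 j.2)⟫_ℂ‖ ^ 2 := by
      refine a1.trans (le_of_eq ?_)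
      rw [Fintype.sum_prod_type]
      refine Finset.sum_congr rfl fun s _ => Finset.sum_congr rfl fun t _ => ?_
      rw [← map_inv, ← map_mul, mEl_inv_mul]
      rfl
    have a2 := cs_rep (ρi j.1) (hu j.1) (B j.1 j.2) hb
      (fun s : G × G => (θ.comp SemidirectProduct.inl) (s.1 * s.2⁻¹, s.1⁻¹ * s.2))
    have a3 := count_conv (fun s : G × G => ((s.1 * s.2⁻¹, s.1⁻¹ * s.2) : G × G)) (F j)
      (fun l => by simp only [hF]; positivity)
    rw [count_c] at a3
    calc X j ^ 4 = (X j ^ 2) ^ 2 := by ring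
      _ ≤ _ := by gcongr
      _ ≤ _ := a2
      _ ≤ _ := by
        refine le_trans (le_of_eq ?_) a3
        refine Finset.sum_congr rfl fun s _ => Finset.sum_congr rfl fun t _ => ?_
        simp only [hF]
        rw [← map_inv, ← map_mul]
  have h2 := sum_coefA ρi B hu hi hn (θ.comp (SemidirectProduct.inl : (G × G) →* wreathZ2 G))
    (hθ.comp SemidirectProduct.inl_injective)
  rw [commN_prod] at h2
  have h3 : ∑ j : (Σ i, ι i), plW (H := H) Vi j.1 * ∑ l, F j l ≤ commN G :=
    le_of_sq_le_sq h2 hcN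
  have j1 := jens _ X hw hs
  have j2 := jens _ (fun j => X j ^ 2) hw hs
  have h0 : 0 ≤ ∑ j, plW (H := H) Vi j.1 * X j :=
    Finset.sum_nonneg fun j _ => mul_nonneg (hw j) (by simp only [hX]; positivity)
  calc (∑ j, plW (H := H) Vi j.1 * X j) ^ 4 = ((∑ j, plW (H := H) Vi j.1 * X j) ^ 2) ^ 2 := by ring
    _ ≤ (∑ j, plW (H := H) Vi j.1 * X j ^ 2) ^ 2 := by gcongr
    _ ≤ ∑ j, plW (H := H) Vi j.1 * (X j ^ 2) ^ 2 := j2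
    _ ≤ ∑ j, plW (H := H) Vi j.1 * (((Fintype.card G : ℝ) * commN G) * ∑ l, F j l) :=
        Finset.sum_le_sum fun j _ => mul_le_mul_of_nonneg_left
          (by have := h1 j; calc (X j ^ 2) ^ 2 = X j ^ 4 := by ring
                _ ≤ _ := this) (hw j)
    _ = ((Fintype.card G : ℝ) * commN G) * ∑ j, plW (H := H) Vi j.1 * ∑ l, F j l := by
        rw [Finset.mul_sum]; refine Finset.sum_congr rfl fun j _ => by ring
    _ ≤ ((Fintype.card G : ℝ) * commN G) * commN G := by gcongr
    _ = _ := by ring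

/-- the diagonal embedding along `I` -/
def onIHom {G : Type*} [Group G] {k : ℕ} (I : Finset (Fin k)) : G →* (Fin k → G) where
  toFun g := onI g I
  map_one' := by funext i; simp [onI]
  map_mul' a b := by funext i; by_cases h : i ∈ I <;> simp [onI, h]

lemma onIHom_inj {G : Type*} [Group G] {k : ℕ} (I : Finset (Fin k)) (hI : I ≠ ∅) :
    Function.Injective (onIHom (G := G) I) := by
  obtain ⟨i, hi⟩ := Finset.nonempty_iff_ne_empty.mpr hI
  intro a b h
  have := congrFun h i
  simpa [onIHom, onI, hi] using this

lemma onI_mul {G : Type*} [Group G] {k : ℕ} (m : G) (hm : m * m = 1) (I J : Finset (Fin k)) :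
    onI m I * onI m J = onI m (symmDiff I J) := by
  funext i
  by_cases h1 : i ∈ I <;> by_cases h2 : i ∈ J <;> simp [onI, h1, h2, Finset.mem_symmDiff, hm]

lemma onI_empty {G : Type*} [Group G] {k : ℕ} (m : G) : onI m (∅ : Finset (Fin k)) = 1 := by
  funext i; simp [onI]

lemma rho_invProj {G V : Type*} [Group G] [AddCommGroup V] [Module ℂ V] {k : ℕ}
    (ρ : Representation ℂ (Fin k → G) V) (m : G) (hm : m * m = 1) (J : Finset (Fin k)) (v : V) :
    ρ (onI m J) (invProj ρ m v) = invProj ρ m v := by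
  unfold invProj
  simp only [LinearMap.smul_apply, LinearMap.sum_apply, map_smul, map_sum]
  congr 1
  refine Fintype.sum_equiv (symmDiff_right_involutive J).toPerm _ _ (fun I => ?_)
  rw [← Module.End.mul_apply, ← map_mul, onI_mul m hm]
  rfl

lemma invProj_eq {G V : Type*} [Group G] [AddCommGroup V] [Module ℂ V] {k : ℕ}
    (ρ : Representation ℂ (Fin k → G) V) (m : G) (v : V) :
    invProj ρ m v = ((2 : ℂ) ^ k)⁻¹ • ∑ I : Finset (Fin k), ρ (onI m I) v := by
  simp [invProj]

lemma invProj_idem {G V : Type*} [Group G] [AddCommGroup V] [Module ℂ V] {k : ℕ}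
    (ρ : Representation ℂ (Fin k → G) V) (m : G) (hm : m * m = 1) (v : V) :
    invProj ρ m (invProj ρ m v) = invProj ρ m v := by
  rw [invProj_eq ρ m (invProj ρ m v)]
  simp only [rho_invProj ρ m hm]
  simp only [Finset.sum_const, Finset.card_univ, Fintype.card_finset, Fintype.card_fin]
  rw [← Nat.cast_smul_eq_nsmul ℂ, smul_smul]
  push_cast
  rw [inv_mul_cancel₀ (pow_ne_zero _ two_ne_zero), one_smul]

lemma invProj_inner {G V : Type*} [Group G] [NormedAddCommGroup V] [InnerProductSpace ℂ V] {k : ℕ}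
    (ρ : Representation ℂ (Fin k → G) V) (hu : IsUnitaryRep ρ) (m : G) (hm : m * m = 1) (v : V) :
    ⟪invProj ρ m v, invProj ρ m v⟫_ℂ = ⟪v, invProj ρ m v⟫_ℂ := by
  have h : ∀ J : Finset (Fin k), ⟪ρ (onI m J) v, invProj ρ m v⟫_ℂ = ⟪v, invProj ρ m v⟫_ℂ := by
    intro J
    conv_lhs => rw [← rho_invProj ρ m hm J v]
    exact hu _ _ _
  have e := invProj_eq ρ m v
  conv_lhs =>
    lhs
    rw [e]
  rw [inner_smul_left, sum_inner]
  simp only [h, Finset.sum_const, Finset.card_univ, Fintype.card_finset, Fintype.card_fin]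
  simp only [map_inv₀, map_pow, Complex.conj_ofNat, nsmul_eq_mul, Nat.cast_pow, Nat.cast_ofNat]
  rw [inv_mul_cancel_left₀ (pow_ne_zero _ two_ne_zero)]

lemma invProj_norm {G V : Type*} [Group G] [NormedAddCommGroup V] [InnerProductSpace ℂ V] {k : ℕ}
    (ρ : Representation ℂ (Fin k → G) V) (hu : IsUnitaryRep ρ) (m : G) (hm : m * m = 1) (v : V) :
    (2 : ℝ) ^ k * ‖invProj ρ m v‖ ^ 2 = ∑ I : Finset (Fin k), (⟪v, ρ (onI m I) v⟫_ℂ).re := by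
  have h1 : ((‖invProj ρ m v‖ ^ 2 : ℝ) : ℂ) = ⟪v, invProj ρ m v⟫_ℂ := by
    rw [← invProj_inner ρ hu m hm, inner_self_eq_norm_sq_to_K]; push_cast; rfl
  have e := invProj_eq ρ m v
  have h2 : (((2 : ℝ) ^ k * ‖invProj ρ m v‖ ^ 2 : ℝ) : ℂ) =
      ∑ I : Finset (Fin k), ⟪v, ρ (onI m I) v⟫_ℂ := by
    rw [Complex.ofReal_mul, h1, e, inner_smul_right, inner_sum]
    push_cast
    rw [mul_inv_cancel_left₀ (pow_ne_zero _ two_ne_zero)]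
  have := congrArg Complex.re h2
  rw [Complex.ofReal_re, Complex.re_sum] at this
  exact this

lemma invProj_rank {G V : Type*} [Group G] [NormedAddCommGroup V] [InnerProductSpace ℂ V] {k : ℕ}
    [FiniteDimensional ℂ V] {ι : Type*} [Fintype ι] (B : OrthonormalBasis ι ℂ V)
    (ρ : Representation ℂ (Fin k → G) V) (hu : IsUnitaryRep ρ) (m : G) (hm : m * m = 1) :
    ∑ x, ‖invProj ρ m (B x)‖ ^ 2 = (Module.finrank ℂ (LinearMap.range (invProj ρ m)) : ℝ) := by
  have hp : LinearMap.IsProj (LinearMap.range (invProj ρ m)) (invProj ρ m) :=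
    ⟨fun x => LinearMap.mem_range_self _ _, by
      rintro _ ⟨x, rfl⟩; exact invProj_idem ρ m hm x⟩
  have ht := hp.trace
  rw [LinearMap.trace_eq_sum_inner _ B] at ht
  have : ((∑ x, ‖invProj ρ m (B x)‖ ^ 2 : ℝ) : ℂ) =
      ((Module.finrank ℂ (LinearMap.range (invProj ρ m)) : ℝ) : ℂ) := by
    push_cast
    rw [← ht]
    refine Finset.sum_congr rfl fun x _ => ?_
    rw [← invProj_inner ρ hu m hm, inner_self_eq_norm_sq_to_K]; rfl
  exact_mod_cast this

lemma var_le {ι : Type*} [Fintype ι] (a : ι → ℝ) (t s : ℝ) (h : ∑ x, a x = Fintype.card ι * t) :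
    ∑ x, (a x - t) ^ 2 ≤ ∑ x, (a x - s) ^ 2 := by
  have : ∑ x, (a x - s) ^ 2 - ∑ x, (a x - t) ^ 2 = (Fintype.card ι : ℝ) * (t - s) ^ 2 := by
    rw [← Finset.sum_sub_distrib]
    have e : ∀ x, (a x - s) ^ 2 - (a x - t) ^ 2 = a x * (2 * (t - s)) + (s ^ 2 - t ^ 2) := by
      intro x; ring
    simp_rw [e]
    rw [Finset.sum_add_distrib, ← Finset.sum_mul, h]
    simp
    ring
  have h2 : 0 ≤ (Fintype.card ι : ℝ) * (t - s) ^ 2 := by positivity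
  linarith

/-- deviation of the scaled squared norm from its mean -/
def devZ {G V : Type*} [Group G] [NormedAddCommGroup V] [InnerProductSpace ℂ V] {k : ℕ}
    (ρ : Representation ℂ (Fin k → G) V) (m : G) (b : V) : ℝ :=
  (2 : ℝ) ^ k * ‖invProj ρ m b‖ ^ 2 - (2 : ℝ) ^ k *
    (Module.finrank ℂ (LinearMap.range (invProj ρ m)) : ℝ) / (Module.finrank ℂ V : ℝ)

lemma devZ_sq {G V : Type*} [Group G] [NormedAddCommGroup V] [InnerProductSpace ℂ V] {k : ℕ}
    [FiniteDimensional ℂ V] {ι : Type*} [Fintype ι] (B : OrthonormalBasis ι ℂ V)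
    (ρ : Representation ℂ (Fin k → G) V) (hu : IsUnitaryRep ρ) (m : G) (hm : m * m = 1)
    (hd : 0 < Module.finrank ℂ V) :
    ∑ x, devZ ρ m (B x) ^ 2 ≤ (2 : ℝ) ^ k * ∑ x, ∑ I ∈ Finset.univ.erase (∅ : Finset (Fin k)),
      ‖⟪B x, ρ (onI m I) (B x)⟫_ℂ‖ ^ 2 := by
  have hd' : (Module.finrank ℂ V : ℝ) ≠ 0 := by exact_mod_cast hd.ne'
  refine (var_le (fun x => (2 : ℝ) ^ k * ‖invProj ρ m (B x)‖ ^ 2) _ 1 ?_).trans ?_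
  · rw [← Finset.mul_sum, invProj_rank B ρ hu m hm, ← Module.finrank_eq_card_basis B.toBasis]
    field_simp
  · rw [Finset.mul_sum]
    refine Finset.sum_le_sum fun x _ => ?_
    rw [invProj_norm ρ hu m hm, ← Finset.add_sum_erase _ _ (Finset.mem_univ (∅ : Finset (Fin k))),
      onI_empty, map_one, Module.End.one_apply, inner_self_eq_norm_sq_to_K,
      B.orthonormal.1]
    have e : ∀ S : ℝ, ((RCLike.ofReal (1 : ℝ) : ℂ) ^ 2).re + S - 1 = S := by intro S; simp
    rw [e]
    refine sq_sum_le_card_mul_sum_sq.trans ?_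
    refine mul_le_mul ?_ ?_ (Finset.sum_nonneg fun _ _ => sq_nonneg _) (by positivity)
    · have : (Finset.univ.erase (∅ : Finset (Fin k))).card ≤ 2 ^ k := by
        refine (Finset.card_le_univ _).trans ?_
        simp
      exact_mod_cast this
    · refine Finset.sum_le_sum fun I _ => ?_
      rw [← sq_abs]
      gcongr
      exact Complex.abs_re_le_norm _

lemma markov_term {T : Type*} (s : Finset T) (p D : T → ℝ) (ε : ℝ) (hε : 0 < ε)
    (hp : ∀ i, 0 ≤ p i) (hD : ∀ i, 0 ≤ D i) [DecidablePred fun i => D i > ε] :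
    ∑ i ∈ s.filter (fun i => D i > ε), p i ≤ ε⁻¹ * ∑ i ∈ s, p i * D i := by
  rw [Finset.sum_filter, Finset.mul_sum]
  refine Finset.sum_le_sum fun i _ => ?_
  split_ifs with h
  · have : ε⁻¹ * (p i * D i) = p i * (ε⁻¹ * D i) := by ring
    rw [this]
    have h1 : 1 ≤ ε⁻¹ * D i := by
      rw [inv_mul_eq_div, le_div_iff₀ hε]; linarith
    nlinarith [hp i]
  · have := hp i; have := hD i; positivity

lemma HD_le {G V : Type*} [Group G] [NormedAddCommGroup V] [InnerProductSpace ℂ V] {k : ℕ}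
    [FiniteDimensional ℂ V] {ι : Type*} [Fintype ι] (B : OrthonormalBasis ι ℂ V)
    (ρ : Representation ℂ (Fin k → G) V) (m : G) (hd : 0 < Module.finrank ℂ V)
    (h : ℝ) (hh : 0 < h) :
    (2 : ℝ) ^ k * (Module.finrank ℂ V : ℝ) *
      (Module.finrank ℂ (LinearMap.range (invProj ρ m)) : ℝ) / h *
      (∑ x : ι, |‖invProj ρ m (B x)‖ ^ 2 /
          (Module.finrank ℂ (LinearMap.range (invProj ρ m)) : ℝ)
           - 1 / (Module.finrank ℂ V : ℝ)|) ≤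
    ∑ x, (Module.finrank ℂ V : ℝ) / h * |devZ ρ m (B x)| := by
  rw [Finset.mul_sum]
  refine Finset.sum_le_sum fun x _ => ?_
  set d : ℝ := (Module.finrank ℂ V : ℝ) with hdd
  set r : ℝ := (Module.finrank ℂ (LinearMap.range (invProj ρ m)) : ℝ) with hr
  have hd0 : 0 < d := by rw [hdd]; exact_mod_cast hd
  have hr0 : 0 ≤ r := by rw [hr]; positivity
  rcases hr0.eq_or_lt with h0 | h0
  · rw [← h0]; simp; positivity
  · have e : devZ ρ m (B x) = (2 ^ k * r) * (‖invProj ρ m (B x)‖ ^ 2 / r - 1 / d) := by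
      unfold devZ; rw [← hr, ← hdd]; field_simp
    rw [e, abs_mul, abs_of_nonneg (by positivity : (0:ℝ) ≤ 2 ^ k * r)]
    apply le_of_eq; ring

lemma avg_bound {G : Type*} [Group G] [Fintype G] [DecidableEq G] {k : ℕ}
    {T : Type*} [Fintype T] {Vi : T → Type}
    [∀ i, NormedAddCommGroup (Vi i)] [∀ i, InnerProductSpace ℂ (Vi i)]
    [∀ i, FiniteDimensional ℂ (Vi i)]
    (ρi : ∀ i, Representation ℂ (Fin k → wreathZ2 G) (Vi i)) {ι : T → Type} [∀ i, Fintype (ι i)]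
    (B : ∀ i, OrthonormalBasis (ι i) ℂ (Vi i))
    (hu : ∀ i, IsUnitaryRep (ρi i)) (hi : ∀ i, IsIrreducibleRep (ρi i))
    (hn : ∀ i j, i ≠ j → ¬ RepIso (ρi i) (ρi j)) (a : ℝ) (ha : 0 ≤ a)
    (hp : (Nat.card (ConjClasses G) : ℝ) ^ 2 ≤ (Fintype.card G : ℝ) * a ^ 8) :
    (Fintype.card G : ℝ)⁻¹ * ∑ α : G, ∑ j : (Σ i, ι i), plW (H := Fin k → wreathZ2 G) Vi j.1 *
      |devZ (ρi j.1) (mEl α) (B j.1 j.2)| ≤ 2 ^ k * a := by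
  have hG : (0 : ℝ) < Fintype.card G := by exact_mod_cast Fintype.card_pos
  set g : ℝ := (Fintype.card G : ℝ) with hg
  set w : (Σ i, ι i) → ℝ := fun j => plW (H := Fin k → wreathZ2 G) Vi j.1 with hw
  have hw0 : ∀ j, 0 ≤ w j := fun j => plW_nonneg (H := Fin k → wreathZ2 G) Vi j.1
  have hs : ∑ j, w j ≤ 1 := plW_sum ρi B hu hi hn
  have hd : ∀ i, 0 < Module.finrank ℂ (Vi i) := by
    intro i
    obtain ⟨⟨v0, hv0⟩, -⟩ := hi i
    have : Nontrivial (Vi i) := ⟨v0, 0, hv0⟩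
    exact Module.finrank_pos
  have hI : ∀ I ∈ Finset.univ.erase (∅ : Finset (Fin k)),
      ∑ j, w j * ∑ α : G, ‖⟪B j.1 j.2, ρi j.1 (onI (mEl α) I) (B j.1 j.2)⟫_ℂ‖ ^ 2 ≤
        g * a ^ 2 := by
    intro I hI
    have h := main_I ρi B hu hi hn (onIHom I) (onIHom_inj I (Finset.ne_of_mem_erase hI))
    rw [commN_eq] at h
    refine le_of_pow_le_pow_left₀ (n := 4) (by norm_num) (by positivity) (h.trans ?_)
    calc g * ((Nat.card (ConjClasses G) : ℝ) * g) ^ 2 =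
        g ^ 3 * (Nat.card (ConjClasses G) : ℝ) ^ 2 := by ring
      _ ≤ g ^ 3 * (g * a ^ 8) := by gcongr
      _ = (g * a ^ 2) ^ 4 := by ring
  have hZ : ∀ α : G, ∑ j, w j * devZ (ρi j.1) (mEl α) (B j.1 j.2) ^ 2 ≤
      2 ^ k * ∑ I ∈ Finset.univ.erase (∅ : Finset (Fin k)), ∑ j, w j *
        ‖⟪B j.1 j.2, ρi j.1 (onI (mEl α) I) (B j.1 j.2)⟫_ℂ‖ ^ 2 := by
    intro α
    rw [Finset.sum_comm]
    simp only [← Finset.mul_sum]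
    rw [Fintype.sum_sigma, Fintype.sum_sigma, Finset.mul_sum]
    refine Finset.sum_le_sum fun i _ => ?_
    simp only [hw]
    rw [← Finset.mul_sum, ← Finset.mul_sum]
    have := mul_le_mul_of_nonneg_left (devZ_sq (B i) (ρi i) (hu i) (mEl α) (mEl_sq α) (hd i))
      (plW_nonneg (H := Fin k → wreathZ2 G) Vi i)
    refine this.trans (le_of_eq (by ring))
  have hj := jens (fun p : G × (Σ i, ι i) => g⁻¹ * w p.2)
    (fun p => |devZ (ρi p.2.1) (mEl p.1) (B p.2.1 p.2.2)|)
    (fun p => mul_nonneg (by positivity) (hw0 _)) (by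
      rw [Fintype.sum_prod_type]
      simp only [← Finset.mul_sum, Finset.sum_const, Finset.card_univ, nsmul_eq_mul]
      rw [← hg, ← mul_assoc, inv_mul_cancel₀ hG.ne', one_mul]
      exact hs)
  rw [Fintype.sum_prod_type, Fintype.sum_prod_type] at hj
  simp only [mul_assoc, ← Finset.mul_sum, sq_abs] at hj
  refine le_of_sq_le_sq (hj.trans ?_) (by positivity)
  calc g⁻¹ * ∑ α : G, ∑ j, w j * devZ (ρi j.1) (mEl α) (B j.1 j.2) ^ 2
      ≤ g⁻¹ * ∑ α : G, 2 ^ k * ∑ I ∈ Finset.univ.erase (∅ : Finset (Fin k)), ∑ j, w j *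
        ‖⟪B j.1 j.2, ρi j.1 (onI (mEl α) I) (B j.1 j.2)⟫_ℂ‖ ^ 2 := by
        gcongr with α
        exact hZ α
    _ = g⁻¹ * (2 ^ k * ∑ I ∈ Finset.univ.erase (∅ : Finset (Fin k)),
        ∑ j, w j * ∑ α : G, ‖⟪B j.1 j.2, ρi j.1 (onI (mEl α) I) (B j.1 j.2)⟫_ℂ‖ ^ 2) := by
        rw [← Finset.mul_sum, Finset.sum_comm]
        congr 2
        refine Finset.sum_congr rfl fun I _ => ?_
        rw [Finset.sum_comm]
        refine Finset.sum_congr rfl fun j _ => ?_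
        rw [Finset.mul_sum]
    _ ≤ g⁻¹ * (2 ^ k * ∑ I ∈ Finset.univ.erase (∅ : Finset (Fin k)), g * a ^ 2) := by
        gcongr with I hh
        exact hI I hh
    _ ≤ g⁻¹ * (2 ^ k * (2 ^ k * (g * a ^ 2))) := by
        rw [Finset.sum_const, nsmul_eq_mul]
        have : (Finset.univ.erase (∅ : Finset (Fin k))).card ≤ 2 ^ k := by
          refine (Finset.card_le_univ _).trans ?_
          simp
        have : ((Finset.univ.erase (∅ : Finset (Fin k))).card : ℝ) ≤ 2 ^ k := by
          exact_mod_cast this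
        gcongr
    _ = (2 ^ k * a) ^ 2 := by field_simp

lemma conj_card (n : ℕ) : Nat.card (ConjClasses (Equiv.Perm (Fin n))) ≤ 2 ^ n := by
  have h1 : Nat.card (ConjClasses (Equiv.Perm (Fin n))) ≤
      Nat.card (Nat.Partition (Fintype.card (Fin n))) := by
    refine Nat.card_le_card_of_injective
      (fun c : ConjClasses (Equiv.Perm (Fin n)) => Quotient.liftOn' c
        (fun σ => σ.partition) (fun a b h => Equiv.Perm.partition_eq_of_isConj.mp h)) ?_
    intro a b
    induction a using Quotient.inductionOn'
    induction b using Quotient.inductionOn'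
    intro h
    exact Quotient.sound' (Equiv.Perm.partition_eq_of_isConj.mpr h)
  have h2 : Nat.card (Nat.Partition (Fintype.card (Fin n))) ≤ Nat.card (Composition n) := by
    rw [Fintype.card_fin]
    exact Nat.card_le_card_of_surjective _ (Nat.Partition.ofComposition_surj (n := n))
  refine h1.trans (h2.trans ?_)
  rw [Nat.card_eq_fintype_card, composition_card]
  exact Nat.pow_le_pow_right (by norm_num) (Nat.sub_le _ _)

lemma fact_lower (n : ℕ) : ((n : ℝ) / 3) ^ n ≤ (n.factorial : ℝ) := by
  have h := Real.pow_div_factorial_le_exp (n : ℝ) (Nat.cast_nonneg n) n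
  have h3 : Real.exp (n : ℝ) ≤ 3 ^ n := by
    rw [← mul_one (n : ℝ), Real.exp_nat_mul]
    gcongr
    exact (Real.exp_one_lt_d9.trans (by norm_num)).le
  have hf : (0 : ℝ) < n.factorial := by exact_mod_cast n.factorial_pos
  rw [div_le_iff₀ hf] at h
  rw [div_pow, div_le_iff₀ (by positivity)]
  nlinarith

lemma num_main (n : ℕ) (hn : 256 ≤ n) :
    (Nat.card (ConjClasses (Equiv.Perm (Fin n))) : ℝ) ^ 2 ≤
      (Fintype.card (Equiv.Perm (Fin n)) : ℝ) * ((n : ℝ) ^ (-(4 * (1 / 128 * (n : ℝ))))) ^ 8 := by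
  have hn0 : (0 : ℝ) < n := by exact_mod_cast (by omega : 0 < n)
  have hn' : (256 : ℝ) ≤ n := by exact_mod_cast hn
  have hp : (Nat.card (ConjClasses (Equiv.Perm (Fin n))) : ℝ) ≤ 2 ^ n := by
    exact_mod_cast conj_card n
  have e : ((n : ℝ) ^ (-(4 * (1 / 128 * (n : ℝ))))) ^ 8 = (((n : ℝ) ^ (1 / 4 : ℝ)) ^ n)⁻¹ := by
    rw [← Real.rpow_natCast, ← Real.rpow_mul hn0.le, ← Real.rpow_natCast, ← Real.rpow_mul hn0.le,
      ← Real.rpow_neg hn0.le]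
    congr 1
    push_cast
    ring
  rw [e, Fintype.card_perm, Fintype.card_fin, ← div_eq_mul_inv, le_div_iff₀ (by positivity)]
  refine le_trans ?_ (fact_lower n)
  set q : ℝ := (n : ℝ) ^ (1 / 4 : ℝ) with hq
  have hq4 : q ^ 4 = n := by
    rw [hq, ← Real.rpow_natCast, ← Real.rpow_mul hn0.le]; norm_num
  have hq0 : 0 < q := by positivity
  have hqq : 4 ≤ q := by
    refine le_of_pow_le_pow_left₀ (n := 4) (by norm_num) hq0.le ?_
    rw [hq4]; linarith
  calc _ ≤ ((2 : ℝ) ^ n) ^ 2 * q ^ n := by gcongr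
    _ = (4 * q) ^ n := by rw [mul_pow, ← pow_mul, mul_comm n 2, pow_mul]; norm_num
    _ ≤ ((n : ℝ) / 3) ^ n := by
      gcongr
      rw [← hq4]
      nlinarith [mul_pos hq0 hq0, mul_pos (mul_pos hq0 hq0) hq0, mul_self_nonneg (q - 4)]

lemma num_k (n k : ℕ) (hn : 256 ≤ n)
    (hk : (k : ℝ) ≤ 1 / 128 * (n : ℝ) * Real.logb 2 (n : ℝ)) :
    (2 : ℝ) ^ k ≤ (n : ℝ) ^ (1 / 128 * (n : ℝ)) := by
  have hn0 : (0 : ℝ) < n := by exact_mod_cast (by omega : 0 < n)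
  calc (2 : ℝ) ^ k = (2 : ℝ) ^ (k : ℝ) := (Real.rpow_natCast _ _).symm
    _ ≤ (2 : ℝ) ^ (Real.logb 2 (n : ℝ) * (1 / 128 * (n : ℝ))) :=
        Real.rpow_le_rpow_of_exponent_le (by norm_num) (by linarith)
    _ = _ := by
        rw [Real.rpow_mul (by norm_num), Real.rpow_logb (by norm_num) (by norm_num) hn0]
open Classical in
/-- Theorem 1 of the paper. For `K = (Sym(n) × Sym(n)) ⋊ Z₂` and the conjugacy
class `M` of involutions `((α,α⁻¹),1)`, if `k ≤ C n log₂ n` then, averaging over `m ∈ M`, the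
probability (under weak Fourier sampling `H_m`) of observing a representation `ρ_i` whose
conditional distribution on any orthonormal basis is farther than `n^{-cn}` from uniform in
ℓ¹-distance is at most `n^{-cn}`. -/
theorem stmt16 :
    ∃ C : ℝ, 0 < C ∧ ∃ c : ℝ, 0 < c ∧ ∃ N : ℕ, ∀ n : ℕ, N ≤ n →
    ∀ k : ℕ, 1 ≤ k → (k : ℝ) ≤ C * (n : ℝ) * Real.logb 2 (n : ℝ) →
    ∀ (T : Type) [Fintype T] (Vi : T → Type)
      [∀ i, NormedAddCommGroup (Vi i)] [∀ i, InnerProductSpace ℂ (Vi i)]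
      [∀ i, FiniteDimensional ℂ (Vi i)]
      (ρi : ∀ i, Representation ℂ
        (Fin k → wreathZ2 (Equiv.Perm (Fin n))) (Vi i)),
      IsCompleteFamily Vi ρi →
    ∀ (ι : T → Type) [∀ i, Fintype (ι i)] (B : ∀ i, OrthonormalBasis (ι i) ℂ (Vi i)),
      (1 / ((classM (Equiv.Perm (Fin n))).card : ℝ)) *
        ∑ m ∈ classM (Equiv.Perm (Fin n)),
          ∑ i ∈ Finset.univ.filter (fun i : T =>
              (∑ x : ι i,
                |‖invProj (ρi i) m (B i x)‖ ^ 2 /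
                    (Module.finrank ℂ (LinearMap.range (invProj (ρi i) m)) : ℝ)
                  - 1 / (Module.finrank ℂ (Vi i) : ℝ)|)
                > (n : ℝ) ^ (-(c * (n : ℝ)))),
            (2 : ℝ) ^ k * (Module.finrank ℂ (Vi i) : ℝ) *
                (Module.finrank ℂ (LinearMap.range (invProj (ρi i) m)) : ℝ) /
              (Fintype.card (wreathZ2 (Equiv.Perm (Fin n))) : ℝ) ^ k
        ≤ (n : ℝ) ^ (-(c * (n : ℝ))) := by
  refine ⟨1 / 128, by norm_num, 1 / 128, by norm_num, 256, ?_⟩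
  intro n hn k _ hk T _ Vi _ _ _ ρi hρ ι _ B
  obtain ⟨hu, hi, hne, -⟩ := hρ
  have hn0 : (0 : ℝ) < n := by exact_mod_cast (by omega : 0 < n)
  have hn1 : (1 : ℝ) ≤ n := by exact_mod_cast (by omega : 1 ≤ n)
  have hcard : (Fintype.card (Fin k → wreathZ2 (Equiv.Perm (Fin n))) : ℝ) =
      (Fintype.card (wreathZ2 (Equiv.Perm (Fin n))) : ℝ) ^ k := by
    rw [Fintype.card_fun, Fintype.card_fin]; push_cast; rfl
  have hpos : (0 : ℝ) < (Fintype.card (wreathZ2 (Equiv.Perm (Fin n))) : ℝ) ^ k := by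
    have : (0 : ℝ) < (Fintype.card (wreathZ2 (Equiv.Perm (Fin n))) : ℝ) := by
      exact_mod_cast Fintype.card_pos
    positivity
  have hd : ∀ i, 0 < Module.finrank ℂ (Vi i) := by
    intro i
    obtain ⟨⟨v0, hv0⟩, -⟩ := hi i
    have : Nontrivial (Vi i) := ⟨v0, 0, hv0⟩
    exact Module.finrank_pos
  have hM : classM (Equiv.Perm (Fin n)) =
      Finset.univ.image (fun α : Equiv.Perm (Fin n) => mEl α) := by
    unfold classM mEl; congr!
  have hMc : (classM (Equiv.Perm (Fin n))).card = Fintype.card (Equiv.Perm (Fin n)) := by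
    rw [hM, Finset.card_image_of_injective _ mEl_inj, Finset.card_univ]
  set ε : ℝ := (n : ℝ) ^ (-(1 / 128 * (n : ℝ))) with hε
  have hε0 : 0 < ε := by positivity
  have hav := avg_bound ρi B hu hi hne ((n : ℝ) ^ (-(4 * (1 / 128 * (n : ℝ))))) (by positivity)
    (num_main n hn)
  rw [hMc, hM, Finset.sum_image (fun a _ b _ h => mEl_inj h), one_div]
  have hm : ∀ α : Equiv.Perm (Fin n), _ := fun α => markov_term (Finset.univ : Finset T)
    (fun i => (2 : ℝ) ^ k * (Module.finrank ℂ (Vi i) : ℝ) *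
      (Module.finrank ℂ (LinearMap.range (invProj (ρi i) (mEl α))) : ℝ) /
        (Fintype.card (wreathZ2 (Equiv.Perm (Fin n))) : ℝ) ^ k)
    (fun i => ∑ x : ι i, |‖invProj (ρi i) (mEl α) (B i x)‖ ^ 2 /
      (Module.finrank ℂ (LinearMap.range (invProj (ρi i) (mEl α))) : ℝ)
        - 1 / (Module.finrank ℂ (Vi i) : ℝ)|) ε hε0 (fun i => by positivity)
    (fun i => Finset.sum_nonneg fun _ _ => abs_nonneg _)
  have hm2 : ∀ α : Equiv.Perm (Fin n), ∑ i : T, ((2 : ℝ) ^ k * (Module.finrank ℂ (Vi i) : ℝ) *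
      (Module.finrank ℂ (LinearMap.range (invProj (ρi i) (mEl α))) : ℝ) /
        (Fintype.card (wreathZ2 (Equiv.Perm (Fin n))) : ℝ) ^ k) *
      (∑ x : ι i, |‖invProj (ρi i) (mEl α) (B i x)‖ ^ 2 /
      (Module.finrank ℂ (LinearMap.range (invProj (ρi i) (mEl α))) : ℝ)
        - 1 / (Module.finrank ℂ (Vi i) : ℝ)|) ≤
      ∑ j : (Σ i, ι i), plW (H := Fin k → wreathZ2 (Equiv.Perm (Fin n))) Vi j.1 *
        |devZ (ρi j.1) (mEl α) (B j.1 j.2)| := by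
    intro α
    rw [Fintype.sum_sigma]
    refine Finset.sum_le_sum fun i _ => ?_
    refine (HD_le (B i) (ρi i) (mEl α) (hd i) _ hpos).trans (le_of_eq ?_)
    unfold plW
    rw [hcard]
  have hfin : ε⁻¹ * (2 ^ k * (n : ℝ) ^ (-(4 * (1 / 128 * (n : ℝ))))) ≤ ε := by
    have h1 : ε⁻¹ = (n : ℝ) ^ (1 / 128 * (n : ℝ)) := by
      rw [hε, Real.rpow_neg hn0.le, inv_inv]
    rw [h1]
    calc _ ≤ (n : ℝ) ^ (1 / 128 * (n : ℝ)) *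
          ((n : ℝ) ^ (1 / 128 * (n : ℝ)) * (n : ℝ) ^ (-(4 * (1 / 128 * (n : ℝ))))) := by
          gcongr
          exact num_k n k hn hk
      _ = (n : ℝ) ^ (1 / 128 * (n : ℝ) + (1 / 128 * (n : ℝ) + -(4 * (1 / 128 * (n : ℝ))))) := by
          rw [Real.rpow_add hn0, Real.rpow_add hn0]
      _ ≤ ε := Real.rpow_le_rpow_of_exponent_le hn1 (by linarith)
  refine le_trans ?_ ((mul_le_mul_of_nonneg_left hav (inv_nonneg.mpr hε0.le)).trans hfin)
  rw [mul_left_comm, Finset.mul_sum (a := ε⁻¹)]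
  refine mul_le_mul_of_nonneg_left ?_ (by positivity)
  refine Finset.sum_le_sum fun α _ => ?_
  refine le_trans ?_ (mul_le_mul_of_nonneg_left (hm2 α) (inv_nonneg.mpr hε0.le))
  convert hm α using 1
end
end
end

section
/- Let G be a finite group, let ρ be an irreducible finite-dimensional complex representation of G on V, let K = (G × G) ⋊ Z₂ with Z₂ acting by the swap automorphism, let S : V ⊗ V → V ⊗ V be the flip map determined by S(u ⊗ v) = v ⊗ u, and let ε ∈ {1,−1}. Then the representation τ_ε of K on V ⊗ V defined by τ_ε((α,β),t) = ε^t · (ρ(α) ⊗ ρ(β)) ∘ S^t is irreducible: the only subspaces of V ⊗ V invariant under all τ_ε(x), x ∈ K, are 0 and V ⊗ V. -/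
noncomputable section

open scoped BigOperators InnerProductSpace

noncomputable section

open scoped BigOperators InnerProductSpace

/-- `τ_ε((α,β),t) = ε^t (ρ(α) ⊗ ρ(β)) ∘ S^t` on `V ⊗ V`, where `S` is the flip. -/
def tauEps {G V : Type*} [Group G] [AddCommGroup V] [Module ℂ V]
    (ρ : Representation ℂ G V) (ε : ℂ) :
    wreathZ2 G → (TensorProduct ℂ V V →ₗ[ℂ] TensorProduct ℂ V V) :=
  fun x => ε ^ (x.right.toAdd.val) •
    (TensorProduct.map (ρ x.left.1) (ρ x.left.2) ∘ₗ
      ((TensorProduct.comm ℂ V V).toLinearMap ^ x.right.toAdd.val))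

theorem burnside_aux {G V : Type*} [Group G] [AddCommGroup V] [Module ℂ V]
    [FiniteDimensional ℂ V] (ρ : Representation ℂ G V) (hρ : IsIrreducibleRep ρ) :
    Algebra.adjoin ℂ (Set.range ρ) = (⊤ : Subalgebra ℂ (Module.End ℂ V)) := by
  set A := Algebra.adjoin ℂ (Set.range ρ) with hA
  obtain ⟨⟨v0, hv0⟩, hirr⟩ := hρ
  have hnt : Nontrivial V := ⟨v0, 0, hv0⟩
  have hsimple : IsSimpleModule A V := by
    rw [isSimpleModule_iff]
    refine { exists_pair_ne := ⟨⊥, ⊤, bot_ne_top⟩, eq_bot_or_eq_top := fun U => ?_ }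
    rcases hirr (U.restrictScalars ℂ) (fun g v hv => by
      have : (⟨ρ g, Algebra.subset_adjoin ⟨g, rfl⟩⟩ : A) • v ∈ U := U.smul_mem _ hv
      exact this) with h | h
    · left
      exact (Submodule.restrictScalars_eq_bot_iff ℂ A V).1 h
    · right
      exact (Submodule.restrictScalars_eq_top_iff ℂ A V).1 h
  have hbij := IsSimpleModule.algebraMap_end_bijective_of_isAlgClosed (A := A) (V := V) ℂ
  rw [eq_top_iff]
  intro f _
  let F : Module.End (Module.End A V) V :=
    { toFun := f
      map_add' := f.map_add
      map_smul' := fun e v => by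
        obtain ⟨c, rfl⟩ := hbij.2 e
        simp [Module.algebraMap_end_apply] }
  obtain ⟨s, hs⟩ := Module.Finite.fg_top (R := ℂ) (M := V)
  obtain ⟨r, hr⟩ := jacobson_density (R := A) F s
  have : f = (r : Module.End ℂ V) := LinearMap.ext_on hs (fun m hm => hr m hm)
  rw [this]
  exact r.2

/-- If `ρ` is irreducible, then `τ_ε` is irreducible: the only subspaces of
`V ⊗ V` invariant under all `τ_ε(x)`, `x ∈ K`, are `0` and `V ⊗ V`. -/
theorem stmt18 {G : Type*} [Group G]
    {V : Type*} [AddCommGroup V] [Module ℂ V] [FiniteDimensional ℂ V]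
    (ρ : Representation ℂ G V) (hρ : IsIrreducibleRep ρ)
    (ε : ℂ) (hε : ε = 1 ∨ ε = -1) :
    ∀ W : Submodule ℂ (TensorProduct ℂ V V),
      (∀ (x : wreathZ2 G) (v : TensorProduct ℂ V V), v ∈ W → tauEps ρ ε x v ∈ W) →
      W = ⊥ ∨ W = ⊤ := by
  intro W hW
  have hB := burnside_aux ρ hρ
  have h0 : ∀ (a b : G) (w : TensorProduct ℂ V V), w ∈ W →
      TensorProduct.map (ρ a) (ρ b) w ∈ W := by
    intro a b w hw
    have := hW ⟨(a, b), 1⟩ w hw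
    simpa [tauEps] using this
  have h1 : ∀ (f : Module.End ℂ V) (w : TensorProduct ℂ V V), w ∈ W →
      TensorProduct.map f LinearMap.id w ∈ W := by
    intro f
    have hf : f ∈ Algebra.adjoin ℂ (Set.range ρ) := by rw [hB]; trivial
    induction hf using Algebra.adjoin_induction with
    | mem x hx =>
      obtain ⟨g, rfl⟩ := hx
      intro w hw
      have := h0 g 1 w hw
      rwa [map_one] at this
    | algebraMap r =>
      intro w hw
      rw [Algebra.algebraMap_eq_smul_one, TensorProduct.map_smul_left, Module.End.one_eq_id,
        TensorProduct.map_id]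
      exact W.smul_mem _ hw
    | add x y _ _ hx hy =>
      intro w hw
      rw [TensorProduct.map_add_left]
      exact W.add_mem (hx w hw) (hy w hw)
    | mul x y _ _ hx hy =>
      intro w hw
      have := hx _ (hy w hw)
      rwa [← LinearMap.comp_apply, ← TensorProduct.map_comp] at this
  have h2 : ∀ (f : Module.End ℂ V) (w : TensorProduct ℂ V V), w ∈ W →
      TensorProduct.map LinearMap.id f w ∈ W := by
    intro f
    have hf : f ∈ Algebra.adjoin ℂ (Set.range ρ) := by rw [hB]; trivial
    induction hf using Algebra.adjoin_induction with
    | mem x hx =>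
      obtain ⟨g, rfl⟩ := hx
      intro w hw
      have := h0 1 g w hw
      rwa [map_one] at this
    | algebraMap r =>
      intro w hw
      rw [Algebra.algebraMap_eq_smul_one, TensorProduct.map_smul_right, Module.End.one_eq_id,
        TensorProduct.map_id]
      exact W.smul_mem _ hw
    | add x y _ _ hx hy =>
      intro w hw
      rw [TensorProduct.map_add_right]
      exact W.add_mem (hx w hw) (hy w hw)
    | mul x y _ _ hx hy =>
      intro w hw
      have := hx _ (hy w hw)
      rwa [← LinearMap.comp_apply, ← TensorProduct.map_comp] at this
  by_cases hbot : W = ⊥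
  · exact Or.inl hbot
  right
  obtain ⟨w, hw, hw0⟩ := (Submodule.ne_bot_iff W).1 hbot
  let b := Module.finBasis ℂ V
  have hc : ∃ p, (b.tensorProduct b).repr w p ≠ 0 := by
    by_contra hcon
    push Not at hcon
    apply hw0
    apply (b.tensorProduct b).repr.injective
    ext p
    simpa using hcon p
  obtain ⟨⟨i, j⟩, hij⟩ := hc
  have key : ∀ (u v : V) (x : TensorProduct ℂ V V),
      TensorProduct.map ((b.coord i).smulRight u) ((b.coord j).smulRight v) x
        = (b.tensorProduct b).repr x (i, j) • (TensorProduct.tmul ℂ u v) := by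
    intro u v x
    induction x using TensorProduct.induction_on with
    | zero => simp
    | tmul x y =>
      simp [TensorProduct.smul_tmul', smul_smul, mul_comm]
    | add x y hx hy => simp [hx, hy, add_smul]
  rw [eq_top_iff, ← TensorProduct.span_tmul_eq_top, Submodule.span_le]
  rintro _ ⟨u, v, rfl⟩
  have hm := h1 ((b.coord i).smulRight u) _ (h2 ((b.coord j).smulRight v) w hw)
  rw [← LinearMap.comp_apply, ← TensorProduct.map_comp, LinearMap.id_comp, LinearMap.comp_id,
    key] at hm
  exact (Submodule.smul_mem_iff W hij).1 hm
end
end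
end
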